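/- Let T^2 = S^1_{1/√π} × S^1_{1/√π} be the flat square torus of area 4π, and let S^2 be the unit round 2-sphere (so V^2(S^2) = 4π = V^2(T^2)). Then for every v > 0, I_{S^2×R}(v) ≤ I_{T^2×R}(v), where S^2 × R and T^2 × R carry the product metrics. -/

import Mathlib

open MeasureTheory Real ENNReal NNReal

noncomputable section

/-- The flat circle of radius `r` (circumference `2πr`), i.e. `ℝ / (2πr)ℤ`
with the quotient (arc-length) metric. -/
abbrev Circ (r : ℝ) : Type := AddCircle (2 * Real.pi * r)

/-- `d`-dimensional Hausdorff (Riemannian) measure of a subset of a metric space. -/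
noncomputable def haus (X : Type*) [EMetricSpace X] (d : ℕ) (s : Set X) : ℝ≥0∞ :=
  letI : MeasurableSpace X := borel X
  haveI : BorelSpace X := ⟨rfl⟩
  (MeasureTheory.Measure.hausdorffMeasure (d : ℝ) : Measure X) s

/-- A closed region is the closure of an open set. -/
def IsClosedRegion {X : Type*} [TopologicalSpace X] (U : Set X) : Prop :=
  ∃ V : Set X, IsOpen V ∧ U = closure V

/-- The isoperimetric profile of an `m`-dimensional space `X`:
the infimum of the `(m-1)`-dimensional boundary measures of closed regions
of `m`-dimensional measure `v`. -/
noncomputable def isoProfile (X : Type*) [EMetricSpace X] (m : ℕ) (v : ℝ≥0∞) : ℝ≥0∞ :=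
  ⨅ (U : Set X) (_ : IsClosedRegion U ∧ haus X m U = v), haus X (m - 1) (frontier U)

/-- An isoperimetric region in the `m`-dimensional space `X`. -/
def IsIsoRegion (X : Type*) [EMetricSpace X] (m : ℕ) (Ω : Set X) : Prop :=
  IsClosedRegion Ω ∧ haus X (m - 1) (frontier Ω) = isoProfile X m (haus X m Ω)

/-- Euclidean `n`-space. -/
abbrev EucSp (n : ℕ) : Type := EuclideanSpace ℝ (Fin n)

/-- The Riemannian product `S¹_r × ℝ^m` (with the `ℓ²` product metric). -/
abbrev S1R (r : ℝ) (m : ℕ) : Type := WithLp 2 (Circ r × EucSp m)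

/-- The Riemannian product `S¹_{r1} × S¹_{r2} × ℝ^n = T² × ℝ^n`. -/
abbrev T2R (r1 r2 : ℝ) (n : ℕ) : Type := WithLp 2 (Circ r1 × S1R r2 n)

/-- first circle coordinate of a point of `T² × ℝ^n` -/
def t2fst {r1 r2 : ℝ} {n : ℕ} (p : T2R r1 r2 n) : Circ r1 :=
  (WithLp.equiv 2 (Circ r1 × S1R r2 n) p).1

/-- second circle coordinate of a point of `T² × ℝ^n` -/
def t2snd {r1 r2 : ℝ} {n : ℕ} (p : T2R r1 r2 n) : Circ r2 :=
  (WithLp.equiv 2 (Circ r2 × EucSp n) ((WithLp.equiv 2 (Circ r1 × S1R r2 n) p).2)).1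

/-- Euclidean coordinate of a point of `T² × ℝ^n` -/
def t2euc {r1 r2 : ℝ} {n : ℕ} (p : T2R r1 r2 n) : EucSp n :=
  (WithLp.equiv 2 (Circ r2 × EucSp n) ((WithLp.equiv 2 (Circ r1 × S1R r2 n) p).2)).2

/-- `ω_n`, the `n`-dimensional volume of the unit round sphere `Sⁿ ⊂ ℝ^{n+1}`. -/
noncomputable def omegaS (n : ℕ) : ℝ :=
  (haus (EucSp (n+1)) n (Metric.sphere (0 : EucSp (n+1)) 1)).toReal

/-- `β_n(r) = n^{(n-1)(n+1)} (2πr ω_{n-1})^{n+1} (1+n)^{-n²} ω_n^{-n}`. -/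
noncomputable def betaC (n : ℕ) (r : ℝ) : ℝ :=
  (n : ℝ) ^ ((n-1)*(n+1)) * (2 * Real.pi * r * omegaS (n-1)) ^ (n+1) *
    ((1 + (n : ℝ)) ^ (n^2))⁻¹ * ((omegaS n) ^ n)⁻¹

/-- The isoperimetric profile of `ℝ^m`: `I_{ℝ^m}(v) = m^{(m-1)/m} ω_{m-1}^{1/m} v^{(m-1)/m}`. -/
noncomputable def eucProfile (m : ℕ) (v : ℝ) : ℝ :=
  (m : ℝ) ^ (((m : ℝ) - 1)/m) * omegaS (m-1) ^ ((1 : ℝ)/m) * v ^ (((m : ℝ) - 1)/m)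

/-- The region `S¹_{r1} × S¹_{r2} × B^n_R` in `T² × ℝ^n`. -/
def tball (r1 r2 : ℝ) (n : ℕ) (R : ℝ) : Set (T2R r1 r2 n) :=
  {p | ‖t2euc p‖ ≤ R}

/-- `f_n(v) = V^{n+1}(∂(S¹_{r1} × S¹_{r2} × B^n_R))`, where `R > 0` is such that
`V^{n+2}(S¹_{r1} × S¹_{r2} × B^n_R) = v`. -/
noncomputable def fA (r1 r2 : ℝ) (n : ℕ) (v : ℝ≥0∞) : ℝ≥0∞ :=
  ⨅ (R : ℝ) (_ : 0 < R ∧ haus (T2R r1 r2 n) (n+2) (tball r1 r2 n R) = v),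
    haus (T2R r1 r2 n) (n+1) (frontier (tball r1 r2 n R))

/-- The slice function `F₁(t) = V^{n+1}(Ω ∩ ({t} × S¹_{r2} × ℝ^n))`. -/
noncomputable def sliceF1 {r1 r2 : ℝ} {n : ℕ} (Ω : Set (T2R r1 r2 n)) (t : Circ r1) : ℝ≥0∞ :=
  haus (T2R r1 r2 n) (n+1) (Ω ∩ {p | t2fst p = t})

/-- The slice function `F₂(s) = V^{n+1}(Ω ∩ (S¹_{r1} × {s} × ℝ^n))`. -/
noncomputable def sliceF2 {r1 r2 : ℝ} {n : ℕ} (Ω : Set (T2R r1 r2 n)) (s : Circ r2) : ℝ≥0∞ :=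
  haus (T2R r1 r2 n) (n+1) (Ω ∩ {p | t2snd p = s})

/-- `θ_m`, the minimum (infimum) of the slice function `F₁`. -/
noncomputable def thetaMin {r1 r2 : ℝ} {n : ℕ} (Ω : Set (T2R r1 r2 n)) : ℝ≥0∞ :=
  ⨅ t : Circ r1, sliceF1 Ω t

/-- `θ_M`, the maximum (supremum) of the slice function `F₁`. -/
noncomputable def thetaMax {r1 r2 : ℝ} {n : ℕ} (Ω : Set (T2R r1 r2 n)) : ℝ≥0∞ :=
  ⨆ t : Circ r1, sliceF1 Ω t

/-- `σ_m`, the minimum (infimum) of the slice function `F₂`. -/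
noncomputable def sigmaMin {r1 r2 : ℝ} {n : ℕ} (Ω : Set (T2R r1 r2 n)) : ℝ≥0∞ :=
  ⨅ s : Circ r2, sliceF2 Ω s

/-- `σ_M`, the maximum (supremum) of the slice function `F₂`. -/
noncomputable def sigmaMax {r1 r2 : ℝ} {n : ℕ} (Ω : Set (T2R r1 r2 n)) : ℝ≥0∞ :=
  ⨆ s : Circ r2, sliceF2 Ω s

/-- The region `S¹_r × B^m_R` in `S¹_r × ℝ^m`. -/
def s1ball (r : ℝ) (m : ℕ) (R : ℝ) : Set (S1R r m) :=
  {p | ‖(WithLp.equiv 2 (Circ r × EucSp m) p).2‖ ≤ R}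

/-- The unit round 2-sphere `S² ⊂ ℝ³` (its Hausdorff measures coincide with the
Riemannian ones). -/
abbrev Sph2 : Type := ↥(Metric.sphere (0 : EucSp 3) 1)

section Comparison

open MeasureTheory Set Filter Topology
open scoped ENNReal NNReal

section DirectionalBound

variable {V : Type*} [NormedAddCommGroup V] [InnerProductSpace ℝ V] [FiniteDimensional ℝ V]
  [MeasurableSpace V] [BorelSpace V]

/-- Fubini along a line and its orthogonal complement. -/
theorem lintegral_eq_lintegral_orthogonal_line {ν : V} (hν : ‖ν‖ = 1) {f : V → ℝ≥0∞}
    (hf : Measurable f) :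
    ∫⁻ y, f y = ∫⁻ w : (ℝ ∙ ν)ᗮ, ∫⁻ s : ℝ, f (w + s • ν) := by
  have h1 := (ℝ ∙ ν).measurePreserving_measurableEquivProd (0 : V)
  rw [InnerProductSpace.euclideanHausdorffMeasure_eq_volume] at h1
  have h2 : ∫⁻ y, f y = ∫⁻ q : (ℝ ∙ ν) × (ℝ ∙ ν)ᗮ, f (q.1 + q.2) := by
    rw [← h1.symm.lintegral_comp_emb (MeasurableEquiv.measurableEmbedding _)]
    simp
  have hν0 : ν ≠ 0 := by intro h; simp [h] at hν
  let e : ℝ ≃ₗᵢ[ℝ] (ℝ ∙ ν) := LinearIsometryEquiv.toSpanUnitSingleton ν hν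
  have he : ∀ s, ((e s : (ℝ ∙ ν)) : V) = s • ν := fun s => by
    simp [e, LinearIsometryEquiv.toSpanUnitSingleton]
  rw [h2, Measure.volume_eq_prod, lintegral_prod_symm' _ (by fun_prop)]
  refine lintegral_congr fun w => ?_
  rw [← e.measurePreserving.lintegral_comp_emb e.toHomeomorph.measurableEmbedding]
  simp [he, add_comm]

theorem euclideanHausdorffMeasure_orthogonal_image_le {ν : V} {n : ℕ}
    (hn : Module.finrank ℝ (ℝ ∙ ν)ᗮ = n) (B : Set V) :
    volume ((ℝ ∙ ν)ᗮ.orthogonalProjectionOnto '' B) ≤ (μHE[n] : Measure V) B := by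
  subst hn
  rw [← InnerProductSpace.euclideanHausdorffMeasure_eq_volume]
  simp only [Measure.euclideanHausdorffMeasure_def, Measure.smul_apply]
  have h : LipschitzWith 1 (ℝ ∙ ν)ᗮ.orthogonalProjectionOnto :=
    (ℝ ∙ ν)ᗮ.lipschitzWith_orthogonalProjectionOnto
  have := h.hausdorffMeasure_image_le (d := (Module.finrank ℝ (ℝ ∙ ν)ᗮ : ℝ)) (by positivity) B
  gcongr
  simpa using this

end DirectionalBound

section DirectionalBound

variable {V : Type*} [NormedAddCommGroup V] [InnerProductSpace ℝ V] [FiniteDimensional ℝ V]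
  [MeasurableSpace V] [BorelSpace V]

theorem orthogonalProjectionOnto_add_smul {V : Type*} [NormedAddCommGroup V] [InnerProductSpace ℝ V]
    {ν : V} (hν : ‖ν‖ = 1) (p : V) :
    ((ℝ ∙ ν)ᗮ.orthogonalProjectionOnto p : V) + (inner ℝ ν p) • ν = p := by
  have h := (ℝ ∙ ν).starProjection_add_starProjection_orthogonal p
  rw [Submodule.starProjection_unit_singleton ℝ hν] at h
  rw [add_comm]
  exact h

/-- A slice `B` of thickness `r` in the direction `ν` contributes to the integral over its sweep. -/
theorem setLIntegral_image_projection_le {ν : V} {n : ℕ}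
    (hn : Module.finrank ℝ (ℝ ∙ ν)ᗮ = n) (B : Set V)
    {H : (ℝ ∙ ν)ᗮ → ℝ≥0∞} (hH : Measurable H) :
    ∫⁻ w in toMeasurable volume ((ℝ ∙ ν)ᗮ.orthogonalProjectionOnto '' B), H w ≤
      ∫⁻ p in B, H ((ℝ ∙ ν)ᗮ.orthogonalProjectionOnto p) ∂(μHE[n] : Measure V) := by
  set P := (ℝ ∙ ν)ᗮ.orthogonalProjectionOnto
  have hP : Measurable P := P.continuous.measurable
  have hle : (volume.restrict (toMeasurable volume (P '' B))) ≤
      ((μHE[n] : Measure V).restrict B).map P := by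
    refine Measure.le_iff.2 fun A hA => ?_
    rw [Measure.restrict_apply hA, inter_comm, Measure.measure_toMeasurable_inter_of_sFinite hA,
      Measure.map_apply hP hA, Measure.restrict_apply (hP hA)]
    refine le_trans (measure_mono ?_)
      (euclideanHausdorffMeasure_orthogonal_image_le hn (P ⁻¹' A ∩ B))
    rintro _ ⟨⟨p, hp, rfl⟩, hpA⟩
    exact ⟨p, ⟨hpA, hp⟩, rfl⟩
  calc _ ≤ ∫⁻ w, H w ∂(((μHE[n] : Measure V).restrict B).map P) := lintegral_mono' hle le_rfl
    _ = _ := lintegral_map hH hP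

/-- The integral over the set of points whose forward segment meets `S` is controlled by
an integral over `S`. -/
theorem setLIntegral_sweep_le {ν : V} (hν : ‖ν‖ = 1) {n : ℕ}
    (hn : Module.finrank ℝ (ℝ ∙ ν)ᗮ = n) {S : Set V} (hS : MeasurableSet S)
    {η : V → ℝ≥0∞} (hη : Measurable η) (δ : ℝ) {r : ℝ} (hr : 0 < r) {D : Set V}
    (hD : ∀ y ∈ D, ∃ σ ∈ Icc 0 δ, y + σ • ν ∈ S) :
    ∫⁻ y in D, η y ≤
      ∫⁻ p in S, (∫⁻ σ in Icc (-r) (δ + r), η (p - σ • ν)) ∂(μHE[n] : Measure V) := by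
  set P := (ℝ ∙ ν)ᗮ.orthogonalProjectionOnto with hPdef
  have hP : Measurable P := P.continuous.measurable
  let B : ℤ → Set V := fun i => S ∩ {p | inner ℝ ν p ∈ Ico (r * i) (r * i + r)}
  have hin : Measurable fun p : V => (inner ℝ ν p : ℝ) := by fun_prop
  have hB : ∀ i, MeasurableSet (B i) := fun i => hS.inter (hin measurableSet_Ico)
  have hex : ∀ p : V, ∃ i : ℤ, inner ℝ ν p ∈ Ico (r * i) (r * i + r) := fun p => by
    refine ⟨⌊inner ℝ ν p / r⌋, ?_, ?_⟩
    · have := Int.floor_le (inner ℝ ν p / r)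
      rw [le_div_iff₀ hr] at this; linarith
    · have := Int.lt_floor_add_one (inner ℝ ν p / r)
      rw [div_lt_iff₀ hr] at this; linarith
  have hSB : S = ⋃ i, B i := by
    ext p; simp only [B, mem_iUnion, mem_inter_iff, mem_ofPred_eq]
    exact ⟨fun h => (hex p).imp fun i hi => ⟨h, hi⟩, fun ⟨i, h, _⟩ => h⟩
  have hdisj : Pairwise (Function.onFun Disjoint B) := by
    intro i j hij
    refine Set.disjoint_left.2 fun p hp hq => hij ?_
    obtain ⟨-, h1, h2⟩ := hp
    obtain ⟨-, h3, h4⟩ := hq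
    have h5 : (i : ℝ) < j + 1 := by
      have : r * i < r * (j + 1) := by linarith
      exact lt_of_mul_lt_mul_left this hr.le
    have h6 : (j : ℝ) < i + 1 := by
      have : r * j < r * (i + 1) := by linarith
      exact lt_of_mul_lt_mul_left this hr.le
    norm_cast at h5 h6
    omega
  let Z : ℤ → Set (ℝ ∙ ν)ᗮ := fun i => toMeasurable volume (P '' B i)
  have hZ : ∀ i, MeasurableSet (Z i) := fun i => measurableSet_toMeasurable _ _
  let J : ℤ → Set ℝ := fun i => Ico (r * i - δ) (r * i + r)
  let W : ℤ → Set V := fun i => {y | P y ∈ Z i ∧ inner ℝ ν y ∈ J i}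
  have hW : ∀ i, MeasurableSet (W i) := fun i => (hP (hZ i)).inter (hin measurableSet_Ico)
  have hνν : inner ℝ ν ν = (1 : ℝ) := by simp [hν]
  have hPν : P ν = 0 := by
    rw [hPdef]
    exact (Submodule.orthogonalProjectionOnto_orthogonal_apply_eq_zero
      (Submodule.mem_span_singleton_self ν))
  have hDW : D ⊆ ⋃ i, W i := by
    intro y hy
    obtain ⟨σ, hσ, hyS⟩ := hD y hy
    obtain ⟨i, hi⟩ := hex (y + σ • ν)
    refine mem_iUnion.2 ⟨i, subset_toMeasurable _ _ ⟨y + σ • ν, ⟨hyS, hi⟩, by simp [hPν]⟩, ?_⟩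
    rw [inner_add_right, inner_smul_right, hνν] at hi
    obtain ⟨h1, h2⟩ := hi
    obtain ⟨h3, h4⟩ := hσ
    constructor <;> linarith
  have hPw : ∀ (w : (ℝ ∙ ν)ᗮ) (s : ℝ), P (w + s • ν) = w := fun w s => by
    rw [map_add, map_smul, hPν, smul_zero, add_zero]
    exact Submodule.orthogonalProjectionOnto_mem_subspace_eq_self w
  have hiw : ∀ (w : (ℝ ∙ ν)ᗮ) (s : ℝ), inner ℝ ν ((w : V) + s • ν) = s := fun w s => by
    rw [inner_add_right, inner_smul_right, hνν,
      Submodule.mem_orthogonal_singleton_iff_inner_right.1 w.2]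
    simp
  have hmain : ∀ i, ∫⁻ y in W i, η y ≤
      ∫⁻ p in B i, (∫⁻ σ in Icc (-r) (δ + r), η (p - σ • ν)) ∂(μHE[n] : Measure V) := by
    intro i
    have hmeas2 : Measurable fun q : (ℝ ∙ ν)ᗮ × ℝ => η (q.1 + q.2 • ν) := by fun_prop
    calc ∫⁻ y in W i, η y = ∫⁻ w in Z i, ∫⁻ s in J i, η (w + s • ν) := by
          rw [← lintegral_indicator (hW i), lintegral_eq_lintegral_orthogonal_line hν
            (hη.indicator (hW i)), ← lintegral_indicator (hZ i)]
          refine lintegral_congr fun w => ?_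
          by_cases hw : w ∈ Z i
          · rw [indicator_of_mem hw, ← lintegral_indicator measurableSet_Ico]
            refine lintegral_congr fun s => ?_
            simp only [indicator, W, mem_ofPred_eq, hPw, hiw, hw, true_and, J]
          · rw [indicator_of_notMem hw]
            simp [indicator, W, hPw, hw]
      _ ≤ ∫⁻ p in B i, (∫⁻ s in J i, η (P p + s • ν)) ∂(μHE[n] : Measure V) :=
          setLIntegral_image_projection_le hn (B i) (hmeas2.lintegral_prod_right')
      _ ≤ _ := by
          refine setLIntegral_mono' (hB i) fun p hp => ?_
          obtain ⟨-, h1, h2⟩ := hp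
          set c : ℝ := inner ℝ ν p with hc
          have hpP := orthogonalProjectionOnto_add_smul hν p
          have hmp : MeasurePreserving (fun s : ℝ => c - s) volume volume :=
            Measure.measurePreserving_sub_left volume c
          have he : MeasurableEmbedding (fun s : ℝ => c - s) :=
            (Homeomorph.subLeft c).measurableEmbedding
          rw [← hmp.setLIntegral_comp_preimage_emb he (fun σ => η (p - σ • ν)) (Icc (-r) (δ + r))]
          calc ∫⁻ s in J i, η (P p + s • ν)
              = ∫⁻ s in J i, η (p - (c - s) • ν) := by
                refine lintegral_congr fun s => ?_
                congr 1
                nth_rw 2 [← hpP]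
                module
            _ ≤ _ := by
                refine lintegral_mono_set fun s hs => ?_
                simp only [J, mem_Ico, mem_preimage, mem_Icc] at hs ⊢
                constructor <;> linarith [hs.1, hs.2]
  calc ∫⁻ y in D, η y ≤ ∫⁻ y in ⋃ i, W i, η y := lintegral_mono_set hDW
    _ ≤ ∑' i, ∫⁻ y in W i, η y := lintegral_iUnion_le _ _
    _ ≤ ∑' i, ∫⁻ p in B i, (∫⁻ σ in Icc (-r) (δ + r), η (p - σ • ν)) ∂(μHE[n] : Measure V) :=
        ENNReal.tsum_le_tsum hmain
    _ = _ := by rw [← lintegral_iUnion hB hdisj, ← hSB]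

end DirectionalBound

section Mollification

variable {V : Type*} [NormedAddCommGroup V] [InnerProductSpace ℝ V] [FiniteDimensional ℝ V]
  [MeasurableSpace V] [BorelSpace V]

theorem IsPreconnected.inter_frontier_nonempty_of_mem {X : Type*} [TopologicalSpace X]
    {s U : Set X} (hs : IsPreconnected s) (h1 : (s ∩ U).Nonempty) (h2 : (s ∩ Uᶜ).Nonempty) :
    (s ∩ frontier U).Nonempty := by
  by_contra hne
  have hnf : ∀ x ∈ s, x ∉ frontier U := fun x hx hf => hne ⟨x, hx, hf⟩
  have hi : ∀ x ∈ s, x ∈ closure U → x ∈ interior U := fun x hx hc => by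
    by_contra h; exact hnf x hx ⟨hc, h⟩
  obtain ⟨x, hxs, hxU⟩ := h1
  obtain ⟨y, hys, hyU⟩ := h2
  obtain ⟨z, -, hz1, hz2⟩ := hs (interior U) (closure U)ᶜ isOpen_interior
    isClosed_closure.isOpen_compl
    (fun w hw => by by_cases hc : w ∈ closure U; exacts [Or.inl (hi w hw hc), Or.inr hc])
    ⟨x, hxs, hi x hxs (subset_closure hxU)⟩
    ⟨y, hys, fun hc => hyU (interior_subset (hi y hys hc))⟩
  exact hz2 (subset_closure (interior_subset hz1))

/-- A segment with an endpoint inside `U` and the other outside meets the frontier of `U`. -/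
theorem exists_mem_frontier_of_segment {V : Type*} [NormedAddCommGroup V] [InnerProductSpace ℝ V]
    {U : Set V} {x ν : V} {δ : ℝ} (hδ : 0 ≤ δ)
    (h : ¬ (x ∈ U ↔ x + δ • ν ∈ U)) : ∃ σ ∈ Icc 0 δ, x + σ • ν ∈ frontier U := by
  let γ : ℝ → V := fun σ => x + σ • ν
  have hγ : Continuous γ := by fun_prop
  have hpc : IsPreconnected (γ '' Icc 0 δ) := isPreconnected_Icc.image _ hγ.continuousOn
  have h0 : x ∈ γ '' Icc 0 δ := ⟨0, ⟨le_rfl, hδ⟩, by simp [γ]⟩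
  have h1 : x + δ • ν ∈ γ '' Icc 0 δ := ⟨δ, ⟨hδ, le_rfl⟩, rfl⟩
  have key : (γ '' Icc 0 δ ∩ frontier U).Nonempty := by
    by_cases hx : x ∈ U
    · have hy : x + δ • ν ∉ U := fun hy => h (by simp [hx, hy])
      exact hpc.inter_frontier_nonempty_of_mem ⟨x, h0, hx⟩ ⟨_, h1, hy⟩
    · have hy : x + δ • ν ∈ U := by by_contra hy; exact h (by simp [hx, hy])
      exact hpc.inter_frontier_nonempty_of_mem ⟨_, h1, hy⟩ ⟨x, h0, hx⟩
  obtain ⟨_, ⟨σ, hσ, rfl⟩, hf⟩ := key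
  exact ⟨σ, hσ, hf⟩

/-- The mollification of the indicator of `U` by a kernel `ρ`. -/
noncomputable def mollify (ρ : V → ℝ) (U : Set V) (x : V) : ℝ :=
  ∫ t, ρ t * U.indicator 1 (x - t)

theorem integrable_mollify {ρ : V → ℝ} (hρ : Integrable ρ) {U : Set V} (hU : MeasurableSet U)
    (x : V) : Integrable fun t => ρ t * U.indicator (1 : V → ℝ) (x - t) := by
  have hm : Measurable (U.indicator (1 : V → ℝ)) := measurable_one.indicator hU
  refine hρ.mul_bdd (c := 1) (hm.comp (measurable_const.sub measurable_id)).aestronglyMeasurable (Eventually.of_forall fun t => ?_)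
  by_cases h : x - t ∈ U <;> simp [h]

theorem ofReal_abs_mollify_sub_le {ρ : V → ℝ} (hρ : Integrable ρ) (hρm : Measurable ρ)
    (hρ0 : ∀ t, 0 ≤ ρ t)
    {U : Set V} (hU : MeasurableSet U) {S : Set V} (hS : MeasurableSet S)
    (hSU : frontier U ⊆ S) {ν : V} (hν : ‖ν‖ = 1) {n : ℕ}
    (hn : Module.finrank ℝ (ℝ ∙ ν)ᗮ = n) (x : V) {δ r : ℝ} (hδ : 0 ≤ δ) (hr : 0 < r) :
    ENNReal.ofReal |mollify ρ U (x + δ • ν) - mollify ρ U x| ≤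
      ∫⁻ p in S, (∫⁻ σ in Icc (-r) (δ + r), ENNReal.ofReal (ρ (x - p + σ • ν)))
        ∂(μHE[n] : Measure V) := by
  have hm : Measurable (U.indicator (1 : V → ℝ)) := measurable_one.indicator hU
  let D : Set V := {y | ¬ (y ∈ U ↔ y + δ • ν ∈ U)}
  have hDm : MeasurableSet D := by
    have h1 : MeasurableSet {y : V | y + δ • ν ∈ U} :=
      (measurable_id.add_const (δ • ν)) hU
    exact (MeasurableSet.iff hU h1).compl
  unfold mollify
  rw [← integral_sub (integrable_mollify hρ hU _) (integrable_mollify hρ hU _)]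
  calc _ ≤ ∫⁻ t, ‖ρ t * U.indicator (1 : V → ℝ) (x + δ • ν - t)
          - ρ t * U.indicator (1 : V → ℝ) (x - t)‖ₑ := by
        rw [← Real.enorm_eq_ofReal_abs]; exact enorm_integral_le_lintegral_enorm _
    _ ≤ ∫⁻ t, D.indicator (fun y => ENNReal.ofReal (ρ (x - y))) (x - t) := by
        refine lintegral_mono fun t => ?_
        rw [← mul_sub]
        have e1 : x + δ • ν - t = x - t + δ • ν := by abel
        by_cases hy : x - t ∈ D
        · rw [indicator_of_mem hy, Real.enorm_eq_ofReal_abs, abs_mul, abs_of_nonneg (hρ0 t),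
            _root_.sub_sub_cancel]
          refine ENNReal.ofReal_le_ofReal (mul_le_of_le_one_right (hρ0 t) ?_)
          simp only [indicator]
          split_ifs <;> simp
        · rw [indicator_of_notMem hy]
          have hy' : (x - t ∈ U ↔ x - t + δ • ν ∈ U) := by simpa [D] using hy
          rw [e1]
          by_cases hz : x - t + δ • ν ∈ U <;> simp [indicator, hy', hz]
    _ = ∫⁻ y in D, ENNReal.ofReal (ρ (x - y)) := by
        rw [lintegral_sub_left_eq_self, lintegral_indicator hDm]
    _ ≤ ∫⁻ p in S, (∫⁻ σ in Icc (-r) (δ + r), ENNReal.ofReal (ρ (x - (p - σ • ν))))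
          ∂(μHE[n] : Measure V) := by
        refine setLIntegral_sweep_le hν hn hS (η := fun y => ENNReal.ofReal (ρ (x - y)))
          (by fun_prop) δ hr fun y hy => ?_
        obtain ⟨σ, hσ, h⟩ := exists_mem_frontier_of_segment hδ hy
        exact ⟨σ, hσ, hSU h⟩
    _ = _ := by simp only [← sub_add]

/-- The directional derivatives of the mollification of the indicator of `U` are bounded by
the mollification of the surface measure of the frontier. -/
theorem ofReal_abs_lineDeriv_mollify_le {ρ : V → ℝ} (hρc : Continuous ρ)
    (hρs : Function.support ρ ⊆ Metric.closedBall 0 1)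
    (hρ0 : ∀ t, 0 ≤ ρ t)
    {U : Set V} (hU : MeasurableSet U) {S : Set V} (hS : MeasurableSet S)
    (hSU : frontier U ⊆ S) {ν : V} (hν : ‖ν‖ = 1) {n : ℕ}
    (hn : Module.finrank ℝ (ℝ ∙ ν)ᗮ = n)
    (hfin : ∀ x : V, (μHE[n] : Measure V) (S ∩ Metric.closedBall x 3) ≠ ∞) (x : V) {d : ℝ}
    (hd : HasLineDerivAt ℝ (mollify ρ U) d x ν) :
    ENNReal.ofReal |d| ≤ ∫⁻ p in S, ENNReal.ofReal (ρ (x - p)) ∂(μHE[n] : Measure V) := by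
  have hcs : HasCompactSupport ρ := HasCompactSupport.of_support_subset_isCompact
    (isCompact_closedBall 0 1) hρs
  have huc : UniformContinuous ρ := hcs.uniformContinuous_of_continuous hρc
  have hgint : Integrable ρ := hρc.integrable_of_hasCompactSupport hcs
  set R := ∫⁻ p in S, ENNReal.ofReal (ρ (x - p)) ∂(μHE[n] : Measure V) with hR
  set M := (μHE[n] : Measure V) (S ∩ Metric.closedBall x 3) with hM
  have hslope : Tendsto (fun δ : ℝ => ENNReal.ofReal
      |δ⁻¹ * (mollify ρ U (x + δ • ν) - mollify ρ U x)|) (𝓝[>] 0) (𝓝 (ENNReal.ofReal |d|)) := by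
    have h1 := (HasDerivAt.tendsto_slope_zero_right hd)
    simp only [zero_add, zero_smul, add_zero, smul_eq_mul] at h1
    exact ENNReal.tendsto_ofReal h1.abs
  have key : ∀ ε : ℝ, 0 < ε → ENNReal.ofReal |d| ≤ R + ENNReal.ofReal ε * M := by
    intro ε hε
    obtain ⟨δ₀, hδ₀, huc'⟩ := Metric.uniformContinuous_iff.1 huc ε hε
    have hlim : Tendsto (fun δ : ℝ => ENNReal.ofReal (1 + 2 * δ) * (R + ENNReal.ofReal ε * M))
        (𝓝[>] 0) (𝓝 (1 * (R + ENNReal.ofReal ε * M))) := by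
      refine ENNReal.Tendsto.mul_const ?_ (Or.inl one_ne_zero)
      have : Tendsto (fun δ : ℝ => 1 + 2 * δ) (𝓝[>] 0) (𝓝 (1 + 2 * 0)) :=
        ((continuous_const.add (continuous_const.mul continuous_id)).tendsto 0).mono_left
          nhdsWithin_le_nhds
      simpa using ENNReal.tendsto_ofReal this
    rw [one_mul] at hlim
    refine le_of_tendsto_of_tendsto hslope hlim ?_
    have hev : ∀ᶠ δ : ℝ in 𝓝[>] 0, δ < min (δ₀ / 2) 1 :=
      nhdsWithin_le_nhds (Iio_mem_nhds (by positivity))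
    filter_upwards [hev, self_mem_nhdsWithin] with δ h1 h2
    simp only [mem_Ioi] at h2
    have h3 : δ < δ₀ / 2 := lt_of_lt_of_le h1 (min_le_left _ _)
    have h4 : δ < 1 := lt_of_lt_of_le h1 (min_le_right _ _)
    have hr : 0 < δ ^ 2 := by positivity
    have h5 : δ ^ 2 ≤ δ := by nlinarith
    have hb := ofReal_abs_mollify_sub_le hgint hρc.measurable hρ0 hU hS hSU hν hn x h2.le hr
    have hbd : ∀ p : V, (∫⁻ σ in Icc (-(δ ^ 2)) (δ + δ ^ 2), ENNReal.ofReal (ρ (x - p + σ • ν)))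
        ≤ ENNReal.ofReal (δ + 2 * δ ^ 2) * (ENNReal.ofReal (ρ (x - p)) +
          (Metric.closedBall x 3).indicator (fun _ => ENNReal.ofReal ε) p) := by
      intro p
      calc _ ≤ ∫⁻ σ in Icc (-(δ ^ 2)) (δ + δ ^ 2), (ENNReal.ofReal (ρ (x - p)) +
          (Metric.closedBall x 3).indicator (fun _ => ENNReal.ofReal ε) p) := by
            refine setLIntegral_mono' measurableSet_Icc fun σ hσ => ?_
            have hσ1 : |σ| ≤ 2 * δ := abs_le.2 ⟨by linarith [hσ.1], by linarith [hσ.2]⟩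
            have hn2 : ‖σ • ν‖ ≤ 2 * δ := by rw [norm_smul, hν, mul_one]; exact hσ1
            by_cases hp : p ∈ Metric.closedBall x 3
            · rw [indicator_of_mem hp, ← ENNReal.ofReal_add (hρ0 _) hε.le]
              refine ENNReal.ofReal_le_ofReal ?_
              have h6 : dist (x - p + σ • ν) (x - p) < δ₀ := by
                rw [dist_eq_norm, add_sub_cancel_left]; linarith
              have h7 := huc' h6
              rw [Real.dist_eq] at h7
              linarith [abs_lt.1 h7]
            · have h0 : ρ (x - p + σ • ν) = 0 := by
                by_contra hne
                have h6 := hρs hne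
                rw [mem_closedBall_zero_iff] at h6
                apply hp
                rw [Metric.mem_closedBall, dist_comm, dist_eq_norm]
                have h7 : ‖x - p‖ ≤ ‖x - p + σ • ν‖ + ‖σ • ν‖ := by
                  simpa using norm_sub_le (x - p + σ • ν) (σ • ν)
                linarith
              rw [h0]; simp
        _ = _ := by
            rw [setLIntegral_const, Real.volume_Icc, mul_comm]
            congr 2; ring
    have hI : ∫⁻ p in S, (ENNReal.ofReal (ρ (x - p)) +
        (Metric.closedBall x 3).indicator (fun _ => ENNReal.ofReal ε) p) ∂(μHE[n] : Measure V)
        = R + ENNReal.ofReal ε * M := by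
      rw [lintegral_add_left (by fun_prop), lintegral_indicator_const measurableSet_closedBall,
        Measure.restrict_apply measurableSet_closedBall, inter_comm]
    calc ENNReal.ofReal |δ⁻¹ * (mollify ρ U (x + δ • ν) - mollify ρ U x)|
        = ENNReal.ofReal δ⁻¹ * ENNReal.ofReal |mollify ρ U (x + δ • ν) - mollify ρ U x| := by
          rw [abs_mul, abs_of_pos (inv_pos.2 h2), ENNReal.ofReal_mul (inv_pos.2 h2).le]
      _ ≤ ENNReal.ofReal δ⁻¹ * (ENNReal.ofReal (δ + 2 * δ ^ 2) * (R + ENNReal.ofReal ε * M)) := by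
          gcongr
          refine hb.trans ((lintegral_mono hbd).trans ?_)
          rw [lintegral_const_mul' _ _ ENNReal.ofReal_ne_top, hI]
      _ = _ := by
          rw [← mul_assoc, ← ENNReal.ofReal_mul (inv_pos.2 h2).le]
          congr 2
          field_simp
  have hlim2 : Tendsto (fun ε : ℝ => R + ENNReal.ofReal ε * M) (𝓝[>] 0) (𝓝 (R + 0 * M)) := by
    refine tendsto_const_nhds.add (ENNReal.Tendsto.mul_const ?_ (Or.inr (hfin x)))
    have : Tendsto (fun ε : ℝ => ε) (𝓝[>] 0) (𝓝 0) := nhdsWithin_le_nhds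
    simpa using ENNReal.tendsto_ofReal this
  rw [zero_mul, add_zero] at hlim2
  refine ge_of_tendsto hlim2 ?_
  filter_upwards [self_mem_nhdsWithin] with ε hε using key ε hε

end Mollification

section Unfolding

variable {V : Type*} [NormedAddCommGroup V] [MeasurableSpace V] [BorelSpace V]
  {ι : Type*} [AddCommGroup ι] [Countable ι]

/-- Decompose an integral along the translates of a fundamental domain. -/
theorem lintegral_eq_tsum_translates {g : ι →+ V} {Q : Set V} (hQ : MeasurableSet Q)
    (hpart : ∀ x, ∃! i, x + g i ∈ Q) {μ : Measure V} (hμ : ∀ i, μ.map (· + g i) = μ)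
    (f : V → ℝ≥0∞) :
    ∫⁻ x, f x ∂μ = ∑' i, ∫⁻ x in Q, f (x + g i) ∂μ := by
  have hm : ∀ i, MeasurableEmbedding (fun x : V => x + g i) := fun i =>
    (Homeomorph.addRight (g i)).measurableEmbedding
  have hun : (⋃ i, (fun x : V => x + g i) ⁻¹' Q) = univ := by
    refine eq_univ_of_forall fun x => ?_
    obtain ⟨i, hi, -⟩ := hpart x
    exact mem_iUnion.2 ⟨i, hi⟩
  have hdisj : Pairwise (Function.onFun Disjoint fun i => (fun x : V => x + g i) ⁻¹' Q) := by
    intro i j hij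
    refine Set.disjoint_left.2 fun x hi hj => hij ?_
    exact (hpart x).unique hi hj
  rw [← setLIntegral_univ, ← hun, lintegral_iUnion (fun i => (hm i).measurable hQ) hdisj,
    ← (Equiv.neg ι).tsum_eq]
  refine tsum_congr fun i => ?_
  have hmp : MeasurePreserving (fun x : V => x + g (-i)) μ μ := ⟨(hm _).measurable, hμ _⟩
  rw [Equiv.neg_apply, ← hmp.setLIntegral_comp_preimage_emb (hm _) (fun x => f (x + g i))]
  simp

/-- Averaging a convolution with a periodic measure over a fundamental domain. -/
theorem setLIntegral_convolution_periodic [SecondCountableTopology V]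
    {g : ι →+ V} {Q : Set V} (hQ : MeasurableSet Q)
    (hpart : ∀ x, ∃! i, x + g i ∈ Q) {μ ν : Measure V} [SFinite μ] [SFinite ν]
    [ν.IsAddRightInvariant] (hμ : ∀ i, μ.map (· + g i) = μ)
    {η : V → ℝ≥0∞} (hη : Measurable η) :
    ∫⁻ x in Q, (∫⁻ p, η (x - p) ∂μ) ∂ν = (∫⁻ x, η x ∂ν) * μ Q := by
  have hm2 : Measurable fun q : V × V => η (q.1 - q.2) := by fun_prop
  have hm3 : Measurable fun q : V × V => η (q.2 - q.1) := by fun_prop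
  rw [lintegral_lintegral_swap hm2.aemeasurable, lintegral_eq_tsum_translates hQ hpart hμ]
  have h1 : ∀ i, Measurable fun p : V => ∫⁻ x in Q, η (x - (p + g i)) ∂ν := fun i =>
    (Measurable.lintegral_prod_right' (f := fun q : V × V => η (q.2 - (q.1 + g i)))
      (by fun_prop))
  rw [← lintegral_tsum fun i => (h1 i).aemeasurable, ← setLIntegral_const]
  refine lintegral_congr fun p => ?_
  have h2 : ∫⁻ x, η x ∂ν = ∫⁻ x, η (x - p) ∂ν := (lintegral_sub_right_eq_self η p).symm
  rw [h2, lintegral_eq_tsum_translates hQ hpart (fun i => map_add_right_eq_self ν (g i)),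
    ← (Equiv.neg ι).tsum_eq]
  refine tsum_congr fun i => lintegral_congr fun x => ?_
  simp only [Equiv.neg_apply, map_neg]
  congr 1
  abel

end Unfolding

section Isometric

theorem hausdorffMeasure_image_of_isometryOn {X Y : Type*} [EMetricSpace X] [EMetricSpace Y]
    [MeasurableSpace X] [BorelSpace X] [MeasurableSpace Y] [BorelSpace Y] {f : X → Y} {s : Set X}
    (hf : ∀ x ∈ s, ∀ y ∈ s, edist (f x) (f y) = edist x y) {d : ℝ} (hd : 0 ≤ d) :
    (μH[d] : Measure Y) (f '' s) = μH[d] s := by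
  have h1 : Isometry (f ∘ ((↑) : s → X)) := fun x y => hf x x.2 y y.2
  have h2 := h1.hausdorffMeasure_image (Or.inl hd) univ
  have h3 := (isometry_subtype_coe (s := s)).hausdorffMeasure_image (d := d) (Or.inl hd) univ
  rw [← h3, image_comp] at h2
  simpa using h2

theorem euclideanHausdorffMeasure_image_of_isometryOn {X Y : Type*} [EMetricSpace X]
    [EMetricSpace Y]
    [MeasurableSpace X] [BorelSpace X] [MeasurableSpace Y] [BorelSpace Y] {f : X → Y} {s : Set X}
    (hf : ∀ x ∈ s, ∀ y ∈ s, edist (f x) (f y) = edist x y) (d : ℕ) :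
    (μHE[d] : Measure Y) (f '' s) = (μHE[d] : Measure X) s := by
  simp only [Measure.euclideanHausdorffMeasure_def, Measure.smul_apply]
  rw [hausdorffMeasure_image_of_isometryOn hf (by positivity)]

end Isometric

section Torus

/-- The universal cover of the product of a flat torus and a line. -/
abbrev PlaneLine : Type := WithLp 2 (ℝ × WithLp 2 (ℝ × EuclideanSpace ℝ (Fin 1)))

/-- The product of a flat square torus and a line. -/
abbrev TorusLine (L : ℝ) : Type :=
  WithLp 2 (AddCircle L × WithLp 2 (AddCircle L × EuclideanSpace ℝ (Fin 1)))

/-- The covering map of the product of a flat torus and a line. -/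
def torusCover (L : ℝ) (p : PlaneLine) : TorusLine L :=
  WithLp.toLp 2 ((p.fst : AddCircle L), WithLp.toLp 2 ((p.snd.fst : AddCircle L), p.snd.snd))

/-- The deck transformations of the covering, as translations. -/
noncomputable def deckTranslation (L : ℝ) : ℤ × ℤ →+ PlaneLine where
  toFun z := WithLp.toLp 2 (z.1 • L, WithLp.toLp 2 (z.2 • L, 0))
  map_zero' := by simp
  map_add' a b := by
    simp only [Prod.fst_add, Prod.snd_add, add_smul]
    rw [← WithLp.toLp_add, Prod.mk_add_mk, ← WithLp.toLp_add, Prod.mk_add_mk, add_zero]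

/-- A fundamental domain of the covering. -/
def fundDomain (L : ℝ) : Set PlaneLine := {p | p.fst ∈ Ico 0 L ∧ p.snd.fst ∈ Ico 0 L}

variable {L : ℝ}

theorem measurable_planeLine_fst : Measurable fun p : PlaneLine => p.fst :=
  (WithLp.prod_continuous_ofLp 2 _ _).measurable.fst

theorem measurable_planeLine_snd_fst : Measurable fun p : PlaneLine => p.snd.fst :=
  ((WithLp.prod_continuous_ofLp 2 _ _).measurable.comp
    ((WithLp.prod_continuous_ofLp 2 _ _).measurable.snd)).fst

theorem measurableSet_fundDomain : MeasurableSet (fundDomain L) :=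
  (measurable_planeLine_fst measurableSet_Ico).inter
    (measurable_planeLine_snd_fst measurableSet_Ico)

@[simp] theorem deckTranslation_fst (z : ℤ × ℤ) : (deckTranslation L z).fst = z.1 * L := by
  simp [deckTranslation]

@[simp] theorem deckTranslation_snd_fst (z : ℤ × ℤ) :
    (deckTranslation L z).snd.fst = z.2 * L := by
  simp [deckTranslation]

@[simp] theorem deckTranslation_snd_snd (z : ℤ × ℤ) : (deckTranslation L z).snd.snd = 0 := by
  simp [deckTranslation]

theorem existsUnique_add_deckTranslation_mem (hL : 0 < L) (p : PlaneLine) :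
    ∃! z, p + deckTranslation L z ∈ fundDomain L := by
  obtain ⟨i, hi, hi'⟩ := existsUnique_add_zsmul_mem_Ico hL p.fst 0
  obtain ⟨j, hj, hj'⟩ := existsUnique_add_zsmul_mem_Ico hL p.snd.fst 0
  simp only [zero_add, zsmul_eq_mul] at hi hj hi' hj'
  refine ⟨(i, j), ⟨by simpa using hi, by simpa using hj⟩, fun z hz => ?_⟩
  obtain ⟨h1, h2⟩ := hz
  exact Prod.ext (hi' _ (by simpa using h1)) (hj' _ (by simpa using h2))

theorem torusCover_add_deckTranslation (p : PlaneLine) (z : ℤ × ℤ) :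
    torusCover L (p + deckTranslation L z) = torusCover L p := by
  simp [torusCover]

theorem continuous_torusCover : Continuous (torusCover L) := by
  have h0 := (WithLp.prod_continuous_ofLp 2 ℝ (WithLp 2 (ℝ × EuclideanSpace ℝ (Fin 1))))
  have h1 := (WithLp.prod_continuous_ofLp 2 ℝ (EuclideanSpace ℝ (Fin 1)))
  have hq : Continuous ((↑) : ℝ → AddCircle L) := AddCircle.continuous_mk' L
  unfold torusCover
  refine (WithLp.prod_continuous_toLp 2 _ _).comp ((hq.comp h0.fst).prodMk
    ((WithLp.prod_continuous_toLp 2 _ _).comp ((hq.comp (h1.comp h0.snd).fst).prodMk ?_)))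
  exact (h1.comp h0.snd).snd

theorem edist_torusCover (hL : 0 < L) {p q : PlaneLine} (h1 : |p.fst - q.fst| ≤ L / 2)
    (h2 : |p.snd.fst - q.snd.fst| ≤ L / 2) :
    edist (torusCover L p) (torusCover L q) = edist p q := by
  have hc : ∀ {a b : ℝ}, |a - b| ≤ L / 2 → dist (a : AddCircle L) (b : AddCircle L) = dist a b := by
    intro a b hab
    rw [dist_eq_norm, ← AddCircle.coe_sub,
      (AddCircle.norm_coe_eq_abs_iff L hL.ne').2 (by rwa [abs_of_pos hL]), Real.dist_eq]
  rw [edist_dist, edist_dist, WithLp.prod_dist_eq_of_L2, WithLp.prod_dist_eq_of_L2,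
    WithLp.prod_dist_eq_of_L2, WithLp.prod_dist_eq_of_L2]
  have e1 : dist (torusCover L p).fst (torusCover L q).fst = dist p.fst q.fst := hc h1
  have e2 : dist (torusCover L p).snd.fst (torusCover L q).snd.fst = dist p.snd.fst q.snd.fst :=
    hc h2
  rw [e1, e2]
  rfl

theorem torusCover_injOn : InjOn (torusCover L) (fundDomain L) := by
  intro p hp q hq h
  have e1 : (p.fst : AddCircle L) = q.fst := congrArg (fun x : TorusLine L => x.fst) h
  have e2 : (p.snd.fst : AddCircle L) = q.snd.fst :=
    congrArg (fun x : TorusLine L => x.snd.fst) h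
  have e3 : p.snd.snd = q.snd.snd := congrArg (fun x : TorusLine L => x.snd.snd) h
  have hc : ∀ {a b : ℝ}, a ∈ Ico 0 L → b ∈ Ico 0 L → (a : AddCircle L) = b → a = b := by
    intro a b ha hb hab
    have hL : 0 < L := ha.1.trans_lt ha.2
    have : Fact (0 < L) := ⟨hL⟩
    exact AddCircle.coe_eq_coe_iff_of_mem_Ico (a := 0) (by simpa using ha) (by simpa using hb) |>.1 hab
  apply WithLp.ofLp_injective 2
  refine Prod.ext (hc hp.1 hq.1 e1) ?_
  apply WithLp.ofLp_injective 2
  exact Prod.ext (hc hp.2 hq.2 e2) e3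

theorem torusCover_surjOn (hL : 0 < L) (t : TorusLine L) :
    ∃ p ∈ fundDomain L, torusCover L p = t := by
  obtain ⟨a, ha⟩ := QuotientAddGroup.mk_surjective t.fst
  obtain ⟨b, hb⟩ := QuotientAddGroup.mk_surjective t.snd.fst
  let p : PlaneLine := WithLp.toLp 2 (a, WithLp.toLp 2 (b, t.snd.snd))
  obtain ⟨z, hz, -⟩ := existsUnique_add_deckTranslation_mem hL p
  refine ⟨_, hz, ?_⟩
  rw [torusCover_add_deckTranslation]
  apply WithLp.ofLp_injective 2
  refine Prod.ext ha ?_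
  apply WithLp.ofLp_injective 2
  exact Prod.ext hb rfl

/-- Hausdorff measures of a set downstairs are computed on the fundamental domain. -/
theorem euclideanHausdorffMeasure_torusCover_preimage (hL : 0 < L) {B : Set (TorusLine L)}
    (hB : MeasurableSet B) (d : ℕ) :
    (μHE[d] : Measure PlaneLine) (torusCover L ⁻¹' B ∩ fundDomain L) = (μHE[d] : Measure _) B := by
  have : Fact (0 < L) := ⟨hL⟩
  let I : Bool → Set ℝ := fun b => if b then Ico 0 (L / 2) else Ico (L / 2) L
  let C : Bool × Bool → Set PlaneLine := fun c => {p | p.fst ∈ I c.1 ∧ p.snd.fst ∈ I c.2}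
  have hI : ∀ b, MeasurableSet (I b) := fun b => by cases b <;> simp [I]
  have hI2 : ∀ b, ∀ x ∈ I b, ∀ y ∈ I b, |x - y| ≤ L / 2 := by
    intro b x hx y hy
    cases b <;> simp only [I, Bool.false_eq_true, if_true, if_false, mem_Ico] at hx hy <;>
    · rw [abs_le]; constructor <;> linarith [hx.1, hx.2, hy.1, hy.2]
  have hI3 : ∀ b x, x ∈ I b → x ∈ Ico 0 L := by
    intro b x hx
    cases b <;> simp only [I, Bool.false_eq_true, if_true, if_false, mem_Ico] at hx ⊢ <;>
    · constructor <;> linarith [hx.1, hx.2]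
  have hI4 : ∀ x ∈ Ico 0 L, ∃ b, x ∈ I b := by
    intro x hx
    by_cases h : x < L / 2
    · exact ⟨true, by simpa [I] using ⟨hx.1, h⟩⟩
    · exact ⟨false, by simpa [I] using ⟨not_lt.1 h, hx.2⟩⟩
  have hI5 : ∀ b c x, x ∈ I b → x ∈ I c → b = c := by
    intro b c x hx hy
    cases b <;> cases c <;> simp only [I, Bool.false_eq_true, if_true, if_false, mem_Ico] at hx hy
    · rfl
    · linarith [hx.1, hy.2]
    · linarith [hx.2, hy.1]
    · rfl
  have hC : ∀ c, MeasurableSet (C c) := fun c =>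
    (measurable_planeLine_fst (hI _)).inter (measurable_planeLine_snd_fst (hI _))
  have hCQ : ∀ c, C c ⊆ fundDomain L := fun c p hp => ⟨hI3 _ _ hp.1, hI3 _ _ hp.2⟩
  have hQC : fundDomain L = ⋃ c, C c := by
    refine Subset.antisymm (fun p hp => ?_) (iUnion_subset hCQ)
    obtain ⟨b, hb⟩ := hI4 _ hp.1
    obtain ⟨c, hc⟩ := hI4 _ hp.2
    exact mem_iUnion.2 ⟨(b, c), hb, hc⟩
  have hCd : ∀ a b p, p ∈ C a → p ∈ C b → a = b := fun a b p hp hq =>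
    Prod.ext (hI5 _ _ _ hp.1 hq.1) (hI5 _ _ _ hp.2 hq.2)
  have hπ : Measurable (torusCover L) := continuous_torusCover.measurable
  have hA : ∀ c, MeasurableSet (torusCover L ⁻¹' B ∩ C c) := fun c => (hπ hB).inter (hC c)
  have hUn : torusCover L ⁻¹' B ∩ fundDomain L = ⋃ c, torusCover L ⁻¹' B ∩ C c := by
    rw [hQC, inter_iUnion]
  have hB' : B = ⋃ c, torusCover L '' (torusCover L ⁻¹' B ∩ C c) := by
    rw [← image_iUnion, ← hUn]
    refine Subset.antisymm (fun t ht => ?_) ?_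
    · obtain ⟨p, hp, rfl⟩ := torusCover_surjOn hL t
      exact ⟨p, ⟨ht, hp⟩, rfl⟩
    · rintro _ ⟨p, hp, rfl⟩; exact hp.1
  have hinj : ∀ c, InjOn (torusCover L) (torusCover L ⁻¹' B ∩ C c) := fun c =>
    torusCover_injOn.mono (inter_subset_right.trans (hCQ c))
  rw [hUn, measure_iUnion _ hA]
  · conv_rhs => rw [hB']
    rw [measure_iUnion _ fun c => (hA c).image_of_continuousOn_injOn
      continuous_torusCover.continuousOn (hinj c)]
    · refine tsum_congr fun c => (euclideanHausdorffMeasure_image_of_isometryOn ?_ d).symm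
      exact fun p hp q hq => edist_torusCover hL (hI2 _ _ hp.2.1 _ hq.2.1) (hI2 _ _ hp.2.2 _ hq.2.2)
    · intro a b hab
      refine Set.disjoint_left.2 ?_
      rintro _ ⟨p, hp, rfl⟩ ⟨q, hq, hpq⟩
      have := torusCover_injOn (hCQ _ hq.2) (hCQ _ hp.2) hpq
      subst this
      exact hab (hCd a b q hp.2 hq.2)
  · intro a b hab
    exact Set.disjoint_left.2 fun p hp hq => hab (hCd a b p hp.2 hq.2)

end Torus

section TorusMollification

variable {L : ℝ}

theorem finrank_planeLine : Module.finrank ℝ PlaneLine = 3 := by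
  rw [(WithLp.linearEquiv 2 ℝ (ℝ × WithLp 2 (ℝ × EuclideanSpace ℝ (Fin 1)))).finrank_eq,
    Module.finrank_prod, (WithLp.linearEquiv 2 ℝ (ℝ × EuclideanSpace ℝ (Fin 1))).finrank_eq,
    Module.finrank_prod]
  simp

theorem euclideanHausdorffMeasure_planeLine : (μHE[3] : Measure PlaneLine) = volume := by
  rw [← finrank_planeLine]; exact InnerProductSpace.euclideanHausdorffMeasure_eq_volume

theorem measure_inter_closedBall_ne_top (hL : 0 < L) {μ : Measure PlaneLine} {S : Set PlaneLine}
    (hS : ∀ p z, p + deckTranslation L z ∈ S ↔ p ∈ S)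
    (hμ : ∀ z, μ.map (· + deckTranslation L z) = μ) (hfin : μ (S ∩ fundDomain L) ≠ ∞)
    (x : PlaneLine) (r : ℝ) : μ (S ∩ Metric.closedBall x r) ≠ ∞ := by
  obtain ⟨N, hN⟩ := exists_nat_gt ((‖x‖ + r) / L + 1)
  let I : Finset (ℤ × ℤ) := Finset.Icc (-(N : ℤ)) N ×ˢ Finset.Icc (-(N : ℤ)) N
  have hsub : S ∩ Metric.closedBall x r ⊆
      ⋃ z ∈ I, (· + deckTranslation L z) ⁻¹' (S ∩ fundDomain L) := by
    rintro p ⟨hpS, hp⟩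
    obtain ⟨z, hz, -⟩ := existsUnique_add_deckTranslation_mem hL p
    have hpn : ‖p‖ ≤ ‖x‖ + r := by
      have := norm_le_norm_add_norm_sub' p x
      rw [mem_closedBall_iff_norm] at hp
      linarith [norm_sub_rev p x]
    have hcoord : ∀ (a : ℝ) (i : ℤ), |a| ≤ ‖x‖ + r → a + i * L ∈ Ico 0 L → i ∈ Finset.Icc (-(N : ℤ)) N := by
      intro a i ha hi
      have hN' : ‖x‖ + r + L < N * L := by
        have h1 := mul_lt_mul_of_pos_right hN hL
        rw [add_mul, div_mul_cancel₀ _ hL.ne', one_mul] at h1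
        exact h1
      have h2 := abs_le.1 ha
      have h3 : (i : ℝ) * L < N * L := by linarith [hi.2]
      have h4 : (-N : ℝ) * L < i * L := by nlinarith [hi.1]
      have h5 := lt_of_mul_lt_mul_right h3 hL.le
      have h6 := lt_of_mul_lt_mul_right h4 hL.le
      rw [Finset.mem_Icc]
      constructor
      · have : ((-(N : ℤ) : ℤ) : ℝ) < i := by push_cast; exact h6
        exact (Int.cast_lt.1 this).le
      · have : (i : ℝ) < ((N : ℤ) : ℝ) := by push_cast; exact h5
        exact (Int.cast_lt.1 this).le
    have hf : |p.fst| ≤ ‖p‖ := WithLp.norm_fst_le _ p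
    have hs : ‖p.snd‖ ≤ ‖p‖ := WithLp.norm_snd_le _ p
    have hsf : |p.snd.fst| ≤ ‖p.snd‖ := WithLp.norm_fst_le _ p.snd
    refine mem_iUnion₂.2 ⟨z, Finset.mem_product.2 ⟨hcoord p.fst z.1 (hf.trans hpn) ?_,
      hcoord p.snd.fst z.2 ((hsf.trans hs).trans hpn) ?_⟩, (hS _ _).2 hpS, hz⟩
    · simpa using hz.1
    · simpa using hz.2
  refine ((measure_mono hsub).trans_lt ?_).ne
  refine (measure_biUnion_finset_le _ _).trans_lt (ENNReal.sum_lt_top.2 fun z _ => ?_)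
  have he : MeasurableEmbedding (fun p : PlaneLine => p + deckTranslation L z) :=
    (Homeomorph.addRight (deckTranslation L z)).measurableEmbedding
  rw [← he.map_apply, hμ]
  exact hfin.lt_top

/-- Smooth periodic approximations of the indicator of a closed subset of the torus bundle,
with a bound for the gradients in terms of the measure of the frontier. -/
theorem exists_mollification (hL : 0 < L) {U : Set (TorusLine L)} (hU : IsClosed U)
    (hfin : (μHE[2] : Measure (TorusLine L)) (frontier U) ≠ ∞) :
    ∃ (u : ℕ → PlaneLine → ℝ) (R : ℕ → PlaneLine → ℝ≥0∞),
      (∀ k, ContDiff ℝ 1 (u k)) ∧ (∀ k p, u k p ∈ Icc 0 1) ∧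
      (∀ k p z, u k (p + deckTranslation L z) = u k p) ∧ (∀ k, Measurable (R k)) ∧
      (∀ k p ν, ENNReal.ofReal |fderiv ℝ (u k) p ν| ≤ ENNReal.ofReal ‖ν‖ * R k p) ∧
      (∀ k, ∫⁻ p in fundDomain L, R k p = (μHE[2] : Measure (TorusLine L)) (frontier U)) ∧
      (∀ k, ∫⁻ p in fundDomain L, ENNReal.ofReal (u k p) =
        (μHE[3] : Measure (TorusLine L)) U) ∧
      ∀ᵐ p, Tendsto (fun k => u k p) atTop (𝓝 ((torusCover L ⁻¹' U).indicator 1 p)) := by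
  have : Fact (0 < L) := ⟨hL⟩
  have : (volume : Measure PlaneLine).IsNegInvariant :=
    Measure.IsAddHaarMeasure.isNegInvariant_of_innerRegular _
  set U' := torusCover L ⁻¹' U with hU'
  set S := torusCover L ⁻¹' frontier U with hS'
  have hU'm : MeasurableSet U' := (hU.preimage continuous_torusCover).measurableSet
  have hSm : MeasurableSet S := (isClosed_frontier.preimage continuous_torusCover).measurableSet
  have hUS : frontier U' ⊆ S := continuous_torusCover.frontier_preimage_subset U
  have hper : ∀ (A : Set (TorusLine L)) (p : PlaneLine) z,
      p + deckTranslation L z ∈ torusCover L ⁻¹' A ↔ p ∈ torusCover L ⁻¹' A := fun A p z => by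
    rw [mem_preimage, torusCover_add_deckTranslation, mem_preimage]
  have hrestr : ∀ (A : Set (TorusLine L)), MeasurableSet (torusCover L ⁻¹' A) →
      ∀ (d : ℕ) (z : ℤ × ℤ),
      ((μHE[d] : Measure PlaneLine).restrict (torusCover L ⁻¹' A)).map (· + deckTranslation L z)
        = (μHE[d] : Measure PlaneLine).restrict (torusCover L ⁻¹' A) := by
    intro A hA d z
    have hmp := measurePreserving_add_right (μHE[d] : Measure PlaneLine) (deckTranslation L z)
    have h1 := (hmp.restrict_preimage hA).map_eq
    have h2 : (· + deckTranslation L z) ⁻¹' (torusCover L ⁻¹' A) = torusCover L ⁻¹' A := by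
      ext p; exact hper A p z
    rwa [h2] at h1
  have hfr : (μHE[2] : Measure PlaneLine) (S ∩ fundDomain L) =
      (μHE[2] : Measure (TorusLine L)) (frontier U) :=
    euclideanHausdorffMeasure_torusCover_preimage hL isClosed_frontier.measurableSet 2
  have hvol : (μHE[3] : Measure PlaneLine) (U' ∩ fundDomain L) =
      (μHE[3] : Measure (TorusLine L)) U :=
    euclideanHausdorffMeasure_torusCover_preimage hL hU.measurableSet 3
  have hball : ∀ x r, (μHE[2] : Measure PlaneLine) (S ∩ Metric.closedBall x r) ≠ ∞ :=
    measure_inter_closedBall_ne_top hL (hper _)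
      (fun z => (measurePreserving_add_right _ _).map_eq) (by rwa [hfr])
  have hlf : IsLocallyFiniteMeasure ((μHE[2] : Measure PlaneLine).restrict S) := by
    refine ⟨fun x => ⟨Metric.closedBall x 1, Metric.closedBall_mem_nhds x one_pos, ?_⟩⟩
    rw [Measure.restrict_apply measurableSet_closedBall, inter_comm]
    exact (hball x 1).lt_top
  let φ : ℕ → ContDiffBump (0 : PlaneLine) := fun k =>
    { rIn := 1 / (2 * ((k : ℝ) + 1)), rOut := 1 / ((k : ℝ) + 1), rIn_pos := by positivity,
      rIn_lt_rOut := by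
        apply one_div_lt_one_div_of_lt <;> linarith [(Nat.cast_nonneg k : (0 : ℝ) ≤ k)] }
  let ρ : ℕ → PlaneLine → ℝ := fun k => (φ k).normed volume
  have hρc : ∀ k, Continuous (ρ k) := fun k => (φ k).continuous_normed
  have hρ0 : ∀ k t, 0 ≤ ρ k t := fun k t => (φ k).nonneg_normed t
  have hρ1 : ∀ k, ∫ t, ρ k t = 1 := fun k => (φ k).integral_normed
  have hρcs : ∀ k, HasCompactSupport (ρ k) := fun k => (φ k).hasCompactSupport_normed
  have hρi : ∀ k, Integrable (ρ k) := fun k => (φ k).integrable_normed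
  have hρl : ∀ k, ∫⁻ t, ENNReal.ofReal (ρ k t) = 1 := fun k => by
    rw [← ofReal_integral_eq_lintegral_ofReal (hρi k) (Eventually.of_forall (hρ0 k)), hρ1]
    simp
  have hρs : ∀ k, Function.support (ρ k) ⊆ Metric.closedBall 0 1 := fun k => by
    rw [(φ k).support_normed_eq]
    refine Metric.ball_subset_closedBall.trans (Metric.closedBall_subset_closedBall ?_)
    change 1 / ((k : ℝ) + 1) ≤ 1
    rw [div_le_one (by positivity)]
    linarith [(Nat.cast_nonneg k : (0 : ℝ) ≤ k)]
  have hconv : ∀ k, mollify (ρ k) U' =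
      convolution (ρ k) (U'.indicator 1) (ContinuousLinearMap.lsmul ℝ ℝ) volume := fun k => by
    ext x; simp [mollify, convolution_def]
  have hloc : LocallyIntegrable (U'.indicator (1 : PlaneLine → ℝ)) :=
    (locallyIntegrable_const (1 : ℝ)).indicator hU'm
  have hsm : ∀ k, ContDiff ℝ 1 (mollify (ρ k) U') := fun k => by
    rw [hconv k]
    exact (hρcs k).contDiff_convolution_left _ ((φ k).contDiff_normed (n := 1)) hloc
  have hind : ∀ p : PlaneLine, U'.indicator (1 : PlaneLine → ℝ) p ∈ Icc (0 : ℝ) 1 := fun p => by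
    by_cases h : p ∈ U' <;> simp [h]
  refine ⟨fun k => mollify (ρ k) U',
    fun k x => ∫⁻ p in S, ENNReal.ofReal (ρ k (x - p)) ∂(μHE[2] : Measure PlaneLine),
    hsm, fun k p => ⟨?_, ?_⟩, fun k p z => ?_, fun k => ?_, fun k p ν => ?_, fun k => ?_,
    fun k => ?_, ?_⟩
  · exact integral_nonneg fun t => mul_nonneg (hρ0 k t) (hind _).1
  · rw [← hρ1 k]
    exact integral_mono (integrable_mollify (hρi k) hU'm p) (hρi k)
      fun t => mul_le_of_le_one_right (hρ0 k t) (hind _).2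
  · unfold mollify
    refine integral_congr_ae (Eventually.of_forall fun t => ?_)
    dsimp only
    have h1 : p + deckTranslation L z - t = p - t + deckTranslation L z := by abel
    have h2 := hper U (p - t) z
    rw [h1]
    simp only [indicator, ← hU'] at h2 ⊢
    by_cases h3 : p - t ∈ U' <;> simp [h2, h3]
  · have hc := (hρc k).measurable
    exact Measurable.lintegral_prod_right' (f := fun q : PlaneLine × PlaneLine =>
      ENNReal.ofReal (ρ k (q.1 - q.2))) (by fun_prop)
  · rcases eq_or_ne ν 0 with rfl | hν
    · simp
    have hν0 : ‖ν‖ ≠ 0 := norm_ne_zero_iff.2 hν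
    set e := ‖ν‖⁻¹ • ν with he
    have hen : ‖e‖ = 1 := by rw [he, norm_smul, norm_inv, norm_norm, inv_mul_cancel₀ hν0]
    have hνe : ν = ‖ν‖ • e := by rw [he, smul_smul, mul_inv_cancel₀ hν0, one_smul]
    have : Fact (Module.finrank ℝ PlaneLine = 2 + 1) := ⟨finrank_planeLine⟩
    have hd : HasLineDerivAt ℝ (mollify (ρ k) U') (fderiv ℝ (mollify (ρ k) U') p e) p e :=
      (((hsm k).differentiable one_ne_zero) p).hasFDerivAt.hasLineDerivAt e
    have h1 := ofReal_abs_lineDeriv_mollify_le (hρc k) (hρs k) (hρ0 k) hU'm hSm hUS hen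
      (Submodule.finrank_orthogonal_span_singleton (by intro h; simp [h] at hen))
      (fun x => hball x 3) p hd
    conv_lhs => rw [hνe, map_smul, smul_eq_mul, abs_mul, abs_norm,
      ENNReal.ofReal_mul (norm_nonneg _)]
    gcongr
  · rw [setLIntegral_convolution_periodic measurableSet_fundDomain
      (existsUnique_add_deckTranslation_mem hL) (hrestr _ hSm 2) (hρc k).measurable.ennreal_ofReal,
      hρl, one_mul, Measure.restrict_apply measurableSet_fundDomain, inter_comm, hfr]
  · have h1 : ∀ p, ENNReal.ofReal (mollify (ρ k) U' p) =
        ∫⁻ q, ENNReal.ofReal (ρ k (p - q)) ∂((volume : Measure PlaneLine).restrict U') := by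
      intro p
      unfold mollify
      rw [ofReal_integral_eq_lintegral_ofReal (integrable_mollify (hρi k) hU'm p)
        (Eventually.of_forall fun t => mul_nonneg (hρ0 k t) (hind _).1),
        ← lintegral_indicator hU'm, ← lintegral_sub_left_eq_self _ p]
      refine lintegral_congr fun t => ?_
      by_cases h3 : t ∈ U' <;> simp [h3]
    simp only [h1]
    have h3 := hrestr U hU'm 3
    rw [euclideanHausdorffMeasure_planeLine] at h3 hvol
    rw [setLIntegral_convolution_periodic measurableSet_fundDomain
      (existsUnique_add_deckTranslation_mem hL) h3 (hρc k).measurable.ennreal_ofReal,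
      hρl, one_mul, Measure.restrict_apply measurableSet_fundDomain, inter_comm, hvol]
  · have h1 : Tendsto (fun k => (φ k).rOut) atTop (𝓝 0) := tendsto_one_div_add_atTop_nhds_zero_nat
    have h2 : ∀ᶠ k in atTop, (φ k).rOut ≤ 2 * (φ k).rIn := Eventually.of_forall fun k => by
      change 1 / ((k : ℝ) + 1) ≤ 2 * (1 / (2 * ((k : ℝ) + 1)))
      apply le_of_eq; field_simp
    filter_upwards [ContDiffBump.ae_convolution_tendsto_right_of_locallyIntegrable h1 h2 hloc]
      with p hp
    simpa only [hconv] using hp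

end TorusMollification

section Coordinates

/-- The point with line coordinate `t` and plane coordinates `x`, `y`. -/
def PlaneLine.mk (t x y : ℝ) : PlaneLine :=
  WithLp.toLp 2 (x, WithLp.toLp 2 (y, WithLp.toLp 2 fun _ => t))

theorem PlaneLine.measurePreserving_mk :
    MeasurePreserving (fun q : ℝ × ℝ × ℝ => PlaneLine.mk q.1 q.2.1 q.2.2) := by
  have h1 : MeasurePreserving (Prod.swap : ℝ × (ℝ × ℝ) → (ℝ × ℝ) × ℝ) :=
    Measure.measurePreserving_swap
  have h2 : MeasurePreserving (MeasurableEquiv.prodAssoc : (ℝ × ℝ) × ℝ ≃ᵐ ℝ × ℝ × ℝ) :=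
    volume_preserving_prodAssoc
  have h3 : MeasurePreserving
      (fun t : ℝ => (WithLp.toLp 2 (fun _ : Fin 1 => t) : EuclideanSpace ℝ (Fin 1))) :=
    (PiLp.volume_preserving_toLp (Fin 1)).comp (volume_preserving_funUnique (Fin 1) ℝ).symm
  have h4 := (WithLp.volume_preserving_toLp ℝ (EuclideanSpace ℝ (Fin 1))).comp
    ((MeasurePreserving.id (volume : Measure ℝ)).prod h3)
  have h5 := (WithLp.volume_preserving_toLp ℝ (WithLp 2 (ℝ × EuclideanSpace ℝ (Fin 1)))).comp
    ((MeasurePreserving.id (volume : Measure ℝ)).prod h4)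
  exact h5.comp (h2.comp h1)

theorem PlaneLine.mk_add_mk (t x y t' x' y' : ℝ) :
    PlaneLine.mk t x y + PlaneLine.mk t' x' y' = PlaneLine.mk (t + t') (x + x') (y + y') := rfl

theorem PlaneLine.smul_mk (a t x y : ℝ) :
    a • PlaneLine.mk t x y = PlaneLine.mk (a * t) (a * x) (a * y) := rfl

theorem PlaneLine.norm_mk_sq (t x y : ℝ) : ‖PlaneLine.mk t x y‖ ^ 2 = t ^ 2 + x ^ 2 + y ^ 2 := by
  rw [WithLp.prod_norm_sq_eq_of_L2, WithLp.prod_norm_sq_eq_of_L2, EuclideanSpace.norm_sq_eq]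
  simp [PlaneLine.mk]
  ring

theorem PlaneLine.continuous_mk :
    Continuous (fun q : ℝ × ℝ × ℝ => PlaneLine.mk q.1 q.2.1 q.2.2) := by
  unfold PlaneLine.mk; fun_prop

theorem PlaneLine.mk_eq (t x y : ℝ) : PlaneLine.mk t x y =
    t • PlaneLine.mk 1 0 0 + x • PlaneLine.mk 0 1 0 + y • PlaneLine.mk 0 0 1 := by
  simp [PlaneLine.smul_mk, PlaneLine.mk_add_mk]

theorem PlaneLine.hasDerivAt_mk (t x y : ℝ) :
    HasDerivAt (fun s => PlaneLine.mk s x y) (PlaneLine.mk 1 0 0) t ∧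
    HasDerivAt (fun s => PlaneLine.mk t s y) (PlaneLine.mk 0 1 0) x ∧
    HasDerivAt (fun s => PlaneLine.mk t x s) (PlaneLine.mk 0 0 1) y := by
  refine ⟨?_, ?_, ?_⟩
  · have h : (fun s => PlaneLine.mk s x y) = fun s =>
        s • PlaneLine.mk 1 0 0 + PlaneLine.mk 0 x y := by
      funext s; simp [PlaneLine.smul_mk, PlaneLine.mk_add_mk]
    rw [h]
    simpa using ((hasDerivAt_id t).smul_const (PlaneLine.mk 1 0 0)).add_const (PlaneLine.mk 0 x y)
  · have h : (fun s => PlaneLine.mk t s y) = fun s =>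
        s • PlaneLine.mk 0 1 0 + PlaneLine.mk t 0 y := by
      funext s; simp [PlaneLine.smul_mk, PlaneLine.mk_add_mk]
    rw [h]
    simpa using ((hasDerivAt_id x).smul_const (PlaneLine.mk 0 1 0)).add_const (PlaneLine.mk t 0 y)
  · have h : (fun s => PlaneLine.mk t x s) = fun s =>
        s • PlaneLine.mk 0 0 1 + PlaneLine.mk t x 0 := by
      funext s; simp [PlaneLine.smul_mk, PlaneLine.mk_add_mk]
    rw [h]
    simpa using ((hasDerivAt_id y).smul_const (PlaneLine.mk 0 0 1)).add_const (PlaneLine.mk t x 0)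

theorem setLIntegral_fundDomain (L : ℝ) {F : PlaneLine → ℝ≥0∞} (hF : Measurable F) :
    ∫⁻ p in fundDomain L, F p =
      ∫⁻ t, (∫⁻ x in Ico 0 L, (∫⁻ y in Ico 0 L, F (PlaneLine.mk t x y))) := by
  have hmp := PlaneLine.measurePreserving_mk
  have hm : Measurable fun q : ℝ × ℝ × ℝ => F (PlaneLine.mk q.1 q.2.1 q.2.2) :=
    hF.comp hmp.measurable
  have hpre : (fun q : ℝ × ℝ × ℝ => PlaneLine.mk q.1 q.2.1 q.2.2) ⁻¹' fundDomain L =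
      univ ×ˢ (Ico 0 L ×ˢ Ico 0 L) := by
    ext q; simp [fundDomain, PlaneLine.mk]
  have h := (hmp.restrict_preimage (measurableSet_fundDomain (L := L))).lintegral_comp hF
  rw [← h, hpre, Measure.volume_eq_prod, ← Measure.prod_restrict, Measure.restrict_univ,
    lintegral_prod _ hm.aemeasurable]
  refine lintegral_congr fun t => ?_
  rw [Measure.volume_eq_prod, ← Measure.prod_restrict, lintegral_prod]
  exact (hm.comp measurable_prodMk_left).aemeasurable

theorem ae_mk {P : PlaneLine → Prop} (h : ∀ᵐ p, P p) :
    ∀ᵐ t : ℝ, ∀ᵐ x : ℝ, ∀ᵐ y : ℝ, P (PlaneLine.mk t x y) := by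
  have h1 : ∀ᵐ q : ℝ × ℝ × ℝ, P (PlaneLine.mk q.1 q.2.1 q.2.2) :=
    PlaneLine.measurePreserving_mk.quasiMeasurePreserving.ae h
  filter_upwards [Measure.ae_ae_of_ae_prod h1] with t ht
  exact Measure.ae_ae_of_ae_prod ht

theorem PlaneLine.mk_add_deckTranslation_fst (L t x y : ℝ) :
    PlaneLine.mk t x y + deckTranslation L (1, 0) = PlaneLine.mk t (x + L) y := by
  have : deckTranslation L (1, 0) = PlaneLine.mk 0 L 0 := by
    simp [deckTranslation, PlaneLine.mk]; rfl
  rw [this, PlaneLine.mk_add_mk, add_zero, add_zero]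

theorem PlaneLine.mk_add_deckTranslation_snd (L t x y : ℝ) :
    PlaneLine.mk t x y + deckTranslation L (0, 1) = PlaneLine.mk t x (y + L) := by
  have : deckTranslation L (0, 1) = PlaneLine.mk 0 0 L := by
    simp [deckTranslation, PlaneLine.mk]; rfl
  rw [this, PlaneLine.mk_add_mk, add_zero, add_zero]

theorem exists_apply_eq_mul_abs_add (ℓ : PlaneLine →L[ℝ] ℝ) {α β : ℝ} (hαβ : α ^ 2 + β ^ 2 ≤ 1) :
    ∃ ν, ‖ν‖ ≤ 1 ∧ ℓ ν = α * |ℓ (PlaneLine.mk 1 0 0)| +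
      β * √(ℓ (PlaneLine.mk 0 1 0) ^ 2 + ℓ (PlaneLine.mk 0 0 1) ^ 2) := by
  set A := ℓ (PlaneLine.mk 1 0 0)
  set B := ℓ (PlaneLine.mk 0 1 0)
  set C := ℓ (PlaneLine.mk 0 0 1)
  set r := √(B ^ 2 + C ^ 2)
  have hr : r * r = B ^ 2 + C ^ 2 := Real.mul_self_sqrt (by positivity)
  obtain ⟨s, hs, hsA⟩ : ∃ s : ℝ, s ^ 2 = 1 ∧ s * A = |A| := by
    rcases abs_cases A with h | h
    · exact ⟨1, by norm_num, by linarith⟩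
    · exact ⟨-1, by norm_num, by linarith⟩
  obtain ⟨b, c, hbc, hbcr⟩ : ∃ b c : ℝ, b ^ 2 + c ^ 2 ≤ 1 ∧ b * B + c * C = r := by
    rcases eq_or_ne r 0 with h | h
    · exact ⟨0, 0, by norm_num, by rw [h]; ring⟩
    · refine ⟨B / r, C / r, ?_, ?_⟩
      · apply le_of_eq; field_simp; linarith
      · field_simp; linarith
  set ν := PlaneLine.mk (α * s) (β * b) (β * c) with hν
  have hval : ℓ ν = α * |A| + β * r := by
    rw [hν, PlaneLine.mk_eq, map_add, map_add, map_smul, map_smul, map_smul, smul_eq_mul,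
      smul_eq_mul, smul_eq_mul]
    rw [← hsA, ← hbcr]; ring
  have hnorm : ‖ν‖ ≤ 1 := by
    have := PlaneLine.norm_mk_sq (α * s) (β * b) (β * c)
    rw [← hν] at this
    have h2 : β ^ 2 * (b ^ 2 + c ^ 2) ≤ β ^ 2 * 1 := by gcongr
    have h3 : (α * s) ^ 2 = α ^ 2 := by rw [mul_pow, hs, mul_one]
    have : ‖ν‖ ^ 2 ≤ 1 := by nlinarith
    exact (sq_le_one_iff₀ (norm_nonneg _)).1 this
  exact ⟨ν, hnorm, hval⟩

/-- A sequence of smooth functions of three variables, periodic in the last two ones,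
converging to an indicator function, with controlled gradients. -/
structure PeriodicApprox (L : ℝ) (κ w : ℝ≥0∞) where
  /-- the functions -/
  f : ℕ → ℝ → ℝ → ℝ → ℝ
  /-- the first partial derivatives -/
  ft : ℕ → ℝ → ℝ → ℝ → ℝ
  /-- the second partial derivatives -/
  fx : ℕ → ℝ → ℝ → ℝ → ℝ
  /-- the third partial derivatives -/
  fy : ℕ → ℝ → ℝ → ℝ → ℝ
  /-- the bound for the gradients -/
  R : ℕ → ℝ → ℝ → ℝ → ℝ≥0∞
  /-- the limit -/
  χ : ℝ → ℝ → ℝ → ℝ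
  cont : ∀ k, Continuous fun q : ℝ × ℝ × ℝ => f k q.1 q.2.1 q.2.2
  cont_t : ∀ k, Continuous fun q : ℝ × ℝ × ℝ => ft k q.1 q.2.1 q.2.2
  cont_x : ∀ k, Continuous fun q : ℝ × ℝ × ℝ => fx k q.1 q.2.1 q.2.2
  cont_y : ∀ k, Continuous fun q : ℝ × ℝ × ℝ => fy k q.1 q.2.1 q.2.2
  deriv_t : ∀ k t x y, HasDerivAt (fun s => f k s x y) (ft k t x y) t
  deriv_x : ∀ k t x y, HasDerivAt (fun s => f k t s y) (fx k t x y) x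
  deriv_y : ∀ k t x y, HasDerivAt (fun s => f k t x s) (fy k t x y) y
  mem_Icc : ∀ k t x y, f k t x y ∈ Icc (0 : ℝ) 1
  per_x : ∀ k t x y, f k t (x + L) y = f k t x y
  per_y : ∀ k t x y, f k t x (y + L) = f k t x y
  meas_R : ∀ k, Measurable fun q : ℝ × ℝ × ℝ => R k q.1 q.2.1 q.2.2
  grad_le : ∀ k t x y (α β : ℝ), 0 ≤ α → 0 ≤ β → α ^ 2 + β ^ 2 ≤ 1 →
    ENNReal.ofReal (α * |ft k t x y| + β * √(fx k t x y ^ 2 + fy k t x y ^ 2)) ≤ R k t x y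
  lintegral_R : ∀ k, ∫⁻ t, (∫⁻ x in Ico 0 L, (∫⁻ y in Ico 0 L, R k t x y)) = κ
  lintegral_f : ∀ k, ∫⁻ t, (∫⁻ x in Ico 0 L, (∫⁻ y in Ico 0 L, ENNReal.ofReal (f k t x y))) = w
  meas_χ : Measurable fun q : ℝ × ℝ × ℝ => χ q.1 q.2.1 q.2.2
  χ_eq : ∀ t x y, χ t x y = 0 ∨ χ t x y = 1
  lintegral_χ : ∫⁻ t, (∫⁻ x in Ico 0 L, (∫⁻ y in Ico 0 L, ENNReal.ofReal (χ t x y))) = w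
  ae_tendsto : ∀ᵐ t, ∀ᵐ x, ∀ᵐ y, Tendsto (fun k => f k t x y) atTop (𝓝 (χ t x y))

theorem nonempty_periodicApprox {L : ℝ} (hL : 0 < L) {U : Set (TorusLine L)} (hU : IsClosed U)
    (hfin : (μHE[2] : Measure (TorusLine L)) (frontier U) ≠ ∞) :
    Nonempty (PeriodicApprox L ((μHE[2] : Measure (TorusLine L)) (frontier U))
      ((μHE[3] : Measure (TorusLine L)) U)) := by
  have : Fact (0 < L) := ⟨hL⟩
  obtain ⟨u, R, hu, hI, hper, hRm, hgrad, hR, hvol, hlim⟩ := exists_mollification hL hU hfin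
  have hUm : MeasurableSet (torusCover L ⁻¹' U) := (hU.preimage continuous_torusCover).measurableSet
  have hmk := PlaneLine.continuous_mk
  have hfd : ∀ k p, HasFDerivAt (u k) (fderiv ℝ (u k) p) p := fun k p =>
    (((hu k).differentiable one_ne_zero) p).hasFDerivAt
  have hcf : ∀ k (ν : PlaneLine), Continuous fun p => fderiv ℝ (u k) p ν := fun k ν =>
    ((hu k).continuous_fderiv one_ne_zero).clm_apply continuous_const
  have hind : Measurable ((torusCover L ⁻¹' U).indicator (1 : PlaneLine → ℝ)) :=
    measurable_const.indicator hUm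
  have hdt : ∀ k t x y, HasDerivAt (fun s => u k (.mk s x y))
      (fderiv ℝ (u k) (.mk t x y) (.mk 1 0 0)) t := fun k t x y =>
    (hfd k _).comp_hasDerivAt t (PlaneLine.hasDerivAt_mk t x y).1
  have hdx : ∀ k t x y, HasDerivAt (fun s => u k (.mk t s y))
      (fderiv ℝ (u k) (.mk t x y) (.mk 0 1 0)) x := fun k t x y =>
    (hfd k _).comp_hasDerivAt x (PlaneLine.hasDerivAt_mk t x y).2.1
  have hdy : ∀ k t x y, HasDerivAt (fun s => u k (.mk t x s))
      (fderiv ℝ (u k) (.mk t x y) (.mk 0 0 1)) y := fun k t x y =>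
    (hfd k _).comp_hasDerivAt y (PlaneLine.hasDerivAt_mk t x y).2.2
  have hcu : ∀ k, Continuous fun q : ℝ × ℝ × ℝ => u k (.mk q.1 q.2.1 q.2.2) := fun k =>
    (hu k).continuous.comp hmk
  have hcd : ∀ k ν, Continuous fun q : ℝ × ℝ × ℝ =>
      fderiv ℝ (u k) (.mk q.1 q.2.1 q.2.2) ν := fun k ν => (hcf k ν).comp hmk
  have hχ : ∫⁻ t, (∫⁻ x in Ico 0 L, (∫⁻ y in Ico 0 L, ENNReal.ofReal
      ((torusCover L ⁻¹' U).indicator (1 : PlaneLine → ℝ) (PlaneLine.mk t x y)))) =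
      (μHE[3] : Measure (TorusLine L)) U := by
    rw [← setLIntegral_fundDomain L (F := fun p => ENNReal.ofReal
      ((torusCover L ⁻¹' U).indicator 1 p)) hind.ennreal_ofReal]
    have h1 : (fun p => ENNReal.ofReal ((torusCover L ⁻¹' U).indicator (1 : PlaneLine → ℝ) p)) =
        (torusCover L ⁻¹' U).indicator 1 := by
      funext p
      by_cases h : p ∈ torusCover L ⁻¹' U <;> simp [h]
    rw [h1, lintegral_indicator_one hUm, Measure.restrict_apply hUm,
      ← euclideanHausdorffMeasure_planeLine,
      euclideanHausdorffMeasure_torusCover_preimage hL hU.measurableSet 3]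
  have hRi : ∀ k, ∫⁻ t, (∫⁻ x in Ico 0 L, (∫⁻ y in Ico 0 L, R k (PlaneLine.mk t x y))) =
      (μHE[2] : Measure (TorusLine L)) (frontier U) := fun k =>
    (setLIntegral_fundDomain L (hRm k)).symm.trans (hR k)
  have hfi : ∀ k, ∫⁻ t, (∫⁻ x in Ico 0 L, (∫⁻ y in Ico 0 L,
      ENNReal.ofReal (u k (PlaneLine.mk t x y)))) = (μHE[3] : Measure (TorusLine L)) U := fun k =>
    (setLIntegral_fundDomain L (hu k).continuous.measurable.ennreal_ofReal).symm.trans (hvol k)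
  have hRmm : ∀ k, Measurable fun q : ℝ × ℝ × ℝ => R k (.mk q.1 q.2.1 q.2.2) := fun k =>
    (hRm k).comp hmk.measurable
  have hχm : Measurable fun q : ℝ × ℝ × ℝ =>
      (torusCover L ⁻¹' U).indicator (1 : PlaneLine → ℝ) (.mk q.1 q.2.1 q.2.2) :=
    hind.comp hmk.measurable
  have hae := ae_mk hlim
  refine ⟨{
    f := fun k t x y => u k (.mk t x y)
    ft := fun k t x y => fderiv ℝ (u k) (.mk t x y) (.mk 1 0 0)
    fx := fun k t x y => fderiv ℝ (u k) (.mk t x y) (.mk 0 1 0)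
    fy := fun k t x y => fderiv ℝ (u k) (.mk t x y) (.mk 0 0 1)
    R := fun k t x y => R k (.mk t x y)
    χ := fun t x y => (torusCover L ⁻¹' U).indicator 1 (.mk t x y)
    cont := hcu
    cont_t := fun k => hcd k _
    cont_x := fun k => hcd k _
    cont_y := fun k => hcd k _
    deriv_t := hdt
    deriv_x := hdx
    deriv_y := hdy
    mem_Icc := fun k t x y => hI k _
    per_x := fun k t x y => ?_
    per_y := fun k t x y => ?_
    meas_R := hRmm
    grad_le := fun k t x y α β hα hβ hαβ => ?_
    lintegral_R := hRi
    lintegral_f := hfi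
    meas_χ := hχm
    χ_eq := fun t x y => by
      by_cases h : PlaneLine.mk t x y ∈ torusCover L ⁻¹' U <;> simp [h]
    lintegral_χ := hχ
    ae_tendsto := hae }⟩
  · have h := hper k (.mk t x y) (1, 0)
    rwa [PlaneLine.mk_add_deckTranslation_fst] at h
  · have h := hper k (.mk t x y) (0, 1)
    rwa [PlaneLine.mk_add_deckTranslation_snd] at h
  · obtain ⟨ν, hν, hval⟩ := exists_apply_eq_mul_abs_add (fderiv ℝ (u k) (.mk t x y)) hαβ
    rw [← hval]
    calc _ ≤ ENNReal.ofReal |fderiv ℝ (u k) (.mk t x y) ν| :=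
          ENNReal.ofReal_le_ofReal (le_abs_self _)
      _ ≤ _ := hgrad k _ ν
      _ ≤ 1 * R k (.mk t x y) := by
          gcongr; rw [← ENNReal.ofReal_one]; exact ENNReal.ofReal_le_ofReal hν
      _ = _ := one_mul _

end Coordinates

section Variation

theorem ofReal_abs_sub_le_lintegral {g g' : ℝ → ℝ} (hg : ∀ x, HasDerivAt g (g' x) x)
    (hc : Continuous g') {a b : ℝ} (hab : a ≤ b) :
    ENNReal.ofReal |g b - g a| ≤ ∫⁻ x in Ico a b, ENNReal.ofReal |g' x| := by
  rw [← intervalIntegral.integral_eq_sub_of_hasDerivAt (fun x _ => hg x)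
    (hc.intervalIntegrable a b), intervalIntegral.integral_of_le hab, ← Real.norm_eq_abs,
    ofReal_norm, restrict_Ico_eq_restrict_Ioc]
  refine (enorm_integral_le_lintegral_enorm _).trans_eq (lintegral_congr fun x => ?_)
  rw [← ofReal_norm, Real.norm_eq_abs]

theorem two_mul_ofReal_abs_sub_le_lintegral {L : ℝ} {g g' : ℝ → ℝ}
    (hg : ∀ x, HasDerivAt g (g' x) x) (hc : Continuous g') (hper : g L = g 0) {p q : ℝ}
    (hp : p ∈ Ico 0 L) (hq : q ∈ Ico 0 L) :
    2 * ENNReal.ofReal |g p - g q| ≤ ∫⁻ x in Ico 0 L, ENNReal.ofReal |g' x| := by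
  wlog hpq : p ≤ q generalizing p q
  · rw [abs_sub_comm]; exact this hq hp (le_of_not_ge hpq)
  have h1 := ofReal_abs_sub_le_lintegral hg hc hp.1
  have h2 := ofReal_abs_sub_le_lintegral hg hc hpq
  have h3 := ofReal_abs_sub_le_lintegral hg hc hq.2.le
  have e1 : (∫⁻ x in Ico 0 L, ENNReal.ofReal |g' x|) = (∫⁻ x in Ico 0 p, ENNReal.ofReal |g' x|) +
      (∫⁻ x in Ico p L, ENNReal.ofReal |g' x|) := by
    rw [← lintegral_union measurableSet_Ico (Ico_disjoint_Ico_same), Ico_union_Ico_eq_Ico hp.1 hp.2.le]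
  have e2 : (∫⁻ x in Ico p L, ENNReal.ofReal |g' x|) = (∫⁻ x in Ico p q, ENNReal.ofReal |g' x|) +
      (∫⁻ x in Ico q L, ENNReal.ofReal |g' x|) := by
    rw [← lintegral_union measurableSet_Ico (Ico_disjoint_Ico_same), Ico_union_Ico_eq_Ico hpq hq.2.le]
  rw [e1, e2]
  have h4 : |g p - g q| ≤ |g p - g 0| + |g L - g q| := by
    rw [hper]
    calc |g p - g q| = |(g p - g 0) + (g 0 - g q)| := by ring_nf
      _ ≤ _ := abs_add_le _ _
  have h5 := ENNReal.ofReal_le_ofReal h4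
  rw [ENNReal.ofReal_add (abs_nonneg _) (abs_nonneg _)] at h5
  rw [abs_sub_comm] at h2
  calc 2 * ENNReal.ofReal |g p - g q| = ENNReal.ofReal |g p - g q| + ENNReal.ofReal |g p - g q| :=
        two_mul _
    _ ≤ (ENNReal.ofReal |g p - g 0| + ENNReal.ofReal |g L - g q|) + ENNReal.ofReal |g p - g q| := by
        gcongr
    _ ≤ ((∫⁻ x in Ico 0 p, ENNReal.ofReal |g' x|) + (∫⁻ x in Ico q L, ENNReal.ofReal |g' x|)) +
        (∫⁻ x in Ico p q, ENNReal.ofReal |g' x|) := by gcongr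
    _ = _ := by ring

theorem hasDerivAt_primitive_comp {α h : ℝ → ℝ} (hα : Continuous α) {h' x c : ℝ}
    (hh : HasDerivAt h h' x) :
    HasDerivAt (fun x => ∫ s in c..h x, α s) (α (h x) * h') x :=
  (intervalIntegral.integral_hasDerivAt_right (hα.intervalIntegrable _ _)
    (hα.stronglyMeasurableAtFilter _ _) hα.continuousAt).comp x hh

theorem abs_primitive_comp_sub {α h : ℝ → ℝ} (hα : Continuous α) (p q : ℝ) :
    (∫ s in (0 : ℝ)..h q, α s) - (∫ s in (0 : ℝ)..h p, α s) = ∫ s in h p..h q, α s :=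
  intervalIntegral.integral_interval_sub_left (hα.intervalIntegrable _ _)
    (hα.intervalIntegrable _ _)

theorem hasDerivAt_intervalIntegral_of_continuous {F F' : ℝ → ℝ → ℝ} (a b : ℝ)
    (hF : Continuous fun q : ℝ × ℝ => F q.1 q.2) (hF' : Continuous fun q : ℝ × ℝ => F' q.1 q.2)
    (hd : ∀ t y, HasDerivAt (fun s => F s y) (F' t y) t) (t : ℝ) :
    HasDerivAt (fun t => ∫ y in a..b, F t y) (∫ y in a..b, F' t y) t := by
  obtain ⟨C, hC⟩ := ((isCompact_closedBall t 1).prod (isCompact_uIcc (a := a) (b := b))).bddAbove_image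
    (f := fun q : ℝ × ℝ => ‖F' q.1 q.2‖) hF'.norm.continuousOn
  refine (intervalIntegral.hasDerivAt_integral_of_dominated_loc_of_deriv_le
    (bound := fun _ => C) (Metric.ball_mem_nhds t one_pos) ?_ ?_ ?_ ?_ ?_ ?_).2
  · exact Eventually.of_forall fun s => (by fun_prop : Continuous (F s)).aestronglyMeasurable
  · exact (by fun_prop : Continuous (F t)).intervalIntegrable _ _
  · exact (by fun_prop : Continuous (F' t)).aestronglyMeasurable
  · refine Eventually.of_forall fun y hy s hs => hC ⟨(s, y), ⟨Metric.ball_subset_closedBall hs, ?_⟩, rfl⟩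
    exact uIoc_subset_uIcc hy
  · simp
  · exact Eventually.of_forall fun y _ s _ => hd s y

theorem ofReal_intervalIntegral_eq_setLIntegral {g : ℝ → ℝ} {L : ℝ} (hL : 0 ≤ L) (hg : Measurable g)
    (h : ∀ x, g x ∈ Icc (0 : ℝ) 1) :
    ENNReal.ofReal (∫ x in (0 : ℝ)..L, g x) = ∫⁻ x in Ico 0 L, ENNReal.ofReal (g x) := by
  rw [intervalIntegral.integral_of_le hL, restrict_Ico_eq_restrict_Ioc,
    ofReal_integral_eq_lintegral_ofReal _ (Eventually.of_forall fun x => (h x).1)]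
  refine Measure.integrableOn_of_bounded (M := 1) (by simp) hg.aestronglyMeasurable ?_
  refine Eventually.of_forall fun x => ?_
  rw [Real.norm_eq_abs, abs_of_nonneg (h x).1]; exact (h x).2

theorem le_liminf_add_of_le {u v : ℕ → ℝ≥0∞} {a b : ℝ≥0∞}
    (ha : a ≤ liminf u atTop) (hb : b ≤ liminf v atTop) :
    a + b ≤ liminf (fun i => u i + v i) atTop := by
  refine (add_le_add ha hb).trans ?_
  rw [liminf_eq_iSup_iInf_of_nat, liminf_eq_iSup_iInf_of_nat, liminf_eq_iSup_iInf_of_nat]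
  refine ENNReal.iSup_add_iSup_le fun i j => le_iSup_of_le (max i j) (le_iInf₂ fun k hk => ?_)
  exact add_le_add (iInf₂_le k ((le_max_left _ _).trans hk))
    (iInf₂_le k ((le_max_right _ _).trans hk))

/-- Fatou's lemma for products with a continuous weight. -/
theorem lintegral_mul_le_liminf {μ : Measure ℝ} {β : ℝ → ℝ} (hβ : Continuous β) {h : ℕ → ℝ → ℝ}
    {h₀ : ℝ → ℝ} (hh : ∀ k, Measurable (h k)) {P : ℕ → ℝ → ℝ≥0∞} (hP : ∀ k, Measurable (P k))
    {p : ℝ → ℝ≥0∞} (hlim : ∀ᵐ x ∂μ, Tendsto (fun k => h k x) atTop (𝓝 (h₀ x)))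
    (hp : ∀ᵐ x ∂μ, p x ≤ liminf (fun k => P k x) atTop) :
    ∫⁻ x, ENNReal.ofReal (β (h₀ x)) * p x ∂μ ≤
      liminf (fun k => ∫⁻ x, ENNReal.ofReal (β (h k x)) * P k x ∂μ) atTop := by
  refine le_trans (lintegral_mono_ae ?_) (lintegral_liminf_le fun k =>
    ((hβ.measurable.comp (hh k)).ennreal_ofReal.mul (hP k)))
  filter_upwards [hlim, hp] with x hx hpx
  have h1 : Tendsto (fun k => ENNReal.ofReal (β (h k x))) atTop (𝓝 (ENNReal.ofReal (β (h₀ x)))) :=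
    (ENNReal.continuous_ofReal.tendsto _).comp ((hβ.tendsto _).comp hx)
  calc _ ≤ liminf (fun k => ENNReal.ofReal (β (h k x))) atTop * liminf (fun k => P k x) atTop := by
        rw [h1.liminf_eq]; gcongr
    _ ≤ _ := ENNReal.le_liminf_mul

end Variation

section PlanarCore

theorem integral_zero_one_sqrt_one_sub_sq : ∫ x in (0 : ℝ)..1, √(1 - x ^ 2) = Real.pi / 4 := by
  have hc : Continuous fun x : ℝ => √(1 - x ^ 2) := by fun_prop
  have h1 := integral_sqrt_one_sub_sq
  rw [← intervalIntegral.integral_add_adjacent_intervals (b := 0) (hc.intervalIntegrable _ _)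
    (hc.intervalIntegrable _ _)] at h1
  have h2 := intervalIntegral.integral_comp_neg (a := 0) (b := 1) fun x : ℝ => √(1 - x ^ 2)
  simp only [neg_sq, neg_zero] at h2
  linarith

theorem integral_sqrt_one_sub_div_sq {m : ℝ} (hm : 0 < m) :
    ∫ s in (0 : ℝ)..m, √(1 - (s / m) ^ 2) = m * (Real.pi / 4) := by
  rw [intervalIntegral.integral_comp_div (fun x => √(1 - x ^ 2)) hm.ne', zero_div,
    div_self hm.ne', integral_zero_one_sqrt_one_sub_sq, smul_eq_mul]

/-- The inequality satisfied by the section lengths `ℓ` of a set whose perimeter is at most `D`. -/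
def CoareaBound (L : ℝ) (ℓ : ℝ → ℝ) (D : ℝ≥0∞) : Prop :=
  ∀ α β : ℝ → ℝ, Continuous α → Continuous β → (∀ s, 0 ≤ α s) → (∀ s, 0 ≤ β s) →
    (∀ s, α s ^ 2 + β s ^ 2 ≤ 1) →
    ∀ᵐ x₀ ∂(volume.restrict (Ico 0 L)), ∀ᵐ x₁ ∂(volume.restrict (Ico 0 L)),
      2 * ENNReal.ofReal |∫ s in ℓ x₀..ℓ x₁, α s| +
        (∫⁻ x in Ico 0 L, ENNReal.ofReal (β (ℓ x)) * (Ioo 0 L).indicator (fun _ => 2) (ℓ x)) ≤ D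

variable {L : ℝ} {ℓ : ℝ → ℝ} {D : ℝ≥0∞}

theorem CoareaBound.sub_left (H : CoareaBound L ℓ D) :
    CoareaBound L (fun x => L - ℓ x) D := by
  intro α β hα hβ hα0 hβ0 hαβ
  have h := H (fun s => α (L - s)) (fun s => β (L - s)) (by fun_prop) (by fun_prop)
    (fun s => hα0 _) (fun s => hβ0 _) (fun s => hαβ _)
  filter_upwards [h] with x₀ h₀
  filter_upwards [h₀] with x₁ h₁
  rw [intervalIntegral.integral_comp_sub_left (fun s => α s), intervalIntegral.integral_symm,
    abs_neg] at h₁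
  convert h₁ using 5 with x
  simp only [indicator, mem_Ioo]
  congr 1
  apply propext
  constructor <;> rintro ⟨h1, h2⟩ <;> constructor <;> linarith

theorem CoareaBound.two_mul_sqrt_le (hL : 0 < L) (hm : Measurable ℓ) (hI : ∀ x, ℓ x ∈ Icc 0 L)
    (H : CoareaBound L ℓ D) (h0 : ∃ᵐ x ∂(volume.restrict (Ico 0 L)), ℓ x = 0)
    (h1 : ∀ᵐ x ∂(volume.restrict (Ico 0 L)), ℓ x ≠ L) :
    ENNReal.ofReal (2 * √(Real.pi * ∫ x in (0 : ℝ)..L, ℓ x)) ≤ D := by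
  set μ := (volume : Measure ℝ).restrict (Ico 0 L) with hμ
  have hμ0 : μ ≠ 0 := by rw [hμ, Ne, Measure.restrict_eq_zero]; simp [hL]
  have hne : (ae μ).NeBot := ae_neBot.2 hμ0
  have hgint : Integrable ℓ μ := by
    refine Measure.integrableOn_of_bounded (M := L) (by simp) hm.aestronglyMeasurable ?_
    exact Eventually.of_forall fun x => by
      rw [Real.norm_eq_abs, abs_of_nonneg (hI x).1]; exact (hI x).2
  set a := ∫ x in (0 : ℝ)..L, ℓ x with ha
  have ha' : a = ∫ x, ℓ x ∂μ := by
    rw [ha, intervalIntegral.integral_of_le hL.le, hμ, restrict_Ico_eq_restrict_Ioc]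
  have ha0 : 0 ≤ a := by rw [ha']; exact integral_nonneg fun x => (hI x).1
  rcases ha0.eq_or_lt with h | hapos
  · rw [← h]; simp
  have hbdd : IsBoundedUnder (· ≤ ·) (ae μ) ℓ := isBoundedUnder_of ⟨L, fun x => (hI x).2⟩
  have hcob : IsCoboundedUnder (· ≤ ·) (ae μ) ℓ :=
    (isBoundedUnder_of ⟨0, fun x => (hI x).1⟩ : IsBoundedUnder (· ≥ ·) (ae μ) ℓ).isCoboundedUnder_le
  set m := essSup ℓ μ with hmdef
  have hle : ∀ᵐ x ∂μ, ℓ x ≤ m := ae_le_essSup hbdd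
  have hmpos : 0 < m := by
    by_contra hcon
    have : ℓ =ᵐ[μ] 0 := by
      filter_upwards [hle] with x hx
      exact le_antisymm (hx.trans (not_lt.1 hcon)) (hI x).1
    rw [integral_congr_ae this] at ha'
    simp at ha'
    linarith
  set α : ℝ → ℝ := fun s => √(1 - (s / m) ^ 2) with hα
  set β : ℝ → ℝ := fun s => min |s / m| 1 with hβ
  have hαc : Continuous α := by fun_prop
  have hβc : Continuous β := by fun_prop
  have hαβ : ∀ s, α s ^ 2 + β s ^ 2 ≤ 1 := by
    intro s
    simp only [hα, hβ]
    rcases le_total |s / m| 1 with h | h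
    · have h2 : (s / m) ^ 2 ≤ 1 := (sq_le_one_iff_abs_le_one _).2 h
      rw [Real.sq_sqrt (by linarith), min_eq_left h, sq_abs]; linarith
    · have h2 : 1 ≤ (s / m) ^ 2 := (one_le_sq_iff_one_le_abs _).2 h
      rw [Real.sqrt_eq_zero_of_nonpos (by linarith), min_eq_right h]; norm_num
  have hH := H α β hαc hβc (fun s => Real.sqrt_nonneg _)
    (fun s => le_min (abs_nonneg _) zero_le_one) hαβ
  obtain ⟨x₀, hx₀, hx₀'⟩ := (h0.and_eventually hH).exists
  rw [hx₀] at hx₀'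
  have hB : ∫⁻ x, ENNReal.ofReal (β (ℓ x)) * (Ioo 0 L).indicator (fun _ => 2) (ℓ x) ∂μ =
      ENNReal.ofReal (2 * a / m) := by
    have : ∀ᵐ x ∂μ, ENNReal.ofReal (β (ℓ x)) * (Ioo 0 L).indicator (fun _ => 2) (ℓ x) =
        ENNReal.ofReal (2 / m * ℓ x) := by
      filter_upwards [hle, h1] with x hx hxL
      rcases (hI x).1.eq_or_lt with h | h
      · rw [← h]; simp [hβ]
      · have : ℓ x ∈ Ioo 0 L := ⟨h, lt_of_le_of_ne (hI x).2 hxL⟩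
        rw [indicator_of_mem this]
        have h3 : β (ℓ x) = ℓ x / m := by
          simp only [hβ]
          rw [abs_of_nonneg (by positivity), min_eq_left ((div_le_one hmpos).2 hx)]
        rw [h3, show (2 : ℝ≥0∞) = ENNReal.ofReal 2 by simp, ← ENNReal.ofReal_mul (by positivity)]
        congr 1; ring
    rw [lintegral_congr_ae this, ← ofReal_integral_eq_lintegral_ofReal (hgint.const_mul _)
      (Eventually.of_forall fun x => mul_nonneg (by positivity) (hI x).1), integral_const_mul, ← ha']
    congr 1; ring
  rw [hB] at hx₀'
  set S := {s : ℝ | 2 * ENNReal.ofReal |∫ s in (0 : ℝ)..s, α s| + ENNReal.ofReal (2 * a / m) ≤ D}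
    with hS
  have hcp : Continuous fun s => ∫ s in (0 : ℝ)..s, α s :=
    intervalIntegral.continuous_primitive (fun a b => hαc.intervalIntegrable a b) 0
  have hSc : IsClosed S := by
    have h2 : Continuous fun s => 2 * ENNReal.ofReal |∫ s in (0 : ℝ)..s, α s| :=
      (ENNReal.continuous_const_mul (by simp)).comp (ENNReal.continuous_ofReal.comp hcp.abs)
    exact isClosed_le (h2.add continuous_const) continuous_const
  have hmS : m ∈ S := by
    rw [← hSc.closure_eq, Metric.mem_closure_iff]
    intro ε hε
    have hfr : ∃ᶠ x in ae μ, m - ε < ℓ x :=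
      frequently_lt_of_lt_limsup hcob (by change m - ε < m; linarith)
    obtain ⟨x₁, h1, h2, h3⟩ := (hfr.and_eventually (hx₀'.and hle)).exists
    refine ⟨ℓ x₁, h2, ?_⟩
    rw [Real.dist_eq, abs_of_nonneg (by linarith)]; linarith
  refine le_trans ?_ hmS
  rw [integral_sqrt_one_sub_div_sq hmpos, abs_of_nonneg (by positivity),
    show (2 : ℝ≥0∞) = ENNReal.ofReal 2 by simp, ← ENNReal.ofReal_mul (by positivity),
    ← ENNReal.ofReal_add (by positivity) (by positivity)]
  apply ENNReal.ofReal_le_ofReal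
  have hprod : Real.pi * a = (Real.pi * m / 2) * (2 * a / m) := by field_simp
  have : √(Real.pi * a) ≤ (Real.pi * m / 2 + 2 * a / m) / 2 := by
    rw [hprod]
    refine Real.sqrt_le_iff.2 ⟨by positivity, ?_⟩
    nlinarith [sq_nonneg (Real.pi * m / 2 - 2 * a / m)]
  linarith

theorem CoareaBound.sqrt_le (hL : 0 < L) (hLπ : L ^ 2 ≤ 4 * Real.pi) (hm : Measurable ℓ)
    (hI : ∀ x, ℓ x ∈ Icc 0 L) (H : CoareaBound L ℓ D) :
    ENNReal.ofReal √((∫ x in (0 : ℝ)..L, ℓ x) * (L ^ 2 - ∫ x in (0 : ℝ)..L, ℓ x)) ≤ D := by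
  set a := ∫ x in (0 : ℝ)..L, ℓ x with ha
  have hgint : IntervalIntegrable ℓ volume 0 L := by
    rw [intervalIntegrable_iff_integrableOn_Ioc_of_le hL.le]
    refine Measure.integrableOn_of_bounded (M := L) (by simp) hm.aestronglyMeasurable ?_
    exact Eventually.of_forall fun x => by
      rw [Real.norm_eq_abs, abs_of_nonneg (hI x).1]; exact (hI x).2
  have ha0 : 0 ≤ a := intervalIntegral.integral_nonneg hL.le fun x _ => (hI x).1
  have hac : ∫ x in (0 : ℝ)..L, (L - ℓ x) = L ^ 2 - a := by
    rw [intervalIntegral.integral_sub (by simp) hgint, intervalIntegral.integral_const, ← ha]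
    simp; ring
  have ha1 : 0 ≤ L ^ 2 - a := by
    rw [← hac]
    exact intervalIntegral.integral_nonneg hL.le fun x _ => by linarith [(hI x).2]
  have hL4 : L ≤ 4 := by nlinarith [Real.pi_lt_four]
  have hhalf : √(a * (L ^ 2 - a)) ≤ 2 * L := by
    refine Real.sqrt_le_iff.2 ⟨by positivity, ?_⟩
    have : L ^ 2 * L ^ 2 ≤ 16 * L ^ 2 := by
      have : L ^ 2 ≤ 16 := by nlinarith
      gcongr
    nlinarith [sq_nonneg (2 * a - L ^ 2)]
  by_cases h0 : ∃ᵐ x ∂(volume.restrict (Ico 0 L)), ℓ x = 0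
  · by_cases h1 : ∃ᵐ x ∂(volume.restrict (Ico 0 L)), ℓ x = L
    · have hH := H (fun _ => 1) (fun _ => 0) (by fun_prop) (by fun_prop) (fun _ => by norm_num)
        (fun _ => by norm_num) (fun _ => by norm_num)
      obtain ⟨x₀, hx₀, hx₀'⟩ := (h0.and_eventually hH).exists
      obtain ⟨x₁, hx₁, hx₁'⟩ := (h1.and_eventually hx₀').exists
      rw [hx₀, hx₁] at hx₁'
      refine le_trans (ENNReal.ofReal_le_ofReal hhalf) (le_trans (le_of_eq ?_) hx₁')
      simp [abs_of_pos hL, ENNReal.ofReal_mul]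
    · rw [not_frequently] at h1
      refine le_trans (ENNReal.ofReal_le_ofReal ?_) (H.two_mul_sqrt_le hL hm hI h0 h1)
      rw [← ha]
      refine Real.sqrt_le_iff.2 ⟨by positivity, ?_⟩
      rw [mul_pow, Real.sq_sqrt (by positivity)]
      nlinarith
  · rw [not_frequently] at h0
    by_cases h1 : ∃ᵐ x ∂(volume.restrict (Ico 0 L)), ℓ x = L
    · have := H.sub_left.two_mul_sqrt_le hL (by fun_prop)
        (fun x => ⟨by linarith [(hI x).2], by linarith [(hI x).1]⟩)
        (h1.mono fun x hx => by linarith) (h0.mono fun x hx h => hx (by linarith))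
      refine le_trans (ENNReal.ofReal_le_ofReal ?_) this
      rw [hac]
      refine Real.sqrt_le_iff.2 ⟨by positivity, ?_⟩
      rw [mul_pow, Real.sq_sqrt (mul_nonneg Real.pi_pos.le ha1)]
      nlinarith
    · rw [not_frequently] at h1
      have hne : (ae ((volume : Measure ℝ).restrict (Ico 0 L))).NeBot :=
        ae_neBot.2 (by rw [Ne, Measure.restrict_eq_zero]; simp [hL])
      have hH := H (fun _ => 0) (fun _ => 1) (by fun_prop) (by fun_prop) (fun _ => by norm_num)
        (fun _ => by norm_num) (fun _ => by norm_num)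
      obtain ⟨x₀, hx₀⟩ := hH.exists
      obtain ⟨x₁, hx₁⟩ := hx₀.exists
      refine le_trans (ENNReal.ofReal_le_ofReal hhalf) (le_trans (le_of_eq ?_) hx₁)
      have : ∀ᵐ x ∂(volume.restrict (Ico 0 L)),
          ENNReal.ofReal 1 * (Ioo 0 L).indicator (fun _ => (2 : ℝ≥0∞)) (ℓ x) = 2 := by
        filter_upwards [h0, h1] with x h2 h3
        have h4 : ℓ x ∈ Ioo 0 L := ⟨lt_of_le_of_ne (hI x).1 (Ne.symm h2), lt_of_le_of_ne (hI x).2 h3⟩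
        rw [indicator_of_mem h4]
        simp
      rw [lintegral_congr_ae this]
      simp [ENNReal.ofReal_mul]

end PlanarCore

section Planar

theorem ofReal_abs_intervalIntegral_le {g : ℝ → ℝ} {L : ℝ} (hL : 0 ≤ L) :
    ENNReal.ofReal |∫ y in (0 : ℝ)..L, g y| ≤ ∫⁻ y in Ico 0 L, ENNReal.ofReal |g y| := by
  rw [intervalIntegral.integral_of_le hL, ← Real.norm_eq_abs, ofReal_norm,
    restrict_Ico_eq_restrict_Ioc]
  refine (enorm_integral_le_lintegral_enorm _).trans_eq (lintegral_congr fun x => ?_)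
  rw [← ofReal_norm, Real.norm_eq_abs]

theorem tendsto_intervalIntegral_of_mem_Icc {L C : ℝ} {g : ℕ → ℝ → ℝ} {g₀ : ℝ → ℝ}
    (hg : ∀ k, Measurable (g k)) (hI : ∀ k y, g k y ∈ Icc 0 C)
    (hlim : ∀ᵐ y, Tendsto (fun k => g k y) atTop (𝓝 (g₀ y))) :
    Tendsto (fun k => ∫ y in (0 : ℝ)..L, g k y) atTop (𝓝 (∫ y in (0 : ℝ)..L, g₀ y)) := by
  refine intervalIntegral.tendsto_integral_filter_of_dominated_convergence (fun _ => C)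
    (Eventually.of_forall fun k => (hg k).aestronglyMeasurable)
    (Eventually.of_forall fun k => Eventually.of_forall fun y _ => ?_) (by simp)
    (hlim.mono fun y hy _ => hy)
  rw [Real.norm_eq_abs, abs_of_nonneg (hI k y).1]; exact (hI k y).2

theorem intervalIntegral_mem_Icc {L C : ℝ} (hL : 0 ≤ L) {g : ℝ → ℝ} (hg : Measurable g)
    (hI : ∀ y, g y ∈ Icc 0 C) : ∫ y in (0 : ℝ)..L, g y ∈ Icc 0 (L * C) := by
  refine ⟨intervalIntegral.integral_nonneg hL fun y _ => (hI y).1, ?_⟩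
  have hi : IntervalIntegrable g volume 0 L := by
    rw [intervalIntegrable_iff_integrableOn_Ioc_of_le hL]
    refine Measure.integrableOn_of_bounded (M := C) (by simp) hg.aestronglyMeasurable ?_
    exact Eventually.of_forall fun x => by
      rw [Real.norm_eq_abs, abs_of_nonneg (hI x).1]; exact (hI x).2
  calc _ ≤ ∫ y in (0 : ℝ)..L, C := intervalIntegral.integral_mono hL hi (by simp) fun y => (hI y).2
    _ = L * C := by simp

theorem measurable_intervalIntegral {X : Type*} [MeasurableSpace X] {g : X → ℝ → ℝ} (a b : ℝ)
    (hg : Measurable fun q : X × ℝ => g q.1 q.2) : Measurable fun x => ∫ y in a..b, g x y := by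
  unfold intervalIntegral
  refine Measurable.sub ?_ ?_
  · exact (StronglyMeasurable.integral_prod_right' (ν := volume.restrict (Ioc a b))
      hg.stronglyMeasurable).measurable
  · exact (StronglyMeasurable.integral_prod_right' (ν := volume.restrict (Ioc b a))
      hg.stronglyMeasurable).measurable

/-- A periodic function approximating a nonconstant indicator has variation at least two. -/
theorem two_le_liminf_variation {L : ℝ} (hL : 0 < L) {g g' : ℕ → ℝ → ℝ} {χ : ℝ → ℝ}
    (hd : ∀ k y, HasDerivAt (g k) (g' k y) y) (hc : ∀ k, Continuous (g' k))
    (hper : ∀ k, g k L = g k 0) (hχ : ∀ y, χ y = 0 ∨ χ y = 1)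
    (hlim : ∀ᵐ y, Tendsto (fun k => g k y) atTop (𝓝 (χ y)))
    (hgint : ∫ y in (0 : ℝ)..L, χ y ∈ Ioo 0 L) :
    2 ≤ liminf (fun k => ∫⁻ y in Ico 0 L, ENNReal.ofReal |g' k y|) atTop := by
  have hne : (ae ((volume : Measure ℝ).restrict (Ico 0 L))).NeBot :=
    ae_neBot.2 (by rw [Ne, Measure.restrict_eq_zero]; simp [hL])
  have hgood := (ae_restrict_of_ae (s := Ico 0 L) hlim).and (ae_restrict_mem measurableSet_Ico)
  have key : ∀ c : ℝ, (∀ᵐ y ∂(volume.restrict (Ico 0 L)), χ y = c) →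
      ∫ y in (0 : ℝ)..L, χ y = L * c := by
    intro c hc
    rw [intervalIntegral.integral_of_le hL.le, ← restrict_Ico_eq_restrict_Ioc,
      integral_congr_ae hc]
    simp [hL.le]
  obtain ⟨p, ⟨hp, hpI⟩, hp1⟩ : ∃ p, (Tendsto (fun k => g k p) atTop (𝓝 (χ p)) ∧ p ∈ Ico 0 L) ∧
      χ p = 1 := by
    by_contra! hcon
    have := key 0 (hgood.mono fun y hy => (hχ y).resolve_right (hcon y hy))
    rw [this] at hgint; simp at hgint
  obtain ⟨q, ⟨hq, hqI⟩, hq0⟩ : ∃ p, (Tendsto (fun k => g k p) atTop (𝓝 (χ p)) ∧ p ∈ Ico 0 L) ∧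
      χ p = 0 := by
    by_contra! hcon
    have := key 1 (hgood.mono fun y hy => (hχ y).resolve_left (hcon y hy))
    rw [this] at hgint; simp at hgint
  rw [hp1] at hp
  rw [hq0] at hq
  have hlim2 : Tendsto (fun k => 2 * ENNReal.ofReal |g k p - g k q|) atTop (𝓝 2) := by
    have h1 := (ENNReal.continuous_ofReal.tendsto _).comp (hp.sub hq).abs
    have h2 := ENNReal.Tendsto.const_mul (a := 2) h1 (Or.inr (by simp))
    simpa using h2
  rw [← hlim2.liminf_eq]
  refine liminf_le_liminf (Eventually.of_forall fun k => ?_)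
  exact two_mul_ofReal_abs_sub_le_lintegral (hd k) (hc k) (hper k) hpI hqI

theorem mul_add_mul_le_sqrt {α β a b : ℝ} (h : α ^ 2 + β ^ 2 ≤ 1) :
    α * |a| + β * |b| ≤ √(a ^ 2 + b ^ 2) := by
  refine Real.le_sqrt_of_sq_le ?_
  have h1 := sq_abs a
  have h2 := sq_abs b
  have h3 := sq_nonneg (α * |b| - β * |a|)
  have h4 : (α ^ 2 + β ^ 2) * (|a| ^ 2 + |b| ^ 2) ≤ 1 * (|a| ^ 2 + |b| ^ 2) := by gcongr
  nlinarith

variable {L : ℝ} {f fx fy : ℕ → ℝ → ℝ → ℝ} {χ : ℝ → ℝ → ℝ}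

theorem coareaBound_of_tendsto (hL : 0 < L)
    (cont : ∀ k, Continuous fun q : ℝ × ℝ => f k q.1 q.2)
    (cont_x : ∀ k, Continuous fun q : ℝ × ℝ => fx k q.1 q.2)
    (cont_y : ∀ k, Continuous fun q : ℝ × ℝ => fy k q.1 q.2)
    (deriv_x : ∀ k x y, HasDerivAt (fun s => f k s y) (fx k x y) x)
    (deriv_y : ∀ k x y, HasDerivAt (fun s => f k x s) (fy k x y) y)
    (mem_Icc : ∀ k x y, f k x y ∈ Icc (0 : ℝ) 1)
    (per_x : ∀ k x y, f k (x + L) y = f k x y) (per_y : ∀ k x y, f k x (y + L) = f k x y)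
    (χ_eq : ∀ x y, χ x y = 0 ∨ χ x y = 1)
    (hlim : ∀ᵐ x, ∀ᵐ y, Tendsto (fun k => f k x y) atTop (𝓝 (χ x y))) :
    CoareaBound L (fun x => ∫ y in (0 : ℝ)..L, χ x y)
      (liminf (fun k => ∫⁻ x in Ico 0 L, (∫⁻ y in Ico 0 L,
        ENNReal.ofReal √(fx k x y ^ 2 + fy k x y ^ 2))) atTop) := by
  intro α β hα hβ hα0 hβ0 hαβ
  set ℓ : ℝ → ℝ := fun x => ∫ y in (0 : ℝ)..L, χ x y with hℓ
  set h : ℕ → ℝ → ℝ := fun k x => ∫ y in (0 : ℝ)..L, f k x y with hh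
  set h' : ℕ → ℝ → ℝ := fun k x => ∫ y in (0 : ℝ)..L, fx k x y with hh'
  have hd : ∀ k x, HasDerivAt (h k) (h' k x) x := fun k x =>
    hasDerivAt_intervalIntegral_of_continuous 0 L (cont k) (cont_x k)
      (fun t y => deriv_x k t y) x
  have hcont : ∀ k, Continuous (h k) := fun k =>
    continuous_iff_continuousAt.2 fun x => (hd k x).continuousAt
  have hcont' : ∀ k, Continuous (h' k) := fun k =>
    intervalIntegral.continuous_parametric_intervalIntegral_of_continuous' (cont_x k) 0 L
  have hconv : ∀ᵐ x ∂(volume.restrict (Ico 0 L)), Tendsto (fun k => h k x) atTop (𝓝 (ℓ x)) := by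
    refine ae_restrict_of_ae (hlim.mono fun x hx => ?_)
    exact tendsto_intervalIntegral_of_mem_Icc
      (fun k => (by have := cont k; fun_prop : Continuous (f k x)).measurable)
      (fun k => mem_Icc k x) hx
  have hV : ∀ᵐ x ∂(volume.restrict (Ico 0 L)), (Ioo 0 L).indicator (fun _ => 2) (ℓ x) ≤
      liminf (fun k => ∫⁻ y in Ico 0 L, ENNReal.ofReal |fy k x y|) atTop := by
    refine ae_restrict_of_ae (hlim.mono fun x hx => ?_)
    by_cases hx0 : ℓ x ∈ Ioo 0 L
    · rw [indicator_of_mem hx0]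
      exact two_le_liminf_variation hL (fun k => deriv_y k x)
        (fun k => by have := cont_y k; fun_prop)
        (fun k => by simpa using per_y k x 0) (χ_eq x) hx hx0
    · rw [indicator_of_notMem hx0]; exact zero_le
  have hVm : ∀ k, Measurable fun x => ∫⁻ y in Ico 0 L, ENNReal.ofReal |fy k x y| := fun k =>
    Measurable.lintegral_prod_right' (f := fun q : ℝ × ℝ => ENNReal.ofReal |fy k q.1 q.2|)
      (cont_y k).measurable.abs.ennreal_ofReal
  have hF := lintegral_mul_le_liminf hβ (fun k => (hcont k).measurable) hVm hconv hV
  have hgood := hconv.and (ae_restrict_mem measurableSet_Ico)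
  filter_upwards [hgood] with x₀ h₀
  filter_upwards [hgood] with x₁ h₁
  have hcp : Continuous fun s => ∫ u in (0 : ℝ)..s, α u :=
    intervalIntegral.continuous_primitive (fun a b => hα.intervalIntegrable a b) 0
  have hA : 2 * ENNReal.ofReal |∫ s in ℓ x₀..ℓ x₁, α s| ≤ liminf (fun k => ∫⁻ x in Ico 0 L,
      ENNReal.ofReal (α (h k x)) * ENNReal.ofReal |h' k x|) atTop := by
    have h2 : Tendsto (fun k => 2 * ENNReal.ofReal |(∫ s in (0 : ℝ)..h k x₁, α s) -
        ∫ s in (0 : ℝ)..h k x₀, α s|) atTop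
        (𝓝 (2 * ENNReal.ofReal |∫ s in ℓ x₀..ℓ x₁, α s|)) := by
      rw [← abs_primitive_comp_sub hα]
      have h3 := (((hcp.tendsto _).comp h₁.1).sub ((hcp.tendsto _).comp h₀.1)).abs
      exact ENNReal.Tendsto.const_mul ((ENNReal.continuous_ofReal.tendsto _).comp h3)
        (Or.inr (by simp))
    rw [← h2.liminf_eq]
    refine liminf_le_liminf (Eventually.of_forall fun k => ?_)
    have h4 := two_mul_ofReal_abs_sub_le_lintegral (L := L)
      (fun x => hasDerivAt_primitive_comp (c := 0) hα (hd k x))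
      ((hα.comp (hcont k)).mul (hcont' k))
      (by
        have : h k L = h k 0 := by
          simp only [hh]
          exact intervalIntegral.integral_congr fun y _ => by simpa using per_x k 0 y
        simp only [this]) h₁.2 h₀.2
    refine h4.trans_eq (lintegral_congr fun x => ?_)
    rw [abs_mul, abs_of_nonneg (hα0 _), ENNReal.ofReal_mul (hα0 _)]
  refine (le_liminf_add_of_le hA hF).trans (liminf_le_liminf (Eventually.of_forall fun k => ?_))
  have hm1 : Measurable fun x => ENNReal.ofReal (α (h k x)) * ENNReal.ofReal |h' k x| :=
    (hα.comp (hcont k)).measurable.ennreal_ofReal.mul (hcont' k).measurable.abs.ennreal_ofReal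
  change (∫⁻ x in Ico 0 L, ENNReal.ofReal (α (h k x)) * ENNReal.ofReal |h' k x|) +
    (∫⁻ x in Ico 0 L, ENNReal.ofReal (β (h k x)) * (∫⁻ y in Ico 0 L, ENNReal.ofReal |fy k x y|)) ≤ _
  rw [← lintegral_add_left hm1]
  refine lintegral_mono fun x => ?_
  have hmy : Measurable fun y => ENNReal.ofReal |fx k x y| :=
    (by have := cont_x k; fun_prop : Continuous (fx k x)).measurable.abs.ennreal_ofReal
  have hmy' : Measurable fun y => ENNReal.ofReal |fy k x y| :=
    (by have := cont_y k; fun_prop : Continuous (fy k x)).measurable.abs.ennreal_ofReal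
  calc _ ≤ ENNReal.ofReal (α (h k x)) * (∫⁻ y in Ico 0 L, ENNReal.ofReal |fx k x y|) +
      ENNReal.ofReal (β (h k x)) * (∫⁻ y in Ico 0 L, ENNReal.ofReal |fy k x y|) := by
        gcongr; exact ofReal_abs_intervalIntegral_le hL.le
    _ = ∫⁻ y in Ico 0 L, (ENNReal.ofReal (α (h k x)) * ENNReal.ofReal |fx k x y| +
        ENNReal.ofReal (β (h k x)) * ENNReal.ofReal |fy k x y|) := by
        rw [lintegral_add_left (hmy.const_mul _), lintegral_const_mul _ hmy,
          lintegral_const_mul _ hmy']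
    _ ≤ _ := by
        refine lintegral_mono fun y => ?_
        rw [← ENNReal.ofReal_mul (hα0 _), ← ENNReal.ofReal_mul (hβ0 _),
          ← ENNReal.ofReal_add (mul_nonneg (hα0 _) (abs_nonneg _))
            (mul_nonneg (hβ0 _) (abs_nonneg _))]
        exact ENNReal.ofReal_le_ofReal (mul_add_mul_le_sqrt (hαβ _))

end Planar

section Space

theorem exists_lt_of_lintegral_ne_top {h : ℝ → ℝ} (hh : ∫⁻ t, ENNReal.ofReal (h t) ≠ ∞)
    {s : Set ℝ} (hs : volume s = ∞) (hsm : MeasurableSet s) {ε : ℝ} (hε : 0 < ε) : ∃ t ∈ s, h t < ε := by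
  by_contra! hcon
  refine hh (top_le_iff.1 ?_)
  calc ∞ = ENNReal.ofReal ε * volume s := by
        rw [hs, ENNReal.mul_top (by simpa using hε)]
    _ = ∫⁻ _ in s, ENNReal.ofReal ε := by simp
    _ ≤ ∫⁻ t in s, ENNReal.ofReal (h t) := setLIntegral_mono' hsm fun t ht =>
        ENNReal.ofReal_le_ofReal (hcon t ht)
    _ ≤ _ := setLIntegral_le_lintegral _ _

theorem two_mul_ofReal_le_lintegral_abs {g g' : ℝ → ℝ} (hg : ∀ x, HasDerivAt g (g' x) x)
    (hc : Continuous g') {t : ℝ} (h1 : ∀ ε > 0, ∃ s < t, g s < ε) (h2 : ∀ ε > 0, ∃ s > t, g s < ε) :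
    2 * ENNReal.ofReal (g t) ≤ ∫⁻ x, ENNReal.ofReal |g' x| := by
  rw [two_mul]
  refine ENNReal.le_of_forall_pos_le_add fun ε hε _ => ?_
  obtain ⟨s, hs, hs'⟩ := h1 (ε / 2) (by positivity)
  obtain ⟨r, hr, hr'⟩ := h2 (ε / 2) (by positivity)
  have e1 := ofReal_abs_sub_le_lintegral hg hc hs.le
  have e2 := ofReal_abs_sub_le_lintegral hg hc hr.le
  have e3 : ENNReal.ofReal (g t) ≤ ENNReal.ofReal |g t - g s| + ENNReal.ofReal (ε / 2 : ℝ) := by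
    rw [← ENNReal.ofReal_add (abs_nonneg _) (by positivity)]
    exact ENNReal.ofReal_le_ofReal (by linarith [le_abs_self (g t - g s)])
  have e4 : ENNReal.ofReal (g t) ≤ ENNReal.ofReal |g r - g t| + ENNReal.ofReal (ε / 2 : ℝ) := by
    rw [← ENNReal.ofReal_add (abs_nonneg _) (by positivity)]
    exact ENNReal.ofReal_le_ofReal (by linarith [neg_abs_le (g r - g t)])
  have e5 : (∫⁻ x in Ico s t, ENNReal.ofReal |g' x|) + (∫⁻ x in Ico t r, ENNReal.ofReal |g' x|) ≤
      ∫⁻ x, ENNReal.ofReal |g' x| := by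
    rw [← lintegral_union measurableSet_Ico Ico_disjoint_Ico_same]
    exact setLIntegral_le_lintegral _ _
  have e6 : ENNReal.ofReal (ε / 2 : ℝ) + ENNReal.ofReal (ε / 2 : ℝ) = ε := by
    rw [← ENNReal.ofReal_add (by positivity) (by positivity), add_halves, ENNReal.ofReal_coe_nnreal]
  calc _ ≤ (ENNReal.ofReal |g t - g s| + ENNReal.ofReal (ε / 2 : ℝ)) +
        (ENNReal.ofReal |g r - g t| + ENNReal.ofReal (ε / 2 : ℝ)) := add_le_add e3 e4
    _ = (ENNReal.ofReal |g t - g s| + ENNReal.ofReal |g r - g t|) +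
        (ENNReal.ofReal (ε / 2 : ℝ) + ENNReal.ofReal (ε / 2 : ℝ)) := by ring
    _ ≤ _ := by rw [e6]; gcongr; exact (add_le_add e1 e2).trans e5

variable {L : ℝ} {κ w : ℝ≥0∞}

namespace PeriodicApprox

/-- The areas of the slices of the limit set. -/
noncomputable def area (A : PeriodicApprox L κ w) (t : ℝ) : ℝ :=
  ∫ x in (0 : ℝ)..L, ∫ y in (0 : ℝ)..L, A.χ t x y

theorem measurable_length (A : PeriodicApprox L κ w) :
    Measurable fun q : ℝ × ℝ => ∫ y in (0 : ℝ)..L, A.χ q.1 q.2 y :=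
  measurable_intervalIntegral 0 L (by
    have := A.meas_χ
    exact this.comp (by fun_prop : Measurable fun q : (ℝ × ℝ) × ℝ => (q.1.1, q.1.2, q.2)))

theorem measurable_area (A : PeriodicApprox L κ w) : Measurable A.area :=
  measurable_intervalIntegral 0 L A.measurable_length

theorem measurable_section (A : PeriodicApprox L κ w) (t x : ℝ) : Measurable (A.χ t x) :=
  A.meas_χ.comp (by fun_prop : Measurable fun y : ℝ => (t, x, y))

theorem χ_mem_Icc (A : PeriodicApprox L κ w) (t x y : ℝ) : A.χ t x y ∈ Icc (0 : ℝ) 1 := by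
  rcases A.χ_eq t x y with h | h <;> simp [h]

theorem length_mem_Icc (A : PeriodicApprox L κ w) (hL : 0 < L) (t x : ℝ) :
    ∫ y in (0 : ℝ)..L, A.χ t x y ∈ Icc 0 L := by
  simpa using intervalIntegral_mem_Icc hL.le (A.measurable_section t x) (A.χ_mem_Icc t x)

theorem area_mem_Icc (A : PeriodicApprox L κ w) (hL : 0 < L) (t : ℝ) :
    A.area t ∈ Icc 0 (L ^ 2) := by
  rw [sq]
  exact intervalIntegral_mem_Icc hL.le
    (A.measurable_length.comp (by fun_prop : Measurable fun x : ℝ => (t, x)))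
    (A.length_mem_Icc hL t)

theorem ofReal_double_integral (hL : 0 < L) {g : ℝ → ℝ → ℝ}
    (hg : Measurable fun q : ℝ × ℝ => g q.1 q.2) (h : ∀ x y, g x y ∈ Icc (0 : ℝ) 1) :
    ENNReal.ofReal (∫ x in (0 : ℝ)..L, ∫ y in (0 : ℝ)..L, g x y) =
      ∫⁻ x in Ico 0 L, (∫⁻ y in Ico 0 L, ENNReal.ofReal (g x y)) := by
  have hgx : ∀ x, Measurable (g x) := fun x =>
    hg.comp (by fun_prop : Measurable fun y : ℝ => (x, y))
  have hI : ∀ x, ∫ y in (0 : ℝ)..L, g x y ∈ Icc 0 L := fun x => by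
    simpa using intervalIntegral_mem_Icc hL.le (hgx x) (h x)
  have hm := measurable_intervalIntegral 0 L hg
  rw [intervalIntegral.integral_of_le hL.le, ← restrict_Ico_eq_restrict_Ioc,
    ofReal_integral_eq_lintegral_ofReal _ (Eventually.of_forall fun x => (hI x).1)]
  · exact lintegral_congr fun x => ofReal_intervalIntegral_eq_setLIntegral hL.le (hgx x) (h x)
  · refine Measure.integrableOn_of_bounded (M := L) (by simp) hm.aestronglyMeasurable ?_
    refine Eventually.of_forall fun x => ?_
    rw [Real.norm_eq_abs, abs_of_nonneg (hI x).1]; exact (hI x).2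

theorem lintegral_area (A : PeriodicApprox L κ w) (hL : 0 < L) :
    ∫⁻ t, ENNReal.ofReal (A.area t) = w := by
  refine (lintegral_congr fun t => ?_).trans A.lintegral_χ
  exact ofReal_double_integral hL
    (A.meas_χ.comp (by fun_prop : Measurable fun q : ℝ × ℝ => (t, q.1, q.2))) (A.χ_mem_Icc t)

set_option maxHeartbeats 1000000 in
theorem coarea_le (A : PeriodicApprox L κ w) (hL : 0 < L) (hLπ : L ^ 2 ≤ 4 * Real.pi) (hw : w ≠ ∞)
    {α β : ℝ → ℝ} (hα : Continuous α) (hβ : Continuous β) (hα0 : ∀ s, 0 ≤ α s)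
    (hβ0 : ∀ s, 0 ≤ β s) (hαβ : ∀ s, α s ^ 2 + β s ^ 2 ≤ 1) :
    ∀ᵐ t₀, 2 * ENNReal.ofReal (∫ s in (0 : ℝ)..A.area t₀, α s) +
      (∫⁻ t, ENNReal.ofReal (β (A.area t)) *
        ENNReal.ofReal √(A.area t * (L ^ 2 - A.area t))) ≤ κ := by
  set h : ℕ → ℝ → ℝ := fun k t => ∫ x in (0 : ℝ)..L, ∫ y in (0 : ℝ)..L, A.f k t x y with hh
  set h' : ℕ → ℝ → ℝ := fun k t => ∫ x in (0 : ℝ)..L, ∫ y in (0 : ℝ)..L, A.ft k t x y with hh'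
  set P : ℕ → ℝ → ℝ≥0∞ := fun k t => ∫⁻ x in Ico 0 L, (∫⁻ y in Ico 0 L,
    ENNReal.ofReal √(A.fx k t x y ^ 2 + A.fy k t x y ^ 2)) with hP
  have c1 : ∀ k, Continuous fun q : (ℝ × ℝ) × ℝ => A.f k q.1.1 q.1.2 q.2 := fun k =>
    (A.cont k).comp (by fun_prop : Continuous fun q : (ℝ × ℝ) × ℝ => (q.1.1, q.1.2, q.2))
  have c1' : ∀ k, Continuous fun q : (ℝ × ℝ) × ℝ => A.ft k q.1.1 q.1.2 q.2 := fun k =>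
    (A.cont_t k).comp (by fun_prop : Continuous fun q : (ℝ × ℝ) × ℝ => (q.1.1, q.1.2, q.2))
  have c2 : ∀ k, Continuous fun q : ℝ × ℝ => ∫ y in (0 : ℝ)..L, A.f k q.1 q.2 y := fun k =>
    intervalIntegral.continuous_parametric_intervalIntegral_of_continuous' (c1 k) 0 L
  have c2' : ∀ k, Continuous fun q : ℝ × ℝ => ∫ y in (0 : ℝ)..L, A.ft k q.1 q.2 y := fun k =>
    intervalIntegral.continuous_parametric_intervalIntegral_of_continuous' (c1' k) 0 L
  have c3' : ∀ k, Continuous (h' k) := fun k =>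
    intervalIntegral.continuous_parametric_intervalIntegral_of_continuous' (c2' k) 0 L
  have hd : ∀ k t, HasDerivAt (h k) (h' k t) t := fun k t => by
    refine hasDerivAt_intervalIntegral_of_continuous
      (F := fun t x => ∫ y in (0 : ℝ)..L, A.f k t x y)
      (F' := fun t x => ∫ y in (0 : ℝ)..L, A.ft k t x y) 0 L (c2 k) (c2' k) (fun t x => ?_) t
    refine hasDerivAt_intervalIntegral_of_continuous (F := fun t y => A.f k t x y)
      (F' := fun t y => A.ft k t x y) 0 L ?_ ?_ (fun t y => A.deriv_t k t x y) t
    · exact (A.cont k).comp (by fun_prop : Continuous fun q : ℝ × ℝ => (q.1, x, q.2))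
    · exact (A.cont_t k).comp (by fun_prop : Continuous fun q : ℝ × ℝ => (q.1, x, q.2))
  have c3 : ∀ k, Continuous (h k) := fun k =>
    continuous_iff_continuousAt.2 fun x => (hd k x).continuousAt
  have hf0 : ∀ k t x, ∫ y in (0 : ℝ)..L, A.f k t x y ∈ Icc 0 L := fun k t x => by
    simpa using intervalIntegral_mem_Icc hL.le
      ((A.cont k).comp (by fun_prop : Continuous fun y : ℝ => (t, x, y))).measurable
      (A.mem_Icc k t x)
  have h0 : ∀ k t, 0 ≤ h k t := fun k t =>
    intervalIntegral.integral_nonneg hL.le fun x _ => (hf0 k t x).1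
  have hlint : ∀ k, ∫⁻ t, ENNReal.ofReal (h k t) = w := fun k => by
    rw [← A.lintegral_f k]
    exact lintegral_congr fun t => ofReal_double_integral hL
      ((A.cont k).comp (by fun_prop : Continuous fun q : ℝ × ℝ => (t, q.1, q.2))).measurable
      (A.mem_Icc k t)
  have hconv : ∀ᵐ t, Tendsto (fun k => h k t) atTop (𝓝 (A.area t)) := by
    refine A.ae_tendsto.mono fun t ht => ?_
    refine tendsto_intervalIntegral_of_mem_Icc (C := L)
      (fun k => ((c2 k).comp (by fun_prop : Continuous fun x : ℝ => (t, x))).measurable)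
      (fun k x => hf0 k t x) (ht.mono fun x hx => ?_)
    exact tendsto_intervalIntegral_of_mem_Icc (C := 1)
      (fun k => ((A.cont k).comp (by fun_prop : Continuous fun y : ℝ => (t, x, y))).measurable)
      (fun k => A.mem_Icc k t x) hx
  have hPm0 : ∀ k, Measurable fun q : ℝ × ℝ × ℝ =>
      ENNReal.ofReal √(A.fx k q.1 q.2.1 q.2.2 ^ 2 + A.fy k q.1 q.2.1 q.2.2 ^ 2) := fun k => by
    have e1 := A.cont_x k
    have e2 := A.cont_y k
    exact (by fun_prop : Continuous fun q : ℝ × ℝ × ℝ =>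
      √(A.fx k q.1 q.2.1 q.2.2 ^ 2 + A.fy k q.1 q.2.1 q.2.2 ^ 2)).measurable.ennreal_ofReal
  have hPm1 : ∀ k, Measurable fun q : ℝ × ℝ => ∫⁻ y in Ico 0 L,
      ENNReal.ofReal √(A.fx k q.1 q.2 y ^ 2 + A.fy k q.1 q.2 y ^ 2) := fun k =>
    Measurable.lintegral_prod_right' (f := fun q : (ℝ × ℝ) × ℝ =>
      ENNReal.ofReal √(A.fx k q.1.1 q.1.2 q.2 ^ 2 + A.fy k q.1.1 q.1.2 q.2 ^ 2))
      ((hPm0 k).comp (by fun_prop : Measurable fun q : (ℝ × ℝ) × ℝ => (q.1.1, q.1.2, q.2)))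
  have hPm : ∀ k, Measurable (P k) := fun k => Measurable.lintegral_prod_right' (hPm1 k)
  have hPlim : ∀ᵐ t, ENNReal.ofReal √(A.area t * (L ^ 2 - A.area t)) ≤
      liminf (fun k => P k t) atTop := by
    refine A.ae_tendsto.mono fun t ht => ?_
    refine CoareaBound.sqrt_le hL hLπ
      (A.measurable_length.comp (by fun_prop : Measurable fun x : ℝ => (t, x)))
      (A.length_mem_Icc hL t) ?_
    have hq : Continuous fun q : ℝ × ℝ => (t, q.1, q.2) := by fun_prop
    exact coareaBound_of_tendsto (f := fun k => A.f k t) (fx := fun k => A.fx k t)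
      (fy := fun k => A.fy k t) hL (fun k => (A.cont k).comp hq) (fun k => (A.cont_x k).comp hq)
      (fun k => (A.cont_y k).comp hq) (fun k => A.deriv_x k t) (fun k => A.deriv_y k t)
      (fun k => A.mem_Icc k t) (fun k => A.per_x k t) (fun k => A.per_y k t) (A.χ_eq t) ht
  have hF := lintegral_mul_le_liminf hβ (fun k => (c3 k).measurable) hPm hconv hPlim
  have hsum : ∀ k, (∫⁻ t, ENNReal.ofReal (α (h k t)) * ENNReal.ofReal |h' k t|) +
      (∫⁻ t, ENNReal.ofReal (β (h k t)) * P k t) ≤ κ := fun k => by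
    have m0 : Measurable fun t => ENNReal.ofReal (α (h k t)) * ENNReal.ofReal |h' k t| :=
      (hα.comp (c3 k)).measurable.ennreal_ofReal.mul (c3' k).measurable.abs.ennreal_ofReal
    rw [← lintegral_add_left m0]
    refine le_trans (lintegral_mono fun t => ?_) (A.lintegral_R k).le
    have m1 : Measurable fun q : ℝ × ℝ => ENNReal.ofReal |A.ft k t q.1 q.2| := by
      have := A.cont_t k
      exact (by fun_prop : Continuous fun q : ℝ × ℝ => |A.ft k t q.1 q.2|).measurable.ennreal_ofReal
    have m1' : ∀ x, Measurable fun y => ENNReal.ofReal |A.ft k t x y| := fun x =>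
      m1.comp (by fun_prop : Measurable fun y : ℝ => (x, y))
    have e1 : ENNReal.ofReal |h' k t| ≤
        ∫⁻ x in Ico 0 L, (∫⁻ y in Ico 0 L, ENNReal.ofReal |A.ft k t x y|) :=
      (ofReal_abs_intervalIntegral_le hL.le).trans
        (lintegral_mono fun x => ofReal_abs_intervalIntegral_le hL.le)
    have m2 : ∀ x, Measurable fun y =>
        ENNReal.ofReal √(A.fx k t x y ^ 2 + A.fy k t x y ^ 2) := fun x =>
      (hPm0 k).comp (by fun_prop : Measurable fun y : ℝ => (t, x, y))
    calc _ ≤ ENNReal.ofReal (α (h k t)) *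
          (∫⁻ x in Ico 0 L, (∫⁻ y in Ico 0 L, ENNReal.ofReal |A.ft k t x y|)) +
          ENNReal.ofReal (β (h k t)) * P k t := by gcongr
      _ = ∫⁻ x in Ico 0 L, (∫⁻ y in Ico 0 L, (ENNReal.ofReal (α (h k t)) *
          ENNReal.ofReal |A.ft k t x y| + ENNReal.ofReal (β (h k t)) *
          ENNReal.ofReal √(A.fx k t x y ^ 2 + A.fy k t x y ^ 2))) := by
        have m3 : Measurable fun x => ∫⁻ y in Ico 0 L, ENNReal.ofReal |A.ft k t x y| :=
          Measurable.lintegral_prod_right' m1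
        have m4 : Measurable fun x => ∫⁻ y in Ico 0 L,
            ENNReal.ofReal √(A.fx k t x y ^ 2 + A.fy k t x y ^ 2) :=
          (hPm1 k).comp (by fun_prop : Measurable fun x : ℝ => (t, x))
        rw [← lintegral_const_mul _ m3, ← lintegral_const_mul _ m4,
          ← lintegral_add_left (m3.const_mul _)]
        refine lintegral_congr fun x => ?_
        rw [lintegral_add_left ((m1' x).const_mul _), lintegral_const_mul _ (m1' x),
          lintegral_const_mul _ (m2 x)]
      _ ≤ _ := by
        refine lintegral_mono fun x => lintegral_mono fun y => ?_
        refine le_trans (le_of_eq ?_) (A.grad_le k t x y _ _ (hα0 (h k t)) (hβ0 _) (hαβ _))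
        rw [ENNReal.ofReal_add (mul_nonneg (hα0 _) (abs_nonneg _))
            (mul_nonneg (hβ0 _) (Real.sqrt_nonneg _)), ENNReal.ofReal_mul (hα0 _),
          ENNReal.ofReal_mul (hβ0 _)]
  set G : ℝ → ℝ := fun a => ∫ s in (0 : ℝ)..a, α s with hG
  have hGc : Continuous G := intervalIntegral.continuous_primitive
    (fun a b => hα.intervalIntegrable a b) 0
  refine hconv.mono fun t₀ ht₀ => ?_
  have hGlim : 2 * ENNReal.ofReal (G (A.area t₀)) ≤
      liminf (fun k => ∫⁻ t, ENNReal.ofReal (α (h k t)) * ENNReal.ofReal |h' k t|) atTop := by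
    have h2 : Tendsto (fun k => 2 * ENNReal.ofReal (G (h k t₀))) atTop
        (𝓝 (2 * ENNReal.ofReal (G (A.area t₀)))) :=
      ENNReal.Tendsto.const_mul ((ENNReal.continuous_ofReal.tendsto _).comp
        ((hGc.tendsto _).comp ht₀)) (Or.inr (by simp))
    rw [← h2.liminf_eq]
    refine liminf_le_liminf (Eventually.of_forall fun k => ?_)
    have hsmall : ∀ s : Set ℝ, volume s = ∞ → MeasurableSet s → ∀ ε > 0, ∃ t ∈ s, G (h k t) < ε := by
      intro s hs hsm ε hε
      have hG0 : Tendsto G (𝓝 0) (𝓝 0) := by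
        have := hGc.tendsto 0
        simpa [hG] using this
      obtain ⟨δ, hδ, hδ'⟩ := Metric.eventually_nhds_iff.1 (hG0.eventually (gt_mem_nhds hε))
      obtain ⟨t, ht, ht'⟩ := exists_lt_of_lintegral_ne_top (h := h k) (by rw [hlint]; exact hw) hs hsm hδ
      refine ⟨t, ht, hδ' ?_⟩
      rw [Real.dist_eq, sub_zero, abs_of_nonneg (h0 k t)]
      exact ht'
    have h4 := two_mul_ofReal_le_lintegral_abs (t := t₀)
      (fun t => hasDerivAt_primitive_comp (c := 0) hα (hd k t))
      ((hα.comp (c3 k)).mul (c3' k)) (hsmall (Iio t₀) (by simp) measurableSet_Iio)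
      (hsmall (Ioi t₀) (by simp) measurableSet_Ioi)
    refine h4.trans_eq (lintegral_congr fun x => ?_)
    rw [abs_mul, abs_of_nonneg (hα0 _), ENNReal.ofReal_mul (hα0 _)]
  refine (le_liminf_add_of_le hGlim hF).trans ?_
  exact (liminf_le_liminf (Eventually.of_forall hsum)).trans_eq (by simp)

end PeriodicApprox

end Space

section Calibration

/-- The area, at height parameter `x`, of a slice of the comparison region of curvature `h`. -/
noncomputable def capArea (c h x : ℝ) : ℝ := c * (1 - x ^ 2) / (h ^ 2 + (1 - x ^ 2))

/-- The function whose Legendre transform bounds the perimeter. -/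
noncomputable def capEnergy (c h : ℝ) : ℝ := 2 * ∫ x in (0 : ℝ)..1, capArea c h x

/-- The weight of the horizontal part of the gradient. -/
noncomputable def capWeight (c h m s : ℝ) : ℝ := h * √(min (max s 0) m / (c - min (max s 0) m))

variable {c h m : ℝ}

theorem continuous_capWeight (hmc : m < c) : Continuous (capWeight c h m) := by
  unfold capWeight
  have : ∀ s : ℝ, c - min (max s 0) m ≠ 0 := fun s => by
    have := min_le_right (max s 0) m
    linarith
  exact continuous_const.mul (Continuous.sqrt (Continuous.div (by fun_prop) (by fun_prop) this))

theorem capWeight_nonneg (hh : 0 ≤ h) (s : ℝ) : 0 ≤ capWeight c h m s :=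
  mul_nonneg hh (Real.sqrt_nonneg _)

theorem capWeight_sq_le_one (hm0 : 0 < m) (hmc : m < c) (hh : h ^ 2 = (c - m) / m) (s : ℝ) :
    capWeight c h m s ^ 2 ≤ 1 := by
  unfold capWeight
  set b := min (max s 0) m with hb
  have h1 : b ≤ m := min_le_right _ _
  have h2 : 0 ≤ b := le_min (le_max_right _ _) hm0.le
  have h3 : 0 < c - b := by linarith
  rw [mul_pow, Real.sq_sqrt (by positivity), hh, div_mul_div_comm, div_le_one (by positivity)]
  nlinarith

theorem capWeight_mul_sqrt (hmc : m < c) {s : ℝ} (hs : s ∈ Icc 0 m) :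
    capWeight c h m s * √(s * (c - s)) = h * s := by
  have h3 : 0 < c - s := by linarith [hs.2]
  unfold capWeight
  rw [max_eq_left hs.1, min_eq_left hs.2, mul_assoc, ← Real.sqrt_mul (div_nonneg hs.1 h3.le)]
  congr 1
  rw [show s / (c - s) * (s * (c - s)) = s ^ 2 by field_simp, Real.sqrt_sq hs.1]

theorem hasDerivAt_capArea (hh : 0 < h) {x : ℝ} (hx : x ∈ Icc (0 : ℝ) 1) :
    HasDerivAt (capArea c h) (-2 * c * h ^ 2 * x / (h ^ 2 + (1 - x ^ 2)) ^ 2) x := by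
  have h0 : 0 < h ^ 2 + (1 - x ^ 2) := by nlinarith [hx.1, hx.2, pow_pos hh 2]
  have h1 : HasDerivAt (fun x : ℝ => 1 - x ^ 2) (-(2 * x)) x := by
    simpa using (hasDerivAt_pow 2 x).const_sub 1
  have h2 := (h1.const_mul c).div (h1.const_add (h ^ 2)) h0.ne'
  refine h2.congr_deriv ?_
  field_simp
  ring

theorem integral_sqrt_one_sub_capWeight (hc : 0 < c) (hm0 : 0 < m) (hmc : m < c) (hh0 : 0 < h)
    (hh : h ^ 2 = (c - m) / m) :
    ∫ s in (0 : ℝ)..m, √(1 - capWeight c h m s ^ 2) = ∫ x in (0 : ℝ)..1, capArea c h x := by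
  have hD : ∀ x ∈ Icc (0 : ℝ) 1, 0 < h ^ 2 + (1 - x ^ 2) := fun x hx => by
    nlinarith [hx.1, hx.2, pow_pos hh0 2]
  have hm : m = c / (h ^ 2 + 1) := by
    rw [hh]; field_simp; rw [sub_add_cancel, div_self hc.ne']
  have hu : uIcc (0 : ℝ) 1 = Icc 0 1 := uIcc_of_le zero_le_one
  have hcd : ContinuousOn (fun x => -2 * c * h ^ 2 * x / (h ^ 2 + (1 - x ^ 2)) ^ 2)
      (uIcc (0 : ℝ) 1) := by
    rw [hu]
    exact ContinuousOn.div (by fun_prop) (by fun_prop) fun x hx => (pow_pos (hD x hx) 2).ne'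
  have h1 := intervalIntegral.integral_comp_mul_deriv (a := 0) (b := 1)
    (g := fun s => √(1 - capWeight c h m s ^ 2)) (f := capArea c h)
    (fun x hx => hasDerivAt_capArea hh0 (hu ▸ hx)) hcd
    (by have := continuous_capWeight (h := h) hmc; fun_prop)
  have e0 : capArea c h 0 = m := by simp [capArea, hm]
  have e1 : capArea c h 1 = 0 := by simp [capArea]
  rw [e0, e1, intervalIntegral.integral_symm 0 m] at h1
  have h2 : ∀ x ∈ uIcc (0 : ℝ) 1, √(1 - capWeight c h m (capArea c h x) ^ 2) = x := by
    intro x hx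
    rw [hu] at hx
    have hDx := hD x hx
    have hx2 : 0 ≤ 1 - x ^ 2 := by nlinarith [hx.1, hx.2]
    have hmem : capArea c h x ∈ Icc 0 m := by
      unfold capArea
      refine ⟨by positivity, ?_⟩
      rw [hm, div_le_div_iff₀ hDx (by positivity)]
      nlinarith [mul_nonneg hc.le (mul_nonneg (sq_nonneg h) (sq_nonneg x))]
    unfold capWeight
    rw [max_eq_left hmem.1, min_eq_left hmem.2]
    have : capArea c h x / (c - capArea c h x) = (1 - x ^ 2) / h ^ 2 := by
      unfold capArea
      have : c - c * (1 - x ^ 2) / (h ^ 2 + (1 - x ^ 2)) = c * h ^ 2 / (h ^ 2 + (1 - x ^ 2)) := by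
        field_simp; ring
      rw [this]; field_simp
    rw [this, mul_pow, Real.sq_sqrt (by positivity)]
    rw [show 1 - h ^ 2 * ((1 - x ^ 2) / h ^ 2) = x ^ 2 by field_simp; ring, Real.sqrt_sq hx.1]
  have h3 : ∫ x in (0 : ℝ)..1, ((fun s => √(1 - capWeight c h m s ^ 2)) ∘ capArea c h) x *
      (-2 * c * h ^ 2 * x / (h ^ 2 + (1 - x ^ 2)) ^ 2) =
      ∫ x in (0 : ℝ)..1, x * (-2 * c * h ^ 2 * x / (h ^ 2 + (1 - x ^ 2)) ^ 2) :=
    intervalIntegral.integral_congr fun x hx => by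
      simp only [Function.comp_apply]; rw [h2 x hx]
  rw [h3] at h1
  have h4 := intervalIntegral.integral_mul_deriv_eq_deriv_mul (a := 0) (b := 1) (u := fun x : ℝ => x)
    (u' := fun _ => 1) (v := capArea c h) (fun x _ => hasDerivAt_id x)
    (fun x hx => hasDerivAt_capArea hh0 (hu ▸ hx)) (by simp) hcd.intervalIntegrable
  simp only [e0, e1, one_mul] at h4
  linarith

theorem capEnergy_zero : capEnergy c 0 = 2 * c := by
  unfold capEnergy
  have : ∫ x in (0 : ℝ)..1, capArea c 0 x = ∫ x in (0 : ℝ)..1, c := by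
    refine intervalIntegral.integral_congr_ae ?_
    have : ∀ᵐ x : ℝ, x ≠ 1 := by simp [ae_iff]
    filter_upwards [this] with x hx hx'
    rw [uIoc_of_le zero_le_one] at hx'
    have h1 : x < 1 := lt_of_le_of_ne hx'.2 hx
    have h2 : 1 - x ^ 2 ≠ 0 := by nlinarith [hx'.1]
    simp [capArea, h2]
  rw [this]; simp

/-- If the areas of the slices satisfy the coarea inequality, the perimeter is bounded below by a
value of the Legendre dual of `capEnergy`. -/
theorem exists_capEnergy_le {a : ℝ → ℝ} (hc : 0 < c) (ham : Measurable a)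
    (ha : ∀ t, a t ∈ Icc 0 c) {v : ℝ} (hv : 0 < v)
    (hav : ∫⁻ t, ENNReal.ofReal (a t) = ENNReal.ofReal v) {κ : ℝ≥0∞}
    (H : ∀ α β : ℝ → ℝ, Continuous α → Continuous β → (∀ s, 0 ≤ α s) → (∀ s, 0 ≤ β s) →
      (∀ s, α s ^ 2 + β s ^ 2 ≤ 1) → ∀ᵐ t₀, 2 * ENNReal.ofReal (∫ s in (0 : ℝ)..a t₀, α s) +
      (∫⁻ t, ENNReal.ofReal (β (a t)) * ENNReal.ofReal √(a t * (c - a t))) ≤ κ) :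
    ∃ h : ℝ, 0 ≤ h ∧ ENNReal.ofReal (capEnergy c h + h * v) ≤ κ := by
  have hbdd : IsBoundedUnder (· ≤ ·) (ae volume) a :=
    isBoundedUnder_of ⟨c, fun t => (ha t).2⟩
  have hcob : IsCoboundedUnder (· ≤ ·) (ae volume) a :=
    IsBoundedUnder.isCoboundedUnder_le (isBoundedUnder_of ⟨0, fun t => (ha t).1⟩)
  set m := essSup a volume with hm
  have hle : ∀ᵐ t, a t ≤ m := ae_le_essSup hbdd
  have hmc : m ≤ c := essSup_le_of_ae_le c (Eventually.of_forall fun t => (ha t).2) hcob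
  have hm0 : 0 < m := by
    by_contra hcon
    have : ∫⁻ t, ENNReal.ofReal (a t) = 0 := by
      rw [lintegral_eq_zero_iff ham.ennreal_ofReal]
      filter_upwards [hle] with t ht
      simpa using ht.trans (not_lt.1 hcon)
    rw [hav, ENNReal.ofReal_eq_zero] at this
    linarith
  have key : ∀ α β : ℝ → ℝ, Continuous α → Continuous β → (∀ s, 0 ≤ α s) → (∀ s, 0 ≤ β s) →
      (∀ s, α s ^ 2 + β s ^ 2 ≤ 1) → 2 * ENNReal.ofReal (∫ s in (0 : ℝ)..m, α s) +
      (∫⁻ t, ENNReal.ofReal (β (a t)) * ENNReal.ofReal √(a t * (c - a t))) ≤ κ := by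
    intro α β hα hβ hα0 hβ0 hαβ
    have h1 := H α β hα hβ hα0 hβ0 hαβ
    set B := ∫⁻ t, ENNReal.ofReal (β (a t)) * ENNReal.ofReal √(a t * (c - a t))
    have hGc : Continuous fun x => ∫ s in (0 : ℝ)..x, α s := intervalIntegral.continuous_primitive
      (fun a b => hα.intervalIntegrable a b) 0
    have hF : Tendsto (fun x => 2 * ENNReal.ofReal (∫ s in (0 : ℝ)..x, α s) + B) (𝓝 m)
        (𝓝 (2 * ENNReal.ofReal (∫ s in (0 : ℝ)..m, α s) + B)) :=
      (ENNReal.Tendsto.const_mul ((ENNReal.continuous_ofReal.tendsto _).comp (hGc.tendsto m))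
        (Or.inr (by simp))).add tendsto_const_nhds
    by_contra hcon
    obtain ⟨δ, hδ, hδ'⟩ := Metric.eventually_nhds_iff.1
      (hF.eventually (lt_mem_nhds (not_le.1 hcon)))
    have hfr : ∃ᵐ t, m - δ < a t :=
      frequently_lt_of_lt_limsup hcob (by rw [essSup] at hm; linarith)
    obtain ⟨t, ht, ht1, ht2⟩ := (hfr.and_eventually (h1.and hle)).exists
    exact absurd (hδ' (y := a t) (by rw [Real.dist_eq, abs_lt]; constructor <;> linarith)) (not_lt.2 ht1)
  rcases hmc.lt_or_eq with hmc | hmc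
  · set h := √((c - m) / m) with hh
    have hh0 : 0 < h := Real.sqrt_pos.2 (div_pos (by linarith) hm0)
    have hh2 : h ^ 2 = (c - m) / m := Real.sq_sqrt (div_pos (by linarith) hm0).le
    refine ⟨h, hh0.le, ?_⟩
    have hw := continuous_capWeight (h := h) hmc
    have hk := key (fun s => √(1 - capWeight c h m s ^ 2)) (capWeight c h m)
      (by fun_prop) hw (fun s => Real.sqrt_nonneg _) (capWeight_nonneg hh0.le) (fun s => by
        rw [Real.sq_sqrt (by linarith [capWeight_sq_le_one hm0 hmc hh2 s])]; linarith)
    rw [integral_sqrt_one_sub_capWeight hc hm0 hmc hh0 hh2] at hk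
    have hB : ∫⁻ t, ENNReal.ofReal (capWeight c h m (a t)) * ENNReal.ofReal √(a t * (c - a t)) =
        ENNReal.ofReal (h * v) := by
      rw [ENNReal.ofReal_mul hh0.le, ← hav, ← lintegral_const_mul _ ham.ennreal_ofReal]
      refine lintegral_congr_ae ?_
      filter_upwards [hle] with t ht
      rw [← ENNReal.ofReal_mul (capWeight_nonneg hh0.le _), capWeight_mul_sqrt hmc ⟨(ha t).1, ht⟩,
        ENNReal.ofReal_mul hh0.le]
    rw [hB] at hk
    refine (ENNReal.ofReal_add_le).trans (le_trans (le_of_eq ?_) hk)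
    rw [capEnergy, ENNReal.ofReal_mul (by norm_num)]
    simp
  · refine ⟨0, le_rfl, ?_⟩
    have hk := key (fun _ => 1) (fun _ => 0) (by fun_prop) (by fun_prop) (fun _ => by norm_num)
      (fun _ => le_rfl) (fun _ => by norm_num)
    rw [hmc] at hk
    refine le_trans (le_of_eq ?_) hk
    simp [capEnergy_zero, ENNReal.ofReal_mul]

theorem PeriodicApprox.exists_capEnergy_le {L v : ℝ} {κ : ℝ≥0∞}
    (A : PeriodicApprox L κ (ENNReal.ofReal v)) (hL : 0 < L) (hLπ : L ^ 2 ≤ 4 * Real.pi)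
    (hv : 0 < v) : ∃ h : ℝ, 0 ≤ h ∧ ENNReal.ofReal (capEnergy (L ^ 2) h + h * v) ≤ κ :=
  _root_.exists_capEnergy_le (by positivity) A.measurable_area (A.area_mem_Icc hL) hv
    (A.lintegral_area hL) fun _ _ hα hβ hα0 hβ0 hαβ =>
      A.coarea_le hL hLπ ENNReal.ofReal_ne_top hα hβ hα0 hβ0 hαβ

end Calibration

section Conformal

variable {X Y : Type*} [EMetricSpace X] [EMetricSpace Y] [MeasurableSpace X] [BorelSpace X]
  [MeasurableSpace Y] [BorelSpace Y]

/-- A map whose Lipschitz constant is pointwise controlled by `ρ` increases `d`-dimensional measure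
at most by the factor `ρ ^ d`. -/
theorem hausdorffMeasure_image_le_lintegral {f : X → Y} {ρ : X → ℝ≥0} {A : Set X} (d : ℕ)
    (hA : MeasurableSet A) (hρ : Measurable ρ) (hpos : ∀ x ∈ A, 0 < ρ x)
    (hf : ∀ x ∈ A, ∀ y ∈ A, edist (f x) (f y) ≤ max (ρ x) (ρ y) * edist x y) :
    (μH[d] : Measure Y) (f '' A) ≤ ∫⁻ x in A, (ρ x : ℝ≥0∞) ^ d ∂(μH[d] : Measure X) := by
  have key : ∀ θ : ℝ≥0, 1 < θ → (μH[d] : Measure Y) (f '' A) ≤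
      (θ : ℝ≥0∞) ^ d * ∫⁻ x in A, (ρ x : ℝ≥0∞) ^ d ∂(μH[d] : Measure X) := by
    intro θ hθ
    have hθ0 : 0 < θ := zero_lt_one.trans hθ
    set B : ℤ → Set X := fun n => A ∩ ρ ⁻¹' (Ico (θ ^ n) (θ ^ (n + 1))) with hB
    have hBm : ∀ n, MeasurableSet (B n) := fun n => hA.inter (hρ measurableSet_Ico)
    have hAB : A = ⋃ n, B n := by
      ext x
      simp only [hB, mem_iUnion, mem_inter_iff, mem_preimage]
      refine ⟨fun hx => ?_, fun ⟨n, hn⟩ => hn.1⟩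
      obtain ⟨n, hn⟩ := exists_mem_Ico_zpow (hpos x hx) hθ
      exact ⟨n, hx, hn⟩
    have hdisj : Pairwise (Function.onFun Disjoint B) := by
      intro i j hij
      refine Set.disjoint_left.2 fun x hi hj => hij ?_
      have h1 := hi.2.1.trans_lt hj.2.2
      have h2 := hj.2.1.trans_lt hi.2.2
      have h3 := (zpow_lt_zpow_iff_right₀ hθ).1 h1
      have h4 := (zpow_lt_zpow_iff_right₀ hθ).1 h2
      omega
    have hpiece : ∀ n, (μH[d] : Measure Y) (f '' B n) ≤
        (θ : ℝ≥0∞) ^ d * ∫⁻ x in B n, (ρ x : ℝ≥0∞) ^ d ∂(μH[d] : Measure X) := by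
      intro n
      have hL : LipschitzOnWith (θ ^ (n + 1)) f (B n) := by
        intro x hx y hy
        refine (hf x hx.1 y hy.1).trans ?_
        gcongr
        exact_mod_cast max_le hx.2.2.le hy.2.2.le
      refine (hL.hausdorffMeasure_image_le (Nat.cast_nonneg d)).trans ?_
      have h1 : ∫⁻ x in B n, ((θ : ℝ≥0∞) ^ n) ^ d ∂(μH[d] : Measure X) ≤
          ∫⁻ x in B n, (ρ x : ℝ≥0∞) ^ d ∂(μH[d] : Measure X) := by
        refine setLIntegral_mono' (hBm n) fun x hx => ?_
        gcongr
        rw [← ENNReal.coe_zpow hθ0.ne']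
        exact_mod_cast hx.2.1
      rw [lintegral_const, Measure.restrict_apply MeasurableSet.univ, univ_inter] at h1
      refine le_trans (le_of_eq ?_) (mul_le_mul_right h1 _)
      rw [ENNReal.rpow_natCast, ENNReal.coe_zpow hθ0.ne', ENNReal.zpow_add (by simpa using hθ0.ne')
        (by simp), zpow_one, mul_pow]
      ring
    calc (μH[d] : Measure Y) (f '' A) = (μH[d] : Measure Y) (⋃ n, f '' B n) := by
          rw [hAB, image_iUnion]
      _ ≤ ∑' n, (μH[d] : Measure Y) (f '' B n) := measure_iUnion_le _
      _ ≤ ∑' n, (θ : ℝ≥0∞) ^ d * ∫⁻ x in B n, (ρ x : ℝ≥0∞) ^ d ∂(μH[d] : Measure X) :=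
          ENNReal.tsum_le_tsum hpiece
      _ = _ := by
          rw [ENNReal.tsum_mul_left, ← lintegral_iUnion hBm hdisj, ← hAB]
  set I := ∫⁻ x in A, (ρ x : ℝ≥0∞) ^ d ∂(μH[d] : Measure X)
  have hlim : Tendsto (fun θ : ℝ≥0 => (θ : ℝ≥0∞) ^ d * I) (𝓝[>] 1) (𝓝 ((1 : ℝ≥0) ^ d * I)) := by
    have h1 : Tendsto (fun θ : ℝ≥0 => ((θ ^ d : ℝ≥0) : ℝ≥0∞)) (𝓝[>] 1) (𝓝 ((1 ^ d : ℝ≥0) : ℝ≥0∞)) :=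
      ENNReal.tendsto_coe.2 (((continuous_pow d).tendsto 1).mono_left nhdsWithin_le_nhds)
    simpa using ENNReal.Tendsto.mul_const (b := I) h1 (Or.inl (by simp))
  have := ge_of_tendsto hlim (eventually_nhdsWithin_of_forall fun θ hθ => key θ hθ)
  simpa using this

theorem euclideanHausdorffMeasure_image_le_lintegral {f : X → Y} {ρ : X → ℝ≥0} {A : Set X} (d : ℕ)
    (hA : MeasurableSet A) (hρ : Measurable ρ) (hpos : ∀ x ∈ A, 0 < ρ x)
    (hf : ∀ x ∈ A, ∀ y ∈ A, edist (f x) (f y) ≤ max (ρ x) (ρ y) * edist x y) :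
    (μHE[d] : Measure Y) (f '' A) ≤ ∫⁻ x in A, (ρ x : ℝ≥0∞) ^ d ∂(μHE[d] : Measure X) := by
  have h := hausdorffMeasure_image_le_lintegral d hA hρ hpos hf
  simp only [Measure.euclideanHausdorffMeasure_def, Measure.smul_apply, Measure.restrict_smul,
    lintegral_smul_measure]
  gcongr

end Conformal

section HyperbolicBound

theorem log_sub_log_sq_le {s t : ℝ} (hs : 0 < s) (ht : 0 < t) :
    (Real.log s - Real.log t) ^ 2 ≤ (s - t) ^ 2 / (s * t) := by
  wlog h : t ≤ s generalizing s t
  · have := this ht hs (le_of_not_ge h)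
    rwa [mul_comm t s, sub_sq_comm t, sub_sq_comm (Real.log t)] at this
  set x := Real.log s with hx
  set y := Real.log t with hy
  have hs' : s = Real.exp x := (Real.exp_log hs).symm
  have ht' : t = Real.exp y := (Real.exp_log ht).symm
  have hxy : y ≤ x := Real.log_le_log ht h
  have h1 : (x - y) / 2 ≤ Real.sinh ((x - y) / 2) := Real.self_le_sinh_iff.2 (by linarith)
  have h2 : (s - t) ^ 2 / (s * t) = (2 * Real.sinh ((x - y) / 2)) ^ 2 := by
    rw [div_eq_iff (by positivity), hs', ht', Real.sinh_eq]
    have e1 : Real.exp x = Real.exp (x / 2) ^ 2 := by rw [← Real.exp_nat_mul]; congr 1; push_cast; ring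
    have e2 : Real.exp y = Real.exp (y / 2) ^ 2 := by rw [← Real.exp_nat_mul]; congr 1; push_cast; ring
    rw [show -((x - y) / 2) = y / 2 - x / 2 by ring, show (x - y) / 2 = x / 2 - y / 2 by ring,
      Real.exp_sub, Real.exp_sub, e1, e2]
    have := (Real.exp_pos (x / 2)).ne'
    have := (Real.exp_pos (y / 2)).ne'
    field_simp
  rw [h2]
  nlinarith

theorem abs_exp_sub_exp_le (s t : ℝ) :
    |Real.exp s - Real.exp t| ≤ max (Real.exp s) (Real.exp t) * |s - t| := by
  wlog h : t ≤ s generalizing s t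
  · rw [abs_sub_comm, max_comm, abs_sub_comm s]; exact this t s (le_of_not_ge h)
  rw [max_eq_left (Real.exp_le_exp.2 h), abs_of_nonneg (sub_nonneg.2 (Real.exp_le_exp.2 h)),
    abs_of_nonneg (sub_nonneg.2 h)]
  have h1 := Real.add_one_le_exp (t - s)
  have h2 : Real.exp t = Real.exp s * Real.exp (t - s) := by rw [← Real.exp_add]; congr 1; ring
  rw [h2]
  nlinarith [Real.exp_pos s]

end HyperbolicBound

section Stereographic

theorem euclideanHausdorffMeasure_image_le_lintegral_ofReal {X Y : Type*} [MetricSpace X]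
    [MetricSpace Y] [MeasurableSpace X] [BorelSpace X] [MeasurableSpace Y] [BorelSpace Y]
    {f : X → Y} {ρ : X → ℝ} {A : Set X} (d : ℕ)
    (hA : MeasurableSet A) (hρ : Measurable ρ) (hpos : ∀ x ∈ A, 0 < ρ x)
    (hf : ∀ x ∈ A, ∀ y ∈ A, dist (f x) (f y) ≤ max (ρ x) (ρ y) * dist x y) :
    (μHE[d] : Measure Y) (f '' A) ≤
      ∫⁻ x in A, ENNReal.ofReal (ρ x ^ d) ∂(μHE[d] : Measure X) := by
  refine (euclideanHausdorffMeasure_image_le_lintegral (ρ := fun x => (ρ x).toNNReal) d hA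
    hρ.real_toNNReal (fun x hx => Real.toNNReal_pos.2 (hpos x hx)) fun x hx y hy => ?_).trans
      (le_of_eq (setLIntegral_congr_fun hA fun x hx => ?_))
  · rw [edist_dist, edist_dist]
    refine (ENNReal.ofReal_le_ofReal (hf x hx y hy)).trans (le_of_eq ?_)
    rw [ENNReal.ofReal_mul (le_max_of_le_left (hpos x hx).le),
      Monotone.map_max (f := ENNReal.ofReal) fun a b h => ENNReal.ofReal_le_ofReal h]
    rfl
  · rw [ENNReal.ofReal_pow (hpos x hx).le]; rfl

theorem EucSp.dist_three_sq (p q : EucSp 3) :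
    dist p q ^ 2 = (p 0 - q 0) ^ 2 + (p 1 - q 1) ^ 2 + (p 2 - q 2) ^ 2 := by
  rw [EuclideanSpace.dist_eq, Real.sq_sqrt (by positivity), Fin.sum_univ_three]
  simp [Real.dist_eq, sq_abs]

theorem EucSp.norm_three_sq (p : EucSp 3) : ‖p‖ ^ 2 = p 0 ^ 2 + p 1 ^ 2 + p 2 ^ 2 := by
  have := EucSp.dist_three_sq p 0
  simpa using this

theorem Sph2.sum_sq (z : Sph2) : z.1 0 ^ 2 + z.1 1 ^ 2 + z.1 2 ^ 2 = 1 := by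
  rw [← EucSp.norm_three_sq, mem_sphere_zero_iff_norm.1 z.2]; norm_num

/-- The point of the unit sphere with the given coordinates. -/
def Sph2.mk (x y z : ℝ) (h : x ^ 2 + y ^ 2 + z ^ 2 = 1) : Sph2 :=
  ⟨!₂[x, y, z], mem_sphere_zero_iff_norm.2 (by
    have := EucSp.norm_three_sq !₂[x, y, z]
    simp only [Matrix.cons_val_zero, Matrix.cons_val_one, Matrix.cons_val] at this
    rw [h] at this
    exact (pow_eq_one_iff_of_nonneg (norm_nonneg _) two_ne_zero).1 this)⟩

@[simp] theorem Sph2.mk_zero (x y z : ℝ) (h) : (Sph2.mk x y z h).1 0 = x := rfl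
@[simp] theorem Sph2.mk_one (x y z : ℝ) (h) : (Sph2.mk x y z h).1 1 = y := rfl
@[simp] theorem Sph2.mk_two (x y z : ℝ) (h) : (Sph2.mk x y z h).1 2 = z := rfl

theorem Sph2.ext_coord {z w : Sph2} (h0 : z.1 0 = w.1 0) (h1 : z.1 1 = w.1 1)
    (h2 : z.1 2 = w.1 2) : z = w := by
  apply Subtype.ext
  ext i
  fin_cases i <;> assumption

theorem Sph2.dist_sq (p q : Sph2) : dist p q ^ 2 =
    (p.1 0 - q.1 0) ^ 2 + (p.1 1 - q.1 1) ^ 2 + (p.1 2 - q.1 2) ^ 2 :=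
  EucSp.dist_three_sq _ _

/-- The inverse of the stereographic projection. -/
noncomputable def stereo (w : ℂ) : Sph2 :=
  Sph2.mk (2 * w.re / (1 + Complex.normSq w)) (2 * w.im / (1 + Complex.normSq w))
    ((Complex.normSq w - 1) / (1 + Complex.normSq w)) (by
      have h := Complex.normSq_apply w
      have h0 : 0 < 1 + Complex.normSq w := by linarith [Complex.normSq_nonneg w]
      field_simp
      rw [h]; ring)

theorem dist_stereo_sq (w z : ℂ) : dist (stereo w) (stereo z) ^ 2 =
    2 / (1 + Complex.normSq w) * (2 / (1 + Complex.normSq z)) * dist w z ^ 2 := by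
  have h0 : 0 < 1 + Complex.normSq w := by linarith [Complex.normSq_nonneg w]
  have h1 : 0 < 1 + Complex.normSq z := by linarith [Complex.normSq_nonneg z]
  rw [Sph2.dist_sq, Complex.dist_eq, ← Complex.normSq_eq_norm_sq]
  simp only [stereo, Sph2.mk_zero, Sph2.mk_one, Sph2.mk_two]
  have e1 := Complex.normSq_apply w
  have e2 := Complex.normSq_apply z
  have e3 := Complex.normSq_apply (w - z)
  simp only [Complex.sub_re, Complex.sub_im] at e3
  rw [e3]
  field_simp
  rw [e1, e2]
  ring

theorem le_max_mul_of_sq_le {a b c d : ℝ} (ha : 0 ≤ a) (hb : 0 ≤ b) (hd : 0 ≤ d)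
    (h : c ^ 2 ≤ a * b * d ^ 2) : c ≤ max a b * d := by
  refine le_of_sq_le_sq ?_ (by positivity)
  refine h.trans ?_
  rw [mul_pow, sq (max a b)]
  gcongr
  · exact le_max_left _ _
  · exact le_max_right _ _

theorem exists_stereo_eq {z : Sph2} (hz : z.1 2 ≠ 1) : ∃ w, stereo w = z := by
  have h := z.sum_sq
  have h1 : 1 - z.1 2 ≠ 0 := sub_ne_zero.2 hz.symm
  refine ⟨⟨z.1 0 / (1 - z.1 2), z.1 1 / (1 - z.1 2)⟩, ?_⟩
  set w : ℂ := ⟨z.1 0 / (1 - z.1 2), z.1 1 / (1 - z.1 2)⟩ with hw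
  have hN : Complex.normSq w * (1 - z.1 2) = 1 + z.1 2 := by
    rw [Complex.normSq_apply]
    simp only [hw]
    field_simp
    linarith
  have hD : 1 + Complex.normSq w ≠ 0 := by linarith [Complex.normSq_nonneg w]
  have hre : w.re * (1 - z.1 2) = z.1 0 := by simp only [hw]; field_simp
  have him : w.im * (1 - z.1 2) = z.1 1 := by simp only [hw]; field_simp
  refine Sph2.ext_coord ?_ ?_ ?_ <;> simp only [stereo, Sph2.mk_zero, Sph2.mk_one, Sph2.mk_two] <;>
    rw [div_eq_iff hD] <;> apply mul_right_cancel₀ h1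
  · linear_combination 2 * hre - z.1 0 * hN
  · linear_combination 2 * him - z.1 1 * hN
  · linear_combination hN - z.1 2 * hN

theorem continuous_stereo : Continuous stereo := by
  refine Continuous.subtype_mk ?_ _
  have h : ∀ w : ℂ, 1 + Complex.normSq w ≠ 0 := fun w => by linarith [Complex.normSq_nonneg w]
  refine (PiLp.continuous_toLp 2 _).comp (continuous_pi fun i => ?_)
  have hc := Complex.continuous_normSq
  have hr := Complex.continuous_re
  have hi := Complex.continuous_im
  fin_cases i
  · exact Continuous.div (by fun_prop) (by fun_prop) h
  · exact Continuous.div (by fun_prop) (by fun_prop) h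
  · exact Continuous.div (by fun_prop) (by fun_prop) h

theorem measure_sph2_le :
    (μHE[2] : Measure Sph2) ≤ ((volume : Measure ℂ).withDensity fun w =>
      ENNReal.ofReal ((2 / (1 + Complex.normSq w)) ^ 2)).map stereo := by
  have hpos : ∀ w, 0 < 2 / (1 + Complex.normSq w) := fun w => by
    have := Complex.normSq_nonneg w
    positivity
  have hc := Complex.continuous_normSq
  have hc' : Continuous fun w => 2 / (1 + Complex.normSq w) :=
    Continuous.div (by fun_prop) (by fun_prop) fun w => by linarith [Complex.normSq_nonneg w]
  refine Measure.le_iff.2 fun s hs => ?_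
  rw [Measure.map_apply continuous_stereo.measurable hs,
    withDensity_apply _ (continuous_stereo.measurable hs)]
  have hvol : (μHE[2] : Measure ℂ) = volume := by
    have := InnerProductSpace.euclideanHausdorffMeasure_eq_volume (V := ℂ)
    rwa [Complex.finrank_real_complex] at this
  have h1 := euclideanHausdorffMeasure_image_le_lintegral_ofReal (f := stereo) 2
    (continuous_stereo.measurable hs) hc'.measurable (fun x _ => hpos x) fun x _ y _ =>
      le_max_mul_of_sq_le (hpos x).le (hpos y).le dist_nonneg (dist_stereo_sq x y).le
  rw [hvol] at h1
  refine le_trans ?_ h1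
  have hsub : s ⊆ stereo '' (stereo ⁻¹' s) ∪ {Sph2.mk 0 0 1 (by norm_num)} := by
    intro z hz
    by_cases h : z.1 2 = 1
    · right
      have := z.sum_sq
      rw [h] at this
      exact Sph2.ext_coord (by simp; nlinarith [sq_nonneg (z.1 0), sq_nonneg (z.1 1)])
        (by simp; nlinarith [sq_nonneg (z.1 0), sq_nonneg (z.1 1)]) h
    · left
      obtain ⟨w, rfl⟩ := exists_stereo_eq h
      exact ⟨w, hz, rfl⟩
  have hpt : (μHE[2] : Measure Sph2) {Sph2.mk 0 0 1 (by norm_num)} = 0 := by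
    have := Measure.nullSingletonClass_hausdorff Sph2 (d := ((2 : ℕ) : ℝ)) (by norm_num)
    rw [Measure.euclideanHausdorffMeasure_def, Measure.smul_apply, measure_singleton, smul_zero]
  refine (measure_mono hsub).trans ((measure_union_le _ _).trans ?_)
  rw [hpt, add_zero]

/-- Archimedes' hat box theorem, as an inequality. -/
theorem lintegral_sph2_le {G : ℝ → ℝ≥0∞} (hG : Measurable G) :
    ∫⁻ z : Sph2, G (z.1 2) ∂μHE[2] ≤ ENNReal.ofReal (2 * Real.pi) * ∫⁻ x in Ioo (-1) 1, G x := by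
  have hz : Measurable fun z : Sph2 => z.1 2 :=
    (by fun_prop : Continuous fun z : Sph2 => z.1 2).measurable
  have hD : Measurable fun w : ℂ => ENNReal.ofReal ((2 / (1 + Complex.normSq w)) ^ 2) := by
    have := Complex.continuous_normSq.measurable
    fun_prop
  have hD' : ∀ r : ℝ, 0 < r ^ 2 + 1 := fun r => by positivity
  refine (lintegral_mono' measure_sph2_le le_rfl).trans ?_
  have hGz : Measurable fun z : Sph2 => G (z.1 2) := hG.comp hz
  have hGs : Measurable fun w => G ((stereo w).1 2) := hGz.comp continuous_stereo.measurable
  rw [lintegral_map hGz continuous_stereo.measurable,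
    lintegral_withDensity_eq_lintegral_mul _ hD hGs,
    ← Complex.lintegral_comp_polarCoord_symm]
  set φ : ℝ → ℝ := fun r => (r ^ 2 - 1) / (r ^ 2 + 1) with hφ
  have hφ' : ∀ r, HasDerivAt φ (4 * r / (r ^ 2 + 1) ^ 2) r := fun r => by
    have h1 := ((hasDerivAt_pow 2 r).sub_const 1).div ((hasDerivAt_pow 2 r).add_const 1) (hD' r).ne'
    refine h1.congr_deriv ?_
    push_cast
    ring
  have hφinj : InjOn φ (Ioi 0) := by
    intro r hr s hs h
    simp only [hφ] at h
    rw [div_eq_div_iff (hD' r).ne' (hD' s).ne'] at h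
    have : r ^ 2 = s ^ 2 := by linarith
    exact (pow_left_inj₀ (mem_Ioi.1 hr).le (mem_Ioi.1 hs).le two_ne_zero).1 this
  have hcv := lintegral_image_eq_lintegral_abs_deriv_mul measurableSet_Ioi
    (fun r _ => (hφ' r).hasDerivWithinAt) hφinj G
  have hsub : φ '' Ioi 0 ⊆ Ioo (-1) 1 := by
    rintro _ ⟨r, hr, rfl⟩
    have := pow_pos (mem_Ioi.1 hr) 2
    constructor
    · simp only [hφ]; rw [lt_div_iff₀ (hD' r)]; linarith
    · simp only [hφ]; rw [div_lt_iff₀ (hD' r)]; linarith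
  have hpt : ∀ p ∈ polarCoord.target, ENNReal.ofReal p.1 • ((fun w : ℂ =>
      ENNReal.ofReal ((2 / (1 + Complex.normSq w)) ^ 2)) * fun w => G ((stereo w).1 2))
        (Complex.polarCoord.symm p) =
      ENNReal.ofReal |4 * p.1 / (p.1 ^ 2 + 1) ^ 2| * G (φ p.1) := by
    rintro ⟨r, θ⟩ hp
    have hr : 0 < r := hp.1
    have hN : Complex.normSq (Complex.polarCoord.symm (r, θ)) = r ^ 2 := by
      rw [Complex.normSq_eq_norm_sq, Complex.norm_polarCoord_symm, sq_abs]
    simp only [Pi.mul_apply, stereo, Sph2.mk_two, hN, smul_eq_mul, hφ]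
    rw [← mul_assoc, ← ENNReal.ofReal_mul hr.le, add_comm (1 : ℝ), abs_of_nonneg (by positivity)]
    congr 2
    field_simp
    norm_num
  have htgt : polarCoord.target = Ioi 0 ×ˢ Ioo (-Real.pi) Real.pi := rfl
  have hpt' := setLIntegral_congr_fun (μ := volume) (polarCoord.open_target.measurableSet) hpt
  refine (le_of_eq hpt').trans ?_
  have hm : Measurable fun r : ℝ => ENNReal.ofReal |4 * r / (r ^ 2 + 1) ^ 2| * G (φ r) := by
    have hφm : Measurable φ := (continuous_iff_continuousAt.2 fun r => (hφ' r).continuousAt).measurable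
    fun_prop
  rw [htgt, Measure.volume_eq_prod, ← Measure.prod_restrict,
    lintegral_prod _ (by fun_prop)]
  simp only [lintegral_const, Measure.restrict_apply MeasurableSet.univ, univ_inter,
    Real.volume_Ioo]
  rw [lintegral_mul_const _ hm, ← hcv, mul_comm]
  gcongr
  linarith

end Stereographic

section SphericalCoordinates

theorem lintegral_complex_radial {g : ℝ → ℝ≥0∞} (hg : Measurable g) :
    ∫⁻ w : ℂ, g ‖w‖ = ENNReal.ofReal (2 * Real.pi) * ∫⁻ r in Ioi (0 : ℝ), ENNReal.ofReal r * g r := by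
  rw [← Complex.lintegral_comp_polarCoord_symm]
  have hpt : ∀ p ∈ polarCoord.target, ENNReal.ofReal p.1 • g ‖Complex.polarCoord.symm p‖ =
      ENNReal.ofReal p.1 * g p.1 := by
    rintro ⟨r, θ⟩ hp
    have hr : 0 < r := hp.1
    rw [Complex.norm_polarCoord_symm, abs_of_pos hr, smul_eq_mul]
  have htgt : polarCoord.target = Ioi 0 ×ˢ Ioo (-Real.pi) Real.pi := rfl
  rw [setLIntegral_congr_fun (μ := volume) (polarCoord.open_target.measurableSet) hpt, htgt,
    Measure.volume_eq_prod, ← Measure.prod_restrict, lintegral_prod _ (by fun_prop)]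
  simp only [lintegral_const, Measure.restrict_apply MeasurableSet.univ, univ_inter,
    Real.volume_Ioo]
  rw [lintegral_mul_const _ (by fun_prop), mul_comm]
  congr 2
  ring

theorem lintegral_radial_shift (z : ℝ) {g : ℝ → ℝ≥0∞} :
    ∫⁻ r in Ioi (0 : ℝ), ENNReal.ofReal r * g √(z ^ 2 + r ^ 2) =
      ∫⁻ s in Ioi |z|, ENNReal.ofReal s * g s := by
  have hpos : ∀ r ∈ Ioi (0 : ℝ), 0 < z ^ 2 + r ^ 2 := fun r hr => by
    have := pow_pos (mem_Ioi.1 hr) 2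
    positivity
  set φ : ℝ → ℝ := fun r => √(z ^ 2 + r ^ 2) with hφ
  have hd : ∀ r ∈ Ioi (0 : ℝ), HasDerivWithinAt φ (r / φ r) (Ioi 0) r := fun r hr => by
    have h1 := (((hasDerivAt_pow 2 r).const_add (z ^ 2)).sqrt (hpos r hr).ne').hasDerivWithinAt
      (s := Ioi 0)
    refine h1.congr_deriv ?_
    simp only [hφ]
    push_cast
    field_simp
  have hinj : InjOn φ (Ioi 0) := by
    intro r hr s hs h
    have := (Real.sqrt_inj (hpos r hr).le (hpos s hs).le).1 h
    exact (pow_left_inj₀ (mem_Ioi.1 hr).le (mem_Ioi.1 hs).le two_ne_zero).1 (by linarith)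
  have himg : φ '' Ioi 0 = Ioi |z| := by
    ext s
    simp only [mem_image, mem_Ioi, hφ]
    constructor
    · rintro ⟨r, hr, rfl⟩
      refine Real.lt_sqrt_of_sq_lt ?_
      rw [sq_abs]
      have := pow_pos hr 2
      linarith
    · intro hs
      have h0 := abs_nonneg z
      have hsq : z ^ 2 < s ^ 2 := sq_lt_sq.2 (hs.trans_le (le_abs_self s))
      refine ⟨√(s ^ 2 - z ^ 2), Real.sqrt_pos.2 (by linarith), ?_⟩
      rw [Real.sq_sqrt (by linarith)]
      rw [show z ^ 2 + (s ^ 2 - z ^ 2) = s ^ 2 by ring]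
      exact Real.sqrt_sq (h0.trans hs.le)
  have := lintegral_image_eq_lintegral_abs_deriv_mul measurableSet_Ioi hd hinj
    (fun s => ENNReal.ofReal s * g s)
  rw [himg] at this
  rw [this]
  refine setLIntegral_congr_fun measurableSet_Ioi fun r hr => ?_
  have hφp : 0 < φ r := Real.sqrt_pos.2 (hpos r hr)
  have hr' : 0 < r := hr
  rw [← mul_assoc, ← ENNReal.ofReal_mul (abs_nonneg _), abs_of_pos (by positivity),
    div_mul_cancel₀ _ hφp.ne']

theorem lintegral_eucSp_three {g : ℝ → ℝ → ℝ≥0∞} (hg : Measurable fun p : ℝ × ℝ => g p.1 p.2) :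
    ∫⁻ q : EucSp 3, g ‖q‖ (q 2) = ∫⁻ z : ℝ, ∫⁻ w : ℂ, g √(z ^ 2 + ‖w‖ ^ 2) z := by
  have h1 := PiLp.volume_preserving_ofLp (Fin 3)
  have h2 := volume_preserving_piFinSuccAbove (fun _ : Fin 3 => ℝ) 2
  have h3 := (MeasurePreserving.id (volume : Measure ℝ)).prod
    Complex.volume_preserving_equiv_pi.symm
  have h := h3.comp (h2.comp h1)
  have hm : Measurable fun p : ℝ × ℂ => g √(p.1 ^ 2 + ‖p.2‖ ^ 2) p.1 := by
    have : Measurable fun p : ℝ × ℂ => (√(p.1 ^ 2 + ‖p.2‖ ^ 2), p.1) := by fun_prop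
    exact hg.comp this
  have h4 := h.lintegral_comp hm
  rw [← lintegral_prod _ hm.aemeasurable]
  refine Eq.trans (lintegral_congr fun q => ?_) h4
  have e : ‖q‖ = √(q 2 ^ 2 + (q 0 ^ 2 + q 1 ^ 2)) := by
    rw [eq_comm, Real.sqrt_eq_iff_mul_self_eq (by positivity) (norm_nonneg _), ← sq,
      EucSp.norm_three_sq]
    ring
  rw [e]
  simp only [Function.comp, Prod.map, Complex.norm_eq_sqrt_sq_add_sq, id]
  rw [Real.sq_sqrt (by positivity)]
  have a1 : ((MeasurableEquiv.piFinSuccAbove (fun _ : Fin 3 => ℝ) 2) q.ofLp).1 = q 2 := rfl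
  have a2 : ((MeasurableEquiv.piFinSuccAbove (fun _ : Fin 3 => ℝ) 2) q.ofLp).2 = ![q 0, q 1] := by
    funext i
    fin_cases i <;> rfl
  rw [a1, a2, Complex.measurableEquivPi_symm_apply]
  simp

theorem lintegral_swap_cone {f : ℝ → ℝ → ℝ≥0∞} (hf : Measurable fun p : ℝ × ℝ => f p.1 p.2) :
    ∫⁻ z : ℝ, (∫⁻ s in Ioi |z|, ENNReal.ofReal s * f s z) =
      ∫⁻ s in Ioi (0 : ℝ), ENNReal.ofReal (s ^ 2) * ∫⁻ x in Ioo (-1) 1, f s (s * x) := by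
  have hind : ∀ z s : ℝ, (Ioi |z|).indicator (fun s => ENNReal.ofReal s * f s z) s =
      (Ioi 0).indicator (fun s => (Ioo (-s) s).indicator (fun z => ENNReal.ofReal s * f s z) z) s := by
    intro z s
    by_cases h : |z| < s
    · have h0 : 0 < s := (abs_nonneg z).trans_lt h
      rw [indicator_of_mem (mem_Ioi.2 h), indicator_of_mem (mem_Ioi.2 h0),
        indicator_of_mem (mem_Ioo.2 (abs_lt.1 h))]
    · rw [indicator_of_notMem (by simpa using h)]
      symm
      by_cases h0 : 0 < s
      · rw [indicator_of_mem (mem_Ioi.2 h0), indicator_of_notMem fun h' => h (abs_lt.2 (mem_Ioo.1 h'))]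
      · rw [indicator_of_notMem (by simpa using h0)]
  have hS : MeasurableSet {p : ℝ × ℝ | |p.1| < p.2} :=
    measurableSet_lt (by fun_prop) (by fun_prop)
  have hm : Measurable fun p : ℝ × ℝ =>
      (Ioi |p.1|).indicator (fun s => ENNReal.ofReal s * f s p.1) p.2 := by
    have h2 : Measurable fun p : ℝ × ℝ => ENNReal.ofReal p.2 * f p.2 p.1 := by
      have := hf.comp measurable_swap
      exact (by fun_prop : Measurable fun p : ℝ × ℝ => ENNReal.ofReal p.2).mul this
    exact h2.indicator hS
  calc ∫⁻ z : ℝ, (∫⁻ s in Ioi |z|, ENNReal.ofReal s * f s z)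
      = ∫⁻ z : ℝ, ∫⁻ s, (Ioi |z|).indicator (fun s => ENNReal.ofReal s * f s z) s := by
        refine lintegral_congr fun z => ?_
        rw [lintegral_indicator measurableSet_Ioi]
    _ = ∫⁻ s : ℝ, ∫⁻ z, (Ioi |z|).indicator (fun s => ENNReal.ofReal s * f s z) s :=
        lintegral_lintegral_swap hm.aemeasurable
    _ = ∫⁻ s in Ioi (0 : ℝ), ∫⁻ z in Ioo (-s) s, ENNReal.ofReal s * f s z := by
        rw [← lintegral_indicator measurableSet_Ioi]
        refine lintegral_congr fun s => ?_
        simp_rw [hind]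
        by_cases h0 : s ∈ Ioi (0 : ℝ)
        · simp_rw [indicator_of_mem h0]
          rw [lintegral_indicator measurableSet_Ioo]
        · simp_rw [indicator_of_notMem h0]
          simp
    _ = _ := by
        refine setLIntegral_congr_fun measurableSet_Ioi fun s hs => ?_
        have hs' : 0 < s := hs
        have hfs : Measurable fun z => f s z := hf.comp (measurable_const.prodMk measurable_id)
        have himg : (fun x => s * x) '' Ioo (-1) 1 = Ioo (-s) s := by
          rw [image_mul_left_Ioo hs']; simp
        have := lintegral_image_eq_lintegral_abs_deriv_mul (f' := fun _ => s)
          (measurableSet_Ioo (a := (-1 : ℝ)) (b := 1))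
          (fun x _ => ((hasDerivAt_id x).const_mul s).hasDerivWithinAt.congr_deriv (mul_one s))
          (fun x _ y _ h => mul_left_cancel₀ hs'.ne' h) (fun z => ENNReal.ofReal s * f s z)
        simp only [id] at this
        rw [himg] at this
        rw [this, abs_of_pos hs', ← lintegral_const_mul' _ _ ENNReal.ofReal_ne_top]
        refine lintegral_congr fun x => ?_
        rw [← mul_assoc, ← ENNReal.ofReal_mul hs'.le, sq]

theorem lintegral_eucSp_three_spherical {f : ℝ → ℝ → ℝ≥0∞}
    (hf : Measurable fun p : ℝ × ℝ => f p.1 p.2) :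
    ∫⁻ q : EucSp 3, f ‖q‖ (q 2) = ENNReal.ofReal (2 * Real.pi) *
      ∫⁻ s in Ioi (0 : ℝ), ENNReal.ofReal (s ^ 2) * ∫⁻ x in Ioo (-1) 1, f s (s * x) := by
  rw [lintegral_eucSp_three hf, ← lintegral_swap_cone hf,
    ← lintegral_const_mul' _ _ ENNReal.ofReal_ne_top]
  refine lintegral_congr fun z => ?_
  have hm : Measurable fun r : ℝ => f √(z ^ 2 + r ^ 2) z :=
    hf.comp (by fun_prop : Measurable fun r : ℝ => (√(z ^ 2 + r ^ 2), z))
  rw [lintegral_complex_radial hm, lintegral_radial_shift z (g := fun s => f s z)]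

end SphericalCoordinates

section SphLine

/-- The Riemannian product of the unit sphere with a line. -/
abbrev SphLine : Type := WithLp 2 (Sph2 × EucSp 1)

namespace SphLine

/-- The third coordinate of the spherical component. -/
def height (p : SphLine) : ℝ := p.fst.1 2

/-- The linear component. -/
def time (p : SphLine) : ℝ := p.snd 0

theorem continuous_height : Continuous height := by unfold height; fun_prop
theorem continuous_time : Continuous time := by unfold time; fun_prop

theorem dist_sq (p q : SphLine) : dist p q ^ 2 = dist p.fst q.fst ^ 2 + (p.time - q.time) ^ 2 := by
  rw [WithLp.prod_dist_eq_add (by norm_num), ENNReal.toReal_ofNat, ← Real.sqrt_eq_rpow,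
    Real.rpow_two, Real.rpow_two, Real.sq_sqrt (by positivity)]
  congr 1
  rw [EuclideanSpace.dist_eq, Real.sq_sqrt (by positivity), Fin.sum_univ_one, Real.dist_eq, sq_abs]
  rfl

/-- The conformal identification with punctured space. -/
noncomputable def expMap (p : SphLine) : EucSp 3 := Real.exp p.time • p.fst.1

theorem norm_expMap (p : SphLine) : ‖expMap p‖ = Real.exp p.time := by
  rw [expMap, norm_smul, mem_sphere_zero_iff_norm.1 p.fst.2, mul_one, Real.norm_eq_abs,
    abs_of_pos (Real.exp_pos _)]

theorem continuous_expMap : Continuous expMap := by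
  have := continuous_time
  unfold expMap
  fun_prop

theorem dist_expMap_sq (p q : SphLine) : dist (expMap p) (expMap q) ^ 2 =
    Real.exp p.time * Real.exp q.time * dist p.fst q.fst ^ 2 +
      (Real.exp p.time - Real.exp q.time) ^ 2 := by
  rw [EucSp.dist_three_sq, Sph2.dist_sq]
  simp only [expMap, PiLp.smul_apply, smul_eq_mul]
  set a := Real.exp p.time
  set b := Real.exp q.time
  linear_combination (a ^ 2 - a * b) * p.fst.sum_sq + (b ^ 2 - a * b) * q.fst.sum_sq

theorem dist_expMap_le (p q : SphLine) : dist (expMap p) (expMap q) ≤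
    max (Real.exp p.time) (Real.exp q.time) * dist p q := by
  have ha := Real.exp_pos p.time
  have hb := Real.exp_pos q.time
  have hm : 0 < max (Real.exp p.time) (Real.exp q.time) := lt_max_of_lt_left ha
  refine le_of_sq_le_sq ?_ (by positivity)
  rw [dist_expMap_sq, mul_pow, dist_sq, mul_add]
  refine add_le_add ?_ ?_
  · rw [sq (max _ _)]
    gcongr
    · exact le_max_left _ _
    · exact le_max_right _ _
  · rw [← mul_pow, ← sq_abs]
    have := abs_exp_sub_exp_le p.time q.time
    rw [← sq_abs (_ * _), abs_mul, abs_of_pos hm]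
    gcongr

theorem dist_le_expMap (p q : SphLine) : dist p q ≤
    max ‖expMap p‖⁻¹ ‖expMap q‖⁻¹ * dist (expMap p) (expMap q) := by
  rw [norm_expMap, norm_expMap]
  have ha := Real.exp_pos p.time
  have hb := Real.exp_pos q.time
  refine le_max_mul_of_sq_le (by positivity) (by positivity) dist_nonneg ?_
  have := log_sub_log_sq_le ha hb
  rw [Real.log_exp, Real.log_exp] at this
  rw [dist_expMap_sq, dist_sq, mul_add]
  refine add_le_add (le_of_eq ?_) (this.trans (le_of_eq ?_)) <;> field_simp

theorem expMap_injective : Function.Injective expMap := fun p q h => by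
  have := dist_le_expMap p q
  rw [h, dist_self, mul_zero] at this
  exact dist_le_zero.1 this

theorem measurableEmbedding_expMap : MeasurableEmbedding expMap :=
  continuous_expMap.measurableEmbedding expMap_injective

theorem measure_eq_lintegral {B : Set SphLine} (hB : MeasurableSet B) :
    (μHE[3] : Measure SphLine) B = ∫⁻ q in expMap '' B, ENNReal.ofReal (‖q‖⁻¹ ^ 3) := by
  have hvol : (μHE[3] : Measure (EucSp 3)) = volume := by
    have := InnerProductSpace.euclideanHausdorffMeasure_eq_volume (V := EucSp 3)
    rwa [finrank_euclideanSpace_fin] at this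
  have hle : ((volume : Measure (EucSp 3)).comap expMap) ≤
      (μHE[3] : Measure SphLine).withDensity fun p => ENNReal.ofReal (Real.exp p.time ^ 3) := by
    refine Measure.le_iff.2 fun s hs => ?_
    rw [measurableEmbedding_expMap.comap_apply, withDensity_apply _ hs, ← hvol]
    exact euclideanHausdorffMeasure_image_le_lintegral_ofReal 3 hs
      (Real.measurable_exp.comp continuous_time.measurable) (fun _ _ => Real.exp_pos _)
      fun x _ y _ => dist_expMap_le x y
  apply le_antisymm
  · have : Nonempty SphLine := ⟨WithLp.toLp 2 (Sph2.mk 0 0 1 (by norm_num), 0)⟩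
    have hinv := Function.leftInverse_invFun expMap_injective
    have := euclideanHausdorffMeasure_image_le_lintegral_ofReal (f := Function.invFun expMap)
      (ρ := fun q : EucSp 3 => ‖q‖⁻¹) (A := expMap '' B) 3
      (measurableEmbedding_expMap.measurableSet_image.2 hB) (by fun_prop)
      (by
        rintro _ ⟨p, -, rfl⟩
        rw [norm_expMap]
        positivity)
      (by
        rintro _ ⟨p, -, rfl⟩ _ ⟨q, -, rfl⟩
        rw [hinv p, hinv q]
        exact dist_le_expMap p q)
    rwa [hvol, hinv.image_image] at this
  · have hmap : ((volume : Measure (EucSp 3)).restrict (expMap '' B)) =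
        (((volume : Measure (EucSp 3)).comap expMap).restrict B).map expMap := by
      rw [measurableEmbedding_expMap.restrict_comap, measurableEmbedding_expMap.map_comap,
        Measure.restrict_restrict measurableEmbedding_expMap.measurableSet_range,
        inter_eq_right.2 (image_subset_range _ _)]
    have hg : Measurable fun p : SphLine => ENNReal.ofReal (‖expMap p‖⁻¹ ^ 3) := by
      have := continuous_expMap.measurable
      fun_prop
    have hd : Measurable fun p : SphLine => ENNReal.ofReal (Real.exp p.time ^ 3) := by
      have := continuous_time.measurable
      fun_prop
    rw [hmap, measurableEmbedding_expMap.lintegral_map]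
    refine (lintegral_mono' (Measure.restrict_mono le_rfl hle) le_rfl).trans ?_
    rw [restrict_withDensity hB, lintegral_withDensity_eq_lintegral_mul _ hd hg,
      ← setLIntegral_one B]
    refine le_of_eq (lintegral_congr fun p => ?_)
    rw [Pi.mul_apply, norm_expMap, ← ENNReal.ofReal_mul (by positivity), ← mul_pow,
      mul_inv_cancel₀ (Real.exp_pos _).ne', one_pow, ENNReal.ofReal_one]

theorem mem_image_expMap {Q : Set (ℝ × ℝ)} {q : EucSp 3} (hq : q ≠ 0) :
    q ∈ expMap '' {p | (p.height, p.time) ∈ Q} ↔ (q 2 / ‖q‖, Real.log ‖q‖) ∈ Q := by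
  have hn : 0 < ‖q‖ := norm_pos_iff.2 hq
  constructor
  · rintro ⟨p, hp, rfl⟩
    have h : expMap p 2 / ‖expMap p‖ = p.height := by
      rw [norm_expMap, expMap, PiLp.smul_apply, smul_eq_mul, height,
        mul_div_cancel_left₀ _ (Real.exp_pos _).ne']
    rw [h, norm_expMap, Real.log_exp]
    exact hp
  · intro h
    refine ⟨WithLp.toLp 2 (⟨‖q‖⁻¹ • q, mem_sphere_zero_iff_norm.2 (by
      rw [norm_smul, norm_inv, norm_norm, inv_mul_cancel₀ hn.ne'])⟩,
        WithLp.toLp 2 fun _ => Real.log ‖q‖), ?_, ?_⟩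
    · have : ‖q‖⁻¹ * q 2 = q 2 / ‖q‖ := by rw [mul_comm, div_eq_mul_inv]
      simpa [height, time, this] using h
    · simp [expMap, time, Real.exp_log hn, smul_smul, mul_inv_cancel₀ (ne_of_gt hn)]

/-- The volume of a rotationally symmetric region. -/
theorem measure_rotational {Q : Set (ℝ × ℝ)} (hQ : MeasurableSet Q) :
    (μHE[3] : Measure SphLine) {p | (p.height, p.time) ∈ Q} = ENNReal.ofReal (2 * Real.pi) *
      ∫⁻ t : ℝ, ∫⁻ x in Ioo (-1) 1, Q.indicator 1 (x, t) := by
  have hB : MeasurableSet {p : SphLine | (p.height, p.time) ∈ Q} :=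
    (continuous_height.measurable.prodMk continuous_time.measurable) hQ
  rw [measure_eq_lintegral hB, ← lintegral_indicator (measurableEmbedding_expMap.measurableSet_image.2 hB)]
  set f : ℝ → ℝ → ℝ≥0∞ := fun s z =>
    Q.indicator 1 (z / s, Real.log s) * ENNReal.ofReal (s⁻¹ ^ 3) with hf
  have hQ1 : Measurable (Q.indicator (1 : ℝ × ℝ → ℝ≥0∞)) := measurable_one.indicator hQ
  have hfm : Measurable fun p : ℝ × ℝ => f p.1 p.2 :=
    (hQ1.comp (by fun_prop : Measurable fun p : ℝ × ℝ => (p.2 / p.1, Real.log p.1))).mul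
      (by fun_prop)
  have hae : ∀ᵐ q : EucSp 3, (expMap '' {p | (p.height, p.time) ∈ Q}).indicator
      (fun q => ENNReal.ofReal (‖q‖⁻¹ ^ 3)) q = f ‖q‖ (q 2) := by
    have h0 : ∀ᵐ q : EucSp 3, q ≠ 0 := Measure.ae_ne volume 0
    filter_upwards [h0] with q hq
    by_cases h : (q 2 / ‖q‖, Real.log ‖q‖) ∈ Q
    · rw [indicator_of_mem ((mem_image_expMap hq).2 h)]
      simp [hf, indicator_of_mem h]
    · rw [indicator_of_notMem (mt (mem_image_expMap hq).1 h)]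
      simp [hf, indicator_of_notMem h]
  rw [lintegral_congr_ae hae, lintegral_eucSp_three_spherical hfm]
  congr 1
  have himg : Real.log '' Ioi 0 = univ := by
    refine eq_univ_of_forall fun t => ⟨Real.exp t, Real.exp_pos t, Real.log_exp t⟩
  have hcv := lintegral_image_eq_lintegral_abs_deriv_mul
    measurableSet_Ioi (fun s hs => (Real.hasDerivAt_log (ne_of_gt hs)).hasDerivWithinAt)
    Real.log_injOn_pos fun t : ℝ => ∫⁻ x in Ioo (-1) 1, Q.indicator (1 : ℝ × ℝ → ℝ≥0∞) (x, t)
  rw [himg, setLIntegral_univ] at hcv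
  rw [hcv]
  refine setLIntegral_congr_fun measurableSet_Ioi fun s hs => ?_
  have hs' : 0 < s := hs
  simp only [hf]
  rw [lintegral_mul_const' _ _ ENNReal.ofReal_ne_top, mul_comm (lintegral _ _), ← mul_assoc,
    ← ENNReal.ofReal_mul (by positivity), abs_of_pos (by positivity)]
  congr 2
  · field_simp
  · funext x
    rw [mul_div_cancel_left₀ _ hs'.ne']

end SphLine

end SphLine

section SphericalCap

/-- The derivative of `capTime`, and the conformal factor of `capSurface`. -/
noncomputable def capRatio (h b x : ℝ) : ℝ := 2 * h / (b ^ 2 - x ^ 2)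

/-- The linear coordinate on the boundary of a rotationally symmetric cap. -/
noncomputable def capTime (h b x : ℝ) : ℝ := h / b * (Real.log (b + x) - Real.log (b - x))

variable {h b : ℝ}

theorem capRatio_denom_pos {x : ℝ} (hb : 1 < b) (hx : |x| ≤ 1) : 0 < b ^ 2 - x ^ 2 := by
  have := (abs_le.1 hx)
  nlinarith

theorem capRatio_pos {x : ℝ} (hh : 0 < h) (hb : 1 < b) (hx : |x| ≤ 1) : 0 < capRatio h b x :=
  div_pos (by linarith) (capRatio_denom_pos hb hx)

theorem hasDerivAt_capTime {x : ℝ} (hb : 1 < b) (hx : |x| ≤ 1) :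
    HasDerivAt (capTime h b) (capRatio h b x) x := by
  obtain ⟨h1, h2⟩ := abs_le.1 hx
  have hp : 0 < b + x := by linarith
  have hm : 0 < b - x := by linarith
  have hD := capRatio_denom_pos hb hx
  have := ((((hasDerivAt_id x).const_add b).log hp.ne').sub
    (((hasDerivAt_id x).const_sub b).log hm.ne')).const_mul (h / b)
  refine this.congr_deriv ?_
  simp only [capRatio, id]
  have hb0 : b ≠ 0 := by linarith
  rw [show b ^ 2 - x ^ 2 = (b + x) * (b - x) by ring]
  field_simp
  ring

theorem capRatio_le_max {x y u : ℝ} (hh : 0 < h) (hb : 1 < b) (hx : |x| ≤ 1) (hy : |y| ≤ 1)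
    (hu : u ∈ uIcc x y) : capRatio h b u ≤ max (capRatio h b x) (capRatio h b y) := by
  have key : ∀ {v w : ℝ}, |w| ≤ 1 → |v| ≤ |w| → capRatio h b v ≤ capRatio h b w := by
    intro v w hw hvw
    have := capRatio_denom_pos hb hw
    have := sq_le_sq.2 hvw
    unfold capRatio
    gcongr
  have h2 : |u| ≤ max |x| |y| := by
    rcases le_total x y with hxy | hxy
    · rw [uIcc_of_le hxy] at hu
      exact abs_le_max_abs_abs hu.1 hu.2
    · rw [uIcc_of_ge hxy] at hu
      rw [max_comm]
      exact abs_le_max_abs_abs hu.1 hu.2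
  rcases le_max_iff.1 h2 with h' | h'
  · exact (key hx h').trans (le_max_left _ _)
  · exact (key hy h').trans (le_max_right _ _)

theorem abs_capTime_sub_le {x y : ℝ} (hh : 0 < h) (hb : 1 < b) (hx : |x| ≤ 1) (hy : |y| ≤ 1) :
    |capTime h b x - capTime h b y| ≤ max (capRatio h b x) (capRatio h b y) * |x - y| := by
  have hsub : ∀ u ∈ uIcc x y, |u| ≤ 1 := fun u hu => abs_le.2
    ⟨(le_min (abs_le.1 hx).1 (abs_le.1 hy).1).trans hu.1,
      hu.2.trans (max_le (abs_le.1 hx).2 (abs_le.1 hy).2)⟩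
  have := (convex_uIcc x y).norm_image_sub_le_of_norm_hasDerivWithin_le
    (fun u hu => (hasDerivAt_capTime (h := h) hb (hsub u hu)).hasDerivWithinAt)
    (fun u hu => by
      rw [Real.norm_eq_abs, abs_of_pos (capRatio_pos hh hb (hsub u hu))]
      exact capRatio_le_max hh hb hx hy hu) right_mem_uIcc left_mem_uIcc
  simpa [Real.norm_eq_abs] using this

theorem Sph2.abs_two_le (z : Sph2) : |z.1 2| ≤ 1 :=
  abs_le_of_sq_le_sq (by nlinarith [z.sum_sq, sq_nonneg (z.1 0), sq_nonneg (z.1 1)]) zero_le_one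

/-- A parametrisation by the sphere of the boundary of a rotationally symmetric cap. -/
noncomputable def capSurface (hb : 1 < b) (hbh : b ^ 2 = h ^ 2 + 1) (z : Sph2) : SphLine :=
  WithLp.toLp 2 (Sph2.mk (capRatio h b (z.1 2) * z.1 0) (capRatio h b (z.1 2) * z.1 1)
    (capRatio h b (z.1 2) * h - 1) (by
      have h1 : capRatio h b (z.1 2) * (b ^ 2 - z.1 2 ^ 2) = 2 * h :=
        div_mul_cancel₀ _ (capRatio_denom_pos hb z.abs_two_le).ne'
      have h2 := z.sum_sq
      set r := capRatio h b (z.1 2)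
      linear_combination r ^ 2 * h2 + r * h1 - r ^ 2 * hbh),
    WithLp.toLp 2 fun _ => capTime h b (z.1 2))

theorem capSurface_zero (hb : 1 < b) (hbh : b ^ 2 = h ^ 2 + 1) (z : Sph2) :
    (capSurface hb hbh z).fst.1 0 = capRatio h b (z.1 2) * z.1 0 := rfl

theorem capSurface_one (hb : 1 < b) (hbh : b ^ 2 = h ^ 2 + 1) (z : Sph2) :
    (capSurface hb hbh z).fst.1 1 = capRatio h b (z.1 2) * z.1 1 := rfl

theorem capSurface_two (hb : 1 < b) (hbh : b ^ 2 = h ^ 2 + 1) (z : Sph2) :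
    (capSurface hb hbh z).fst.1 2 = capRatio h b (z.1 2) * h - 1 := rfl

theorem capSurface_time (hb : 1 < b) (hbh : b ^ 2 = h ^ 2 + 1) (z : Sph2) :
    (capSurface hb hbh z).time = capTime h b (z.1 2) := rfl

theorem dist_capSurface_sq (hb : 1 < b) (hbh : b ^ 2 = h ^ 2 + 1) (z w : Sph2) :
    dist (capSurface hb hbh z) (capSurface hb hbh w) ^ 2 =
      capRatio h b (z.1 2) * capRatio h b (w.1 2) *
        ((z.1 0 - w.1 0) ^ 2 + (z.1 1 - w.1 1) ^ 2) +
      (capTime h b (z.1 2) - capTime h b (w.1 2)) ^ 2 := by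
  rw [SphLine.dist_sq, Sph2.dist_sq]
  simp only [capSurface_zero, capSurface_one, capSurface_two, capSurface_time]
  have h1 : capRatio h b (z.1 2) * (b ^ 2 - z.1 2 ^ 2) = 2 * h :=
    div_mul_cancel₀ _ (capRatio_denom_pos hb z.abs_two_le).ne'
  have h2 : capRatio h b (w.1 2) * (b ^ 2 - w.1 2 ^ 2) = 2 * h :=
    div_mul_cancel₀ _ (capRatio_denom_pos hb w.abs_two_le).ne'
  have h3 := z.sum_sq
  have h4 := w.sum_sq
  set r := capRatio h b (z.1 2)
  set s := capRatio h b (w.1 2)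
  linear_combination (r ^ 2 - r * s) * h3 + (s ^ 2 - r * s) * h4 + (r - s) * h1 + (s - r) * h2
    - (r - s) ^ 2 * hbh

theorem dist_capSurface_le (hh : 0 < h) (hb : 1 < b) (hbh : b ^ 2 = h ^ 2 + 1) (z w : Sph2) :
    dist (capSurface hb hbh z) (capSurface hb hbh w) ≤
      max (capRatio h b (z.1 2)) (capRatio h b (w.1 2)) * dist z w := by
  have hz := capRatio_pos hh hb z.abs_two_le
  have hw := capRatio_pos hh hb w.abs_two_le
  have hm : 0 < max (capRatio h b (z.1 2)) (capRatio h b (w.1 2)) := lt_max_of_lt_left hz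
  refine le_of_sq_le_sq ?_ (by positivity)
  rw [dist_capSurface_sq, mul_pow, Sph2.dist_sq, mul_add (max _ _ ^ 2)]
  refine add_le_add ?_ ?_
  · rw [sq (max _ _)]
    gcongr
    · exact le_max_left _ _
    · exact le_max_right _ _
  · rw [← mul_pow]
    refine sq_le_sq.2 ?_
    rw [abs_mul, abs_of_pos hm]
    exact abs_capTime_sub_le hh hb z.abs_two_le w.abs_two_le

theorem integral_capRatio_sq (hb : 1 < b) (hbh : b ^ 2 = h ^ 2 + 1) (hh : 0 < h) :
    ∫ x in (-1)..1, capRatio h b x ^ 2 = 2 / b ^ 2 * (2 + h * capTime h b 1) := by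
  have hb0 : 0 < b := by linarith
  have hd : ∀ x ∈ uIcc (-1 : ℝ) 1, HasDerivAt (fun x => 2 * h ^ 2 / b ^ 2 * (x / (b ^ 2 - x ^ 2)) +
      h / b ^ 2 * capTime h b x) (capRatio h b x ^ 2) x := by
    intro x hx
    rw [uIcc_of_le (by norm_num)] at hx
    have hx' : |x| ≤ 1 := abs_le.2 hx
    have hD := capRatio_denom_pos hb hx'
    have h1 := ((hasDerivAt_id x).div ((hasDerivAt_pow 2 x).const_sub (b ^ 2)) hD.ne').const_mul
      (2 * h ^ 2 / b ^ 2)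
    have h2 := (hasDerivAt_capTime (h := h) hb hx').const_mul (h / b ^ 2)
    refine (h1.add h2).congr_deriv ?_
    simp only [capRatio, id]
    field_simp
    push_cast
    ring
  have hcont : ContinuousOn (fun x => capRatio h b x ^ 2) (uIcc (-1) 1) := by
    unfold capRatio
    refine ContinuousOn.pow (ContinuousOn.div (by fun_prop) (by fun_prop) fun x hx => ?_) 2
    rw [uIcc_of_le (by norm_num)] at hx
    exact (capRatio_denom_pos hb (abs_le.2 hx)).ne'
  rw [intervalIntegral.integral_eq_sub_of_hasDerivAt hd hcont.intervalIntegrable]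
  have hodd : capTime h b (-1) = - capTime h b 1 := by
    simp only [capTime]
    rw [sub_neg_eq_add, ← sub_eq_add_neg]
    ring
  rw [hodd]
  have : b ^ 2 - 1 = h ^ 2 := by linarith
  norm_num
  rw [this]
  field_simp
  ring

/-- The area of the boundary of the cap. -/
noncomputable def capBoundary (h b : ℝ) : ℝ := 4 * Real.pi / b ^ 2 * (2 + h * capTime h b 1)

theorem measure_range_capSurface_le (hh : 0 < h) (hb : 1 < b) (hbh : b ^ 2 = h ^ 2 + 1) :
    (μHE[2] : Measure SphLine) (range (capSurface hb hbh)) ≤ ENNReal.ofReal (capBoundary h b) := by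
  have hm : Measurable (capRatio h b) := by unfold capRatio; fun_prop
  have hz : Measurable fun z : Sph2 => z.1 2 :=
    (by fun_prop : Continuous fun z : Sph2 => z.1 2).measurable
  have h1 := euclideanHausdorffMeasure_image_le_lintegral_ofReal 2 MeasurableSet.univ
    (hm.comp hz) (fun z _ => capRatio_pos hh hb (Sph2.abs_two_le z))
    fun z _ w _ => dist_capSurface_le hh hb hbh z w
  rw [image_univ, setLIntegral_univ] at h1
  refine h1.trans ((lintegral_sph2_le (G := fun x => ENNReal.ofReal (capRatio h b x ^ 2))
    (by fun_prop)).trans ?_)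
  have hcont : ContinuousOn (fun x => capRatio h b x ^ 2) (Icc (-1) 1) := by
    unfold capRatio
    refine ContinuousOn.pow (ContinuousOn.div (by fun_prop) (by fun_prop) fun x hx => ?_) 2
    exact (capRatio_denom_pos hb (abs_le.2 hx)).ne'
  rw [← ofReal_integral_eq_lintegral_ofReal
    ((hcont.integrableOn_Icc).mono_set Ioo_subset_Icc_self)
    (Eventually.of_forall fun x => sq_nonneg _), ← integral_Ioc_eq_integral_Ioo,
    ← intervalIntegral.integral_of_le (by norm_num), integral_capRatio_sq hb hbh hh,
    ← ENNReal.ofReal_mul (by positivity)]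
  refine ENNReal.ofReal_le_ofReal (le_of_eq ?_)
  unfold capBoundary
  ring

end SphericalCap

section CapRegion

variable {h b : ℝ}

/-- The interior of a rotationally symmetric cap. -/
def capRegion (h b : ℝ) : Set SphLine :=
  {p | h ^ 2 * (1 + Real.cosh (b * p.time / h)) < b ^ 2 * (1 + p.height)}

theorem isOpen_capRegion : IsOpen (capRegion h b) := by
  have h1 := SphLine.continuous_time
  have h2 := SphLine.continuous_height
  have h3 := Real.continuous_cosh
  exact isOpen_lt (by fun_prop) (by fun_prop)

theorem frontier_capRegion_subset (hh : 0 < h) (hb : 1 < b) (hbh : b ^ 2 = h ^ 2 + 1) :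
    frontier (capRegion h b) ⊆ range (capSurface hb hbh) := by
  have h1 := SphLine.continuous_time
  have h2 := SphLine.continuous_height
  have h3 := Real.continuous_cosh
  refine (frontier_lt_subset_eq (by fun_prop) (by fun_prop)).trans fun p hp => ?_
  have hp : h ^ 2 * (1 + Real.cosh (b * p.time / h)) = b ^ 2 * (1 + p.height) := hp
  set u := b * p.time / (2 * h) with hu
  have hb0 : 0 < b := by linarith
  have e1 : b * p.time / h = 2 * u := by rw [hu]; field_simp
  have hC : 0 < Real.cosh u := Real.cosh_pos u
  have hCS := Real.cosh_sq u
  have e2 : Real.cosh u + Real.sinh u = Real.exp u := Real.cosh_add_sinh u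
  have e3 : Real.cosh u - Real.sinh u = Real.exp (-u) := Real.cosh_sub_sinh u
  rw [e1, Real.cosh_two_mul] at hp
  set C := Real.cosh u
  set S := Real.sinh u
  set x := b * S / C with hx
  have hz := p.fst.sum_sq
  have habs := p.fst.abs_two_le
  have hhe : p.fst.1 2 = p.height := rfl
  rw [hhe] at hz habs
  set r := 2 * h * C ^ 2 / b ^ 2 with hr
  have hr0 : 0 < r := by positivity
  have hheight : p.height = r * h - 1 := by
    rw [hr]; field_simp; linear_combination - hp - h ^ 2 * hCS
  have hxx : b ^ 2 - x ^ 2 = b ^ 2 / C ^ 2 := by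
    rw [hx]; field_simp; linear_combination hCS
  have hratio : capRatio h b x = r := by
    unfold capRatio; rw [hxx, hr]; field_simp
  have hrx : r * (b ^ 2 - x ^ 2) = 2 * h := by rw [hxx, hr]; field_simp
  have htime : capTime h b x = p.time := by
    have a1 : b + x = b / C * Real.exp u := by rw [← e2, hx]; field_simp
    have a2 : b - x = b / C * Real.exp (-u) := by rw [← e3, hx]; field_simp
    unfold capTime
    rw [a1, a2, Real.log_mul (by positivity) (by positivity),
      Real.log_mul (by positivity) (by positivity), Real.log_exp, Real.log_exp, hu]
    field_simp
    ring
  have hsum : (p.fst.1 0 / r) ^ 2 + (p.fst.1 1 / r) ^ 2 + x ^ 2 = 1 := by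
    clear_value r x
    field_simp
    rw [hheight] at hz
    linear_combination hz - r * hrx + r ^ 2 * hbh
  have hf : (capSurface hb hbh (Sph2.mk (p.fst.1 0 / r) (p.fst.1 1 / r) x hsum)).fst = p.fst := by
    refine Sph2.ext_coord ?_ ?_ ?_
    · rw [capSurface_zero, Sph2.mk_two, Sph2.mk_zero, hratio]; field_simp
    · rw [capSurface_one, Sph2.mk_two, Sph2.mk_one, hratio]; field_simp
    · rw [capSurface_two, Sph2.mk_two, hratio, ← hheight, hhe]
  refine ⟨Sph2.mk (p.fst.1 0 / r) (p.fst.1 1 / r) x hsum,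
    dist_le_zero.1 (le_of_sq_le_sq ?_ le_rfl)⟩
  rw [SphLine.dist_sq, hf, capSurface_time, Sph2.mk_two, htime]
  simp

/-- The volume of the cap. -/
noncomputable def capVolume (h b : ℝ) : ℝ :=
  4 * Real.pi * ((2 - h ^ 2 / b ^ 2) * capTime h b 1 - 2 * h / b ^ 2)

theorem exp_capTime_one (hh : 0 < h) (hb : 1 < b) :
    Real.exp (b * capTime h b 1 / h) = (b + 1) / (b - 1) := by
  have h1 : 0 < b - 1 := by linarith
  have : b * capTime h b 1 / h = Real.log ((b + 1) / (b - 1)) := by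
    rw [Real.log_div (by linarith) h1.ne']; unfold capTime; field_simp
  rw [this, Real.exp_log (by positivity)]

theorem capTime_one_pos (hh : 0 < h) (hb : 1 < b) : 0 < capTime h b 1 := by
  unfold capTime
  have : Real.log (b - 1) < Real.log (b + 1) := Real.log_lt_log (by linarith) (by linarith)
  have : 0 < Real.log (b + 1) - Real.log (b - 1) := by linarith
  have hb0 : 0 < b := by linarith
  positivity

theorem cosh_capTime_one (hh : 0 < h) (hb : 1 < b) (hbh : b ^ 2 = h ^ 2 + 1) :
    Real.cosh (b * capTime h b 1 / h) = 2 * b ^ 2 / h ^ 2 - 1 := by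
  have h1 : b - 1 ≠ 0 := by linarith
  have h2 : b + 1 ≠ 0 := by linarith
  rw [Real.cosh_eq, Real.exp_neg, exp_capTime_one hh hb]
  have : h ^ 2 = (b - 1) * (b + 1) := by linear_combination -hbh
  rw [this]
  field_simp
  ring

theorem sinh_capTime_one (hh : 0 < h) (hb : 1 < b) (hbh : b ^ 2 = h ^ 2 + 1) :
    Real.sinh (b * capTime h b 1 / h) = 2 * b / h ^ 2 := by
  have h1 : b - 1 ≠ 0 := by linarith
  have h2 : b + 1 ≠ 0 := by linarith
  rw [Real.sinh_eq, Real.exp_neg, exp_capTime_one hh hb]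
  have : h ^ 2 = (b - 1) * (b + 1) := by linear_combination -hbh
  rw [this]
  field_simp
  ring

theorem measure_capRegion (hh : 0 < h) (hb : 1 < b) (hbh : b ^ 2 = h ^ 2 + 1) :
    (μHE[3] : Measure SphLine) (capRegion h b) = ENNReal.ofReal (capVolume h b) := by
  set Q : Set (ℝ × ℝ) := {q | h ^ 2 * (1 + Real.cosh (b * q.2 / h)) < b ^ 2 * (1 + q.1)} with hQ
  have hc := Real.continuous_cosh
  have hQm : MeasurableSet Q := (isOpen_lt (by fun_prop) (by fun_prop)).measurableSet
  have hb0 : 0 < b := by linarith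
  set T := capTime h b 1 with hT
  have hT0 : 0 < T := capTime_one_pos hh hb
  set D : ℝ → ℝ := fun t => 2 - h ^ 2 / b ^ 2 * (1 + Real.cosh (b * t / h)) with hD
  have hslice : ∀ t : ℝ, ∫⁻ x in Ioo (-1) 1, Q.indicator 1 (x, t) = ENNReal.ofReal (D t) := by
    intro t
    have hset : ∀ x, (x, t) ∈ Q ↔ x ∈ Ioi (1 - D t) := by
      intro x
      simp only [hQ, mem_ofPred_eq, mem_Ioi, hD]
      rw [← sub_pos, ← sub_pos (a := x)]
      have : b ^ 2 * (1 + x) - h ^ 2 * (1 + Real.cosh (b * t / h)) =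
          b ^ 2 * (x - (1 - (2 - h ^ 2 / b ^ 2 * (1 + Real.cosh (b * t / h))))) := by
        field_simp; ring
      rw [this, mul_pos_iff_of_pos_left (by positivity)]
    have hind : ∀ x : ℝ, Q.indicator (1 : ℝ × ℝ → ℝ≥0∞) (x, t) = (Ioi (1 - D t)).indicator 1 x := by
      intro x
      by_cases hx : (x, t) ∈ Q
      · rw [indicator_of_mem hx, indicator_of_mem ((hset x).1 hx)]; rfl
      · rw [indicator_of_notMem hx, indicator_of_notMem (mt (hset x).2 hx)]
    simp_rw [hind]
    have hD2 : D t < 2 := by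
      have : 0 < h ^ 2 / b ^ 2 * (1 + Real.cosh (b * t / h)) := by
        have := Real.cosh_pos (b * t / h); positivity
      simp only [hD]; linarith
    rw [lintegral_indicator_one measurableSet_Ioi, Measure.restrict_apply measurableSet_Ioi]
    have : Ioi (1 - D t) ∩ Ioo (-1) 1 = Ioo (1 - D t) 1 := by
      ext x
      simp only [mem_inter_iff, mem_Ioi, mem_Ioo]
      constructor
      · rintro ⟨h1, -, h2⟩; exact ⟨h1, h2⟩
      · rintro ⟨h1, h2⟩; exact ⟨h1, by linarith, h2⟩
    rw [this, Real.volume_Ioo]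
    congr 1
    ring
  have hcosh : ∀ t, Real.cosh (b * t / h) ≤ Real.cosh (b * T / h) ↔ |t| ≤ T := by
    intro t
    rw [Real.cosh_le_cosh, abs_div, abs_div, abs_mul, abs_mul, abs_of_pos hb0, abs_of_pos hh,
      abs_of_pos hT0, div_le_div_iff_of_pos_right hh, mul_le_mul_iff_right₀ hb0]
  have hDsign : ∀ t, 0 ≤ D t ↔ |t| ≤ T := by
    intro t
    rw [← hcosh, hT, cosh_capTime_one hh hb hbh]
    simp only [hD]
    rw [sub_nonneg, div_mul_eq_mul_div, div_le_iff₀ (by positivity), le_sub_iff_add_le,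
      le_div_iff₀ (by positivity)]
    constructor <;> intro h' <;> linarith
  have hDc : Continuous D := by simp only [hD]; fun_prop
  have hgint : ∫⁻ t, ENNReal.ofReal (D t) = ENNReal.ofReal (∫ t in (-T)..T, D t) := by
    rw [intervalIntegral.integral_of_le (by linarith), integral_Ioc_eq_integral_Ioo,
      ← integral_Icc_eq_integral_Ioo, ofReal_integral_eq_lintegral_ofReal
        hDc.continuousOn.integrableOn_Icc, ← lintegral_indicator measurableSet_Icc]
    · refine lintegral_congr fun t => ?_
      by_cases ht : t ∈ Icc (-T) T
      · rw [indicator_of_mem ht]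
      · rw [indicator_of_notMem ht]
        refine ENNReal.ofReal_of_nonpos (le_of_not_ge fun h' => ht ?_)
        exact abs_le.1 ((hDsign t).1 h')
    · filter_upwards [ae_restrict_mem measurableSet_Icc] with t ht
      exact (hDsign t).2 (abs_le.2 ht)
  have hval : ∫ t in (-T)..T, D t = 2 * ((2 - h ^ 2 / b ^ 2) * T - 2 * h / b ^ 2) := by
    have hd : ∀ t ∈ uIcc (-T) T, HasDerivAt (fun t => 2 * t - h ^ 2 / b ^ 2 *
        (t + h / b * Real.sinh (b * t / h))) (D t) t := by
      intro t _
      have h1 := (((hasDerivAt_id t).const_mul b).div_const h).sinh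
      have h2 := ((hasDerivAt_id t).const_mul 2).sub
        (((hasDerivAt_id t).add (h1.const_mul (h / b))).const_mul (h ^ 2 / b ^ 2))
      refine h2.congr_deriv ?_
      simp only [hD, id]
      field_simp
    rw [intervalIntegral.integral_eq_sub_of_hasDerivAt hd (hDc.intervalIntegrable _ _)]
    have hodd : Real.sinh (b * (-T) / h) = - Real.sinh (b * T / h) := by
      rw [← Real.sinh_neg]; congr 1; ring
    rw [hodd, hT, sinh_capTime_one hh hb hbh]
    field_simp
    ring
  have := SphLine.measure_rotational hQm
  refine this.trans ?_
  simp_rw [hslice]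
  rw [hgint, ← ENNReal.ofReal_mul (by positivity), hval]
  congr 1
  unfold capVolume
  ring

theorem measure_closure_of_frontier_ne_top {V : Set SphLine}
    (hV : (μHE[2] : Measure SphLine) (frontier V) ≠ ∞) :
    (μHE[3] : Measure SphLine) (closure V) = (μHE[3] : Measure SphLine) V := by
  have h0 := (Measure.euclideanHausdorffMeasure_zero_or_top (X := SphLine)
    (by norm_num : 2 < 3) (frontier V)).resolve_right hV
  rw [closure_eq_self_union_frontier]
  refine le_antisymm ((measure_union_le _ _).trans ?_) (measure_mono subset_union_left)
  rw [h0, add_zero]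

theorem exists_isOpen_cap (hh : 0 < h) (hb : 1 < b) (hbh : b ^ 2 = h ^ 2 + 1) :
    ∃ V : Set SphLine, IsOpen V ∧
      (μHE[3] : Measure SphLine) (closure V) = ENNReal.ofReal (capVolume h b) ∧
      (μHE[2] : Measure SphLine) (frontier (closure V)) ≤ ENNReal.ofReal (capBoundary h b) := by
  have h1 : (μHE[2] : Measure SphLine) (frontier (capRegion h b)) ≤
      ENNReal.ofReal (capBoundary h b) :=
    (measure_mono (frontier_capRegion_subset hh hb hbh)).trans
      (measure_range_capSurface_le hh hb hbh)
  refine ⟨capRegion h b, isOpen_capRegion, ?_, (measure_mono frontier_closure_subset).trans h1⟩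
  rw [measure_closure_of_frontier_ne_top (ne_top_of_le_ne_top ENNReal.ofReal_ne_top h1),
    measure_capRegion hh hb hbh]

end CapRegion

section CapMinimisation

/-- The deficit of `capEnergy`, normalised by the area of the base. -/
noncomputable def capDeficit (h : ℝ) : ℝ :=
  2 / √(h ^ 2 + 1) * (h ^ 2 * Real.log (√(h ^ 2 + 1) + 1) - h * (h * Real.log h))

theorem one_lt_sqrt_sq_add_one {h : ℝ} (hh : 0 < h) : 1 < √(h ^ 2 + 1) := by
  refine Real.lt_sqrt_of_sq_lt ?_
  have := pow_pos hh 2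
  linarith

theorem sqrt_sq_add_one_sq (h : ℝ) : √(h ^ 2 + 1) ^ 2 = h ^ 2 + 1 := Real.sq_sqrt (by positivity)

theorem continuous_capDeficit : Continuous capDeficit := by
  have h0 : ∀ h : ℝ, 0 < √(h ^ 2 + 1) := fun h => Real.sqrt_pos.2 (by positivity)
  unfold capDeficit
  refine (continuous_const.div (by fun_prop) fun h => (h0 h).ne').mul (Continuous.sub ?_ ?_)
  · exact (by fun_prop : Continuous fun h : ℝ => h ^ 2).mul
      (Continuous.log (by fun_prop) fun h => by have := h0 h; positivity)
  · exact continuous_id.mul Real.continuous_mul_log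

theorem mul_capTime_one {h : ℝ} (hh : 0 < h) :
    h * capTime h √(h ^ 2 + 1) 1 = capDeficit h := by
  have hb := one_lt_sqrt_sq_add_one hh
  have hbh := sqrt_sq_add_one_sq h
  unfold capTime capDeficit
  set b := √(h ^ 2 + 1)
  have h1 : b - 1 = h ^ 2 / (b + 1) := by
    have : b + 1 ≠ 0 := by linarith
    field_simp
    linear_combination hbh
  rw [h1, Real.log_div (by positivity) (by linarith), Real.log_pow]
  push_cast
  field_simp
  ring

theorem capEnergy_eq_sub_capDeficit (c : ℝ) {h : ℝ} (hh : 0 ≤ h) :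
    capEnergy c h = c * (2 - capDeficit h) := by
  rcases hh.eq_or_lt with rfl | hh
  · rw [capEnergy_zero]; simp [capDeficit]; ring
  rw [← mul_capTime_one hh]
  have hb := one_lt_sqrt_sq_add_one hh
  have hbh := sqrt_sq_add_one_sq h
  set b := √(h ^ 2 + 1)
  have hx : ∀ x ∈ uIcc (0 : ℝ) 1, |x| ≤ 1 := fun x hx => by
    rw [uIcc_of_le zero_le_one] at hx
    rw [abs_of_nonneg hx.1]
    exact hx.2
  have hd : ∀ x ∈ uIcc (0 : ℝ) 1,
      HasDerivAt (fun x => c * (x - h / 2 * capTime h b x)) (capArea c h x) x := by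
    intro x hx'
    have := ((hasDerivAt_id x).sub ((hasDerivAt_capTime (h := h) hb (hx x hx')).const_mul
      (h / 2))).const_mul c
    refine this.congr_deriv ?_
    have hD := capRatio_denom_pos hb (hx x hx')
    have hD' : h ^ 2 + (1 - x ^ 2) ≠ 0 := by rw [hbh] at hD; linarith
    unfold capRatio capArea
    rw [hbh] at hD ⊢
    have hD2 := hD.ne'
    field_simp
    ring
  have hcont : ContinuousOn (capArea c h) (uIcc 0 1) := by
    unfold capArea
    refine ContinuousOn.div (by fun_prop) (by fun_prop) fun x hx' => ?_
    have hD := capRatio_denom_pos hb (hx x hx')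
    rw [hbh] at hD
    linarith
  have h0 : capTime h b 0 = 0 := by simp [capTime]
  unfold capEnergy
  rw [intervalIntegral.integral_eq_sub_of_hasDerivAt hd hcont.intervalIntegrable, h0]
  ring

theorem capEnergy_nonneg {c : ℝ} (hc : 0 ≤ c) (h : ℝ) : 0 ≤ capEnergy c h := by
  refine mul_nonneg zero_le_two (intervalIntegral.integral_nonneg zero_le_one fun x hx => ?_)
  have : 0 ≤ 1 - x ^ 2 := sub_nonneg.2 (pow_le_one₀ hx.1 hx.2)
  unfold capArea
  positivity

theorem hasDerivAt_capDeficit {h : ℝ} (hh : 0 < h) :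
    HasDerivAt capDeficit ((4 * Real.pi)⁻¹ * capVolume h √(h ^ 2 + 1)) h := by
  have hb := one_lt_sqrt_sq_add_one hh
  have hbh := sqrt_sq_add_one_sq h
  have h1 : HasDerivAt (fun h : ℝ => √(h ^ 2 + 1)) (h / √(h ^ 2 + 1)) h := by
    refine (((hasDerivAt_pow 2 h).add_const 1).sqrt (by positivity)).congr_deriv ?_
    push_cast
    field_simp
  have h2 := (h1.add_const 1).log (by linarith)
  have h3 := ((hasDerivAt_id h).mul ((hasDerivAt_id h).mul (Real.hasDerivAt_log hh.ne')))
  have h4 := ((hasDerivAt_const h (2 : ℝ)).div h1 (by linarith)).mul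
    (((hasDerivAt_pow 2 h).mul h2).sub h3)
  refine h4.congr_deriv ?_
  have hT : capTime h √(h ^ 2 + 1) 1 = capDeficit h / h := by
    rw [← mul_capTime_one hh, mul_div_cancel_left₀ _ hh.ne']
  unfold capVolume
  rw [hT]
  unfold capDeficit
  simp only [id, Pi.mul_apply, Pi.sub_apply, Pi.div_apply]
  set b := √(h ^ 2 + 1)
  have hb1 : b + 1 ≠ 0 := by linarith
  have hb0 : b ≠ 0 := by linarith
  have hpi := Real.pi_ne_zero
  clear_value b
  generalize Real.log (b + 1) = l
  generalize Real.log h = m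
  push_cast
  field_simp
  linear_combination (-2 * b) * hbh

theorem capBoundary_eq {h : ℝ} (hh : 0 < h) : capBoundary h √(h ^ 2 + 1) =
    capEnergy (4 * Real.pi) h + h * capVolume h √(h ^ 2 + 1) := by
  have hb := one_lt_sqrt_sq_add_one hh
  have hbh := sqrt_sq_add_one_sq h
  rw [capEnergy_eq_sub_capDeficit _ hh.le, ← mul_capTime_one hh]
  unfold capBoundary capVolume
  set b := √(h ^ 2 + 1)
  have hb0 : b ≠ 0 := by linarith
  field_simp
  linear_combination (-2 - h * capTime h b 1) * hbh

/-- A minimiser of the cap energy either is degenerate or realises the volume constraint. -/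
theorem exists_capVolume_eq_or {v h₀ : ℝ} (hv : 0 < v) (h0 : 0 ≤ h₀) :
    8 * Real.pi ≤ capEnergy (4 * Real.pi) h₀ + h₀ * v ∨
      ∃ h, 0 < h ∧ capVolume h √(h ^ 2 + 1) = v ∧
        capBoundary h √(h ^ 2 + 1) ≤ capEnergy (4 * Real.pi) h₀ + h₀ * v := by
  set Φ : ℝ → ℝ := fun h => 4 * Real.pi * (2 - capDeficit h) + h * v with hΦ
  have hE : ∀ h, 0 ≤ h → capEnergy (4 * Real.pi) h + h * v = Φ h := fun h hh => by
    rw [capEnergy_eq_sub_capDeficit _ hh]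
  have hcont : Continuous Φ := by
    have := continuous_capDeficit
    fun_prop
  set M := max h₀ (Φ h₀ / v) + 1 with hM
  have hM0 : h₀ < M := lt_of_le_of_lt (le_max_left _ _) (lt_add_one _)
  have hMv : Φ h₀ < M * v := by
    rw [← div_lt_iff₀ hv]
    exact lt_of_le_of_lt (le_max_right _ _) (lt_add_one _)
  obtain ⟨h, hhmem, hmin⟩ := isCompact_Icc.exists_isMinOn (nonempty_Icc.2 (h0.trans hM0.le))
    hcont.continuousOn
  have hle : Φ h ≤ Φ h₀ := hmin ⟨h0, hM0.le⟩
  rw [hE h₀ h0]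
  rcases hhmem.1.eq_or_lt with h' | hpos
  · left
    refine le_trans (le_of_eq ?_) hle
    rw [← h']
    simp only [hΦ, capDeficit]
    simp
    ring
  right
  have hlt : h < M := by
    refine lt_of_le_of_ne hhmem.2 fun h' => ?_
    have := hE h hpos.le
    have := capEnergy_nonneg (c := 4 * Real.pi) (by positivity) h
    rw [← h'] at hMv
    linarith
  have hloc : IsLocalMin Φ h := hmin.isLocalMin (Icc_mem_nhds hpos hlt)
  have hder := hloc.hasDerivAt_eq_zero ((((hasDerivAt_capDeficit hpos).const_sub 2).const_mul
    (4 * Real.pi)).add ((hasDerivAt_id h).mul_const v))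
  have hpi := Real.pi_pos
  have hvol : capVolume h √(h ^ 2 + 1) = v := by
    field_simp at hder
    linarith
  refine ⟨h, hpos, hvol, ?_⟩
  rw [capBoundary_eq hpos, hvol, hE h hpos.le]
  exact hle

theorem measure_sphere_slice_le (a : ℝ) :
    (μHE[2] : Measure SphLine) {p | p.time = a} ≤ ENNReal.ofReal (4 * Real.pi) := by
  set f : Sph2 → SphLine := fun z => WithLp.toLp 2 (z, WithLp.toLp 2 fun _ => a) with hf
  have himg : {p : SphLine | p.time = a} = f '' univ := by
    ext p
    simp only [mem_ofPred_eq, image_univ, mem_range]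
    constructor
    · intro hp
      refine ⟨p.fst, dist_le_zero.1 (le_of_sq_le_sq ?_ le_rfl)⟩
      rw [SphLine.dist_sq, hp]
      simp [hf, SphLine.time]
    · rintro ⟨z, rfl⟩
      rfl
  have h1 := euclideanHausdorffMeasure_image_le_lintegral_ofReal (f := f) (ρ := fun _ => 1) 2
    MeasurableSet.univ measurable_const (fun _ _ => one_pos) fun z _ w _ => by
      rw [max_self, one_mul]
      refine le_of_sq_le_sq ?_ dist_nonneg
      rw [SphLine.dist_sq]
      simp [hf, SphLine.time]
  rw [himg]
  refine h1.trans ?_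
  simp only [one_pow, ENNReal.ofReal_one]
  rw [setLIntegral_univ]
  refine (lintegral_sph2_le (G := fun _ => 1) measurable_const).trans (le_of_eq ?_)
  rw [setLIntegral_one, Real.volume_Ioo, ← ENNReal.ofReal_mul (by positivity)]
  congr 1
  ring

theorem exists_isOpen_slab {v : ℝ} (hv : 0 < v) : ∃ V : Set SphLine, IsOpen V ∧
    (μHE[3] : Measure SphLine) (closure V) = ENNReal.ofReal v ∧
    (μHE[2] : Measure SphLine) (frontier (closure V)) ≤ ENNReal.ofReal (8 * Real.pi) := by
  have hpi := Real.pi_pos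
  set a := v / (4 * Real.pi) with ha
  set V : Set SphLine := SphLine.time ⁻¹' Ioo 0 a with hV
  have hfr : frontier V ⊆ {p | p.time = 0} ∪ {p | p.time = a} := by
    refine (SphLine.continuous_time.frontier_preimage_subset _).trans fun p hp => ?_
    rw [mem_preimage, frontier_Ioo (by positivity)] at hp
    exact hp
  have h1 : (μHE[2] : Measure SphLine) (frontier V) ≤ ENNReal.ofReal (8 * Real.pi) := by
    refine (measure_mono hfr).trans ((measure_union_le _ _).trans
      ((add_le_add (measure_sphere_slice_le 0) (measure_sphere_slice_le a)).trans (le_of_eq ?_)))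
    rw [← ENNReal.ofReal_add (by positivity) (by positivity)]
    congr 1
    ring
  refine ⟨V, isOpen_Ioo.preimage SphLine.continuous_time, ?_,
    (measure_mono frontier_closure_subset).trans h1⟩
  rw [measure_closure_of_frontier_ne_top (ne_top_of_le_ne_top ENNReal.ofReal_ne_top h1)]
  have hQ : MeasurableSet {q : ℝ × ℝ | q.2 ∈ Ioo 0 a} := measurable_snd measurableSet_Ioo
  refine (SphLine.measure_rotational hQ).trans ?_
  have hind : ∀ t x : ℝ, {q : ℝ × ℝ | q.2 ∈ Ioo 0 a}.indicator (1 : ℝ × ℝ → ℝ≥0∞) (x, t) =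
      (Ioo 0 a).indicator 1 t := fun t x => rfl
  simp_rw [hind, lintegral_const, Measure.restrict_apply MeasurableSet.univ, univ_inter,
    Real.volume_Ioo]
  rw [lintegral_mul_const' _ _ ENNReal.ofReal_ne_top, lintegral_indicator_one measurableSet_Ioo,
    Real.volume_Ioo, ← ENNReal.ofReal_mul (by rw [sub_zero]; positivity),
    ← ENNReal.ofReal_mul (by positivity), ha]
  congr 1
  field_simp
  ring

theorem exists_isOpen_le_capEnergy {v h₀ : ℝ} (hv : 0 < v) (h0 : 0 ≤ h₀) : ∃ V : Set SphLine, IsOpen V ∧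
    (μHE[3] : Measure SphLine) (closure V) = ENNReal.ofReal v ∧
    (μHE[2] : Measure SphLine) (frontier (closure V)) ≤
      ENNReal.ofReal (capEnergy (4 * Real.pi) h₀ + h₀ * v) := by
  rcases exists_capVolume_eq_or hv h0 with h | ⟨h, hh, hvol, hA⟩
  · obtain ⟨V, h1, h2, h3⟩ := exists_isOpen_slab hv
    exact ⟨V, h1, h2, h3.trans (ENNReal.ofReal_le_ofReal h)⟩
  · obtain ⟨V, h1, h2, h3⟩ := exists_isOpen_cap hh (one_lt_sqrt_sq_add_one hh)
      (sqrt_sq_add_one_sq h)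
    rw [hvol] at h2
    exact ⟨V, h1, h2, h3.trans (ENNReal.ofReal_le_ofReal hA)⟩

end CapMinimisation

section Profile

/-- The Euclidean normalisation rescales the Hausdorff measures of all spaces by the same
positive factor. -/
theorem exists_euclideanHausdorffMeasure_eq_mul_haus (d : ℕ) :
    ∃ C : ℝ≥0, C ≠ 0 ∧ ∀ (X : Type) [EMetricSpace X] [MeasurableSpace X] [BorelSpace X]
      (s : Set X), μHE[d] s = C * haus X d s := by
  refine ⟨_, Measure.addHaarScalarFactor_volume_hausdorffMeasure_ne_zero d, ?_⟩
  intro X _ m hb s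
  have hm := hb.measurable_eq
  rw [Measure.euclideanHausdorffMeasure_def, Measure.smul_apply, ENNReal.smul_def, smul_eq_mul]
  subst hm
  rfl

theorem isoProfile_sphLine_le_isoProfile_torusLine {L : ℝ} (hL : 0 < L)
    (hL4 : L ^ 2 = 4 * Real.pi) {v : ℝ} (hv : 0 < v) :
    isoProfile SphLine 3 (ENNReal.ofReal v) ≤ isoProfile (TorusLine L) 3 (ENNReal.ofReal v) := by
  obtain ⟨C, hC, hCmul⟩ := exists_euclideanHausdorffMeasure_eq_mul_haus 3
  obtain ⟨D, hD, hDmul⟩ := exists_euclideanHausdorffMeasure_eq_mul_haus 2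
  have hC' : (C : ℝ≥0∞) ≠ 0 := by exact_mod_cast hC
  have hD' : (D : ℝ≥0∞) ≠ 0 := by exact_mod_cast hD
  refine le_iInf₂ fun U ⟨⟨W, _, hUW⟩, hUv⟩ => ?_
  have hU : IsClosed U := hUW ▸ isClosed_closure
  by_cases hfin : μHE[2] (frontier U) = ∞
  · rw [hDmul, ENNReal.mul_eq_top] at hfin
    simp only [ENNReal.coe_ne_top, false_and, or_false] at hfin
    simp [hfin.2]
  have hvol : (C : ℝ≥0∞) * ENNReal.ofReal v = ENNReal.ofReal (C * v) := by
    rw [ENNReal.ofReal_mul C.coe_nonneg, ENNReal.ofReal_coe_nnreal]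
  have hCv : 0 < (C : ℝ) * v := mul_pos (NNReal.coe_pos.2 (pos_iff_ne_zero.2 hC)) hv
  obtain ⟨A⟩ := nonempty_periodicApprox hL hU hfin
  rw [hCmul, hUv, hvol] at A
  obtain ⟨h, h0, hle⟩ := A.exists_capEnergy_le hL hL4.le hCv
  obtain ⟨V, hV, hVvol, hVarea⟩ := exists_isOpen_le_capEnergy hCv h0
  rw [hL4] at hle
  refine iInf₂_le_of_le (closure V) ⟨⟨V, hV, rfl⟩, ?_⟩ ?_
  · rw [hCmul, ← hvol] at hVvol
    exact (ENNReal.mul_right_inj hC' ENNReal.coe_ne_top).1 hVvol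
  · have := hVarea.trans hle
    rw [hDmul, hDmul] at this
    exact (ENNReal.mul_le_mul_iff_right hD' ENNReal.coe_ne_top).1 this

end Profile

end Comparison

/-- Let `T² = S¹_{1/√π} × S¹_{1/√π}` be the flat square torus of area `4π`, and `S²` the
unit round sphere.  Then for every `v > 0`, `I_{S²×ℝ}(v) ≤ I_{T²×ℝ}(v)`. -/
theorem sphere_profile_le_torus_profile_R1 (v : ℝ) (hv : 0 < v) :
    isoProfile (WithLp 2 (Sph2 × EucSp 1)) 3 (ENNReal.ofReal v)
      ≤ isoProfile (T2R (Real.sqrt Real.pi)⁻¹ (Real.sqrt Real.pi)⁻¹ 1) 3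
          (ENNReal.ofReal v) := by
  have hpi := Real.pi_pos
  refine isoProfile_sphLine_le_isoProfile_torusLine (L := 2 * Real.pi * (√Real.pi)⁻¹)
    (by positivity) ?_ hv
  rw [mul_pow, inv_pow, Real.sq_sqrt hpi.le]
  field_simp
  norm_num

end
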